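/- For every ε > 0 there exists an integer A such that for every odd integer a ≥ A, the rank over ℚ of the family of vectors (1,0), (0,1), (ζ(3), 6ζ(5)), (ζ(5), 15ζ(7)), …, (ζ(a), (a(a+1)/2)·ζ(a+2)) — that is, the vectors (1,0), (0,1) together with the vectors (ζ(i), (i(i+1)/2)·ζ(i+2)) for all odd integers i with 3 ≤ i ≤ a — in ℝ² viewed as a vector space over ℚ, is at least (2−ε)·(log a)/(1+log 2). -/

import Mathlib

/-- The Riemann zeta value ζ(s) = Σ_{m ≥ 1} m^{-s}, as a real number. -/
noncomputable def zeta (s : ℕ) : ℝ := ∑' m : ℕ, 1 / ((m : ℝ) + 1) ^ s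

/-
For even `n`, consider rational functions `R x = P x / (x (x + 1) ⋯ (x + n)) ^ a` with `P`
symmetric about `-n / 2`. Partial fractions turn `∑ R t` and `∑ R'' t / 2` over `t ≥ 1` into linear
forms in `1, ζ(i)` and in `1, i (i + 1) / 2 * ζ(i + 2)` with the same coefficients of the zeta
values; the symmetry and a degree bound leave only odd `i ≥ 3`, and multiplying by
`lcm(1, …, n) ^ (a + 2)`, at most `exp ((a + 2) n + o(n))` by the prime number theorem, makes all
coefficients integers.

Choose `P` to vanish to order `3` at the integers from `1` to `2 r n + 1` except at the midpoint
`r n + 1`. The midpoint term then dominates both sums, which gives their exact exponential decay.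
If `P` is modified to have a double zero at the midpoint as well, the first sum becomes negligible
and the second does not, so no nonzero linear functional on `ℝ²` can be small at both of the vectors
formed by the two sums. A Siegel-type criterion bounds the rank below by `2 + 2 α / H` when the
integer coefficients grow like `exp (H n)` and the forms decay like `exp (-α n)`. For `r` smaller
than `a` but of nearly the same logarithm, `H` is about `a (1 + log 2)` and `α` about `a log a`.
-/

section FejerKernel

open MeasureTheory Filter Topology Set

/-- The Fejér kernel `w ↦ (sin (w / 2) / (w / 2)) ^ 2` on the line, encoded as the Fourier transform
of the triangle function `1 - |y|` on `[-1, 1]`. -/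
noncomputable def fejerKernel (w : ℝ) : ℝ := ∫ y in (-1 : ℝ)..1, (1 - |y|) * Real.cos (w * y)

lemma continuous_fejerKernel : Continuous fejerKernel := by
  unfold fejerKernel
  exact intervalIntegral.continuous_parametric_intervalIntegral_of_continuous' (by fun_prop) _ _

lemma ofReal_fejerKernel (w : ℝ) :
    (fejerKernel w : ℂ) =
      ∫ y in (-1 : ℝ)..1, ((1 - |y| : ℝ) : ℂ) * Complex.exp (Complex.I * w * y) := by
  have split (y : ℝ) : ((1 - |y| : ℝ) : ℂ) * Complex.exp (Complex.I * w * y) =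
      (((1 - |y|) * Real.cos (w * y) : ℝ) : ℂ) +
        Complex.I * (((1 - |y|) * Real.sin (w * y) : ℝ) : ℂ) := by
    rw [show Complex.I * w * y = ((w * y : ℝ) : ℂ) * Complex.I by push_cast; ring,
      Complex.exp_mul_I]
    push_cast
    ring
  have odd_part : ∫ y in (-1 : ℝ)..1, (1 - |y|) * Real.sin (w * y) = 0 := by
    have h := intervalIntegral.integral_comp_neg (a := -1) (b := 1)
      (fun y ↦ (1 - |y|) * Real.sin (w * y))
    simp only [abs_neg, mul_neg, Real.sin_neg, neg_neg, intervalIntegral.integral_neg] at h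
    linarith
  simp_rw [split]
  rw [intervalIntegral.integral_add (Continuous.intervalIntegrable (by fun_prop) _ _)
      (Continuous.intervalIntegrable (by fun_prop) _ _), intervalIntegral.integral_const_mul,
    intervalIntegral.integral_ofReal, intervalIntegral.integral_ofReal, odd_part, fejerKernel]
  simp

lemma fejerKernel_eq_two_mul_integral (w : ℝ) :
    fejerKernel w = 2 * ∫ y in (0 : ℝ)..1, (1 - y) * Real.cos (w * y) := by
  have hint (a b : ℝ) :
      IntervalIntegrable (fun y ↦ (1 - |y|) * Real.cos (w * y)) volume a b :=
    Continuous.intervalIntegrable (by fun_prop) _ _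
  have left : ∫ y in (-1 : ℝ)..0, (1 - |y|) * Real.cos (w * y) =
      ∫ y in (0 : ℝ)..1, (1 - |y|) * Real.cos (w * y) := by
    simpa using (intervalIntegral.integral_comp_neg (a := 0) (b := 1)
      (fun y ↦ (1 - |y|) * Real.cos (w * y))).symm
  have right : ∫ y in (0 : ℝ)..1, (1 - |y|) * Real.cos (w * y) =
      ∫ y in (0 : ℝ)..1, (1 - y) * Real.cos (w * y) := by
    refine intervalIntegral.integral_congr fun y hy ↦ ?_
    rw [uIcc_of_le zero_le_one] at hy
    simp only [abs_of_nonneg hy.1]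
  rw [fejerKernel, ← intervalIntegral.integral_add_adjacent_intervals (hint (-1) 0) (hint 0 1),
    left, right, two_mul]

lemma fejerKernel_zero : fejerKernel 0 = 1 := by
  simp only [fejerKernel_eq_two_mul_integral, zero_mul, Real.cos_zero, mul_one]
  rw [intervalIntegral.integral_sub (by simp) (by simp), integral_id]
  norm_num

lemma fejerKernel_of_ne_zero {w : ℝ} (hw : w ≠ 0) :
    fejerKernel w = 2 * (1 - Real.cos w) / w ^ 2 := by
  have primitive (y : ℝ) : HasDerivAt
      (fun y ↦ (1 - y) * Real.sin (w * y) / w - Real.cos (w * y) / w ^ 2)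
      ((1 - y) * Real.cos (w * y)) y := by
    have hm : HasDerivAt (fun y ↦ w * y) w y := by simpa using (hasDerivAt_id y).const_mul w
    have h := ((((hasDerivAt_id y).const_sub 1).mul hm.sin).div_const w).sub
      (hm.cos.div_const (w ^ 2))
    refine h.congr_deriv ?_
    simp only [id]
    field_simp
    ring
  rw [fejerKernel_eq_two_mul_integral, intervalIntegral.integral_eq_sub_of_hasDerivAt
    (fun y _ ↦ primitive y) (Continuous.intervalIntegrable (by fun_prop) _ _)]
  simp
  ring

lemma fejerKernel_nonneg (w : ℝ) : 0 ≤ fejerKernel w := by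
  rcases eq_or_ne w 0 with rfl | hw
  · rw [fejerKernel_zero]
    exact zero_le_one
  · rw [fejerKernel_of_ne_zero hw]
    have := Real.cos_le_one w
    apply div_nonneg <;> nlinarith

lemma fejerKernel_le (w : ℝ) : fejerKernel w ≤ 5 * (1 + w ^ 2)⁻¹ := by
  rcases eq_or_ne w 0 with rfl | hw
  · rw [fejerKernel_zero]
    norm_num
  · have h₁ := Real.one_sub_sq_div_two_le_cos (x := w)
    have h₂ := Real.neg_one_le_cos w
    have hw₂ : 0 < w ^ 2 := by positivity
    rw [fejerKernel_of_ne_zero hw, ← div_eq_mul_inv, div_le_div_iff₀ hw₂ (by positivity)]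
    nlinarith

lemma integrable_fejerKernel : Integrable fejerKernel := by
  refine (integrable_inv_one_add_sq.const_mul 5).mono'
    continuous_fejerKernel.aestronglyMeasurable (.of_forall fun w ↦ ?_)
  rw [Real.norm_of_nonneg (fejerKernel_nonneg w)]
  exact fejerKernel_le w

lemma integral_fejerKernel_pos : 0 < ∫ w, fejerKernel w := by
  rw [integral_pos_iff_support_of_nonneg fejerKernel_nonneg integrable_fejerKernel]
  exact continuous_fejerKernel.isOpen_support.measure_pos volume ⟨0, by simp [fejerKernel_zero]⟩

lemma integrable_fejerKernel_mul_sub {B : ℝ} (hB : 0 < B) (x : ℝ) :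
    Integrable fun u ↦ fejerKernel (B * (x - u)) :=
  (integrable_fejerKernel.comp_mul_left' hB.ne').comp_sub_left x

lemma integral_fejerKernel_mul_sub {B : ℝ} (hB : 0 < B) (x : ℝ) :
    ∫ u, fejerKernel (B * (x - u)) = (∫ w, fejerKernel w) / B := by
  rw [integral_sub_left_eq_self (fun v ↦ fejerKernel (B * v)) volume x,
    Measure.integral_comp_mul_left, abs_of_pos (by positivity), smul_eq_mul, inv_mul_eq_div]

lemma intervalIntegral_fejerKernel_mul_sub {B : ℝ} (hB : 0 < B) (x δ : ℝ) :
    ∫ u in (x - δ)..(x + δ), fejerKernel (B * (x - u)) =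
      (∫ w in (-(B * δ))..(B * δ), fejerKernel w) / B := by
  simp_rw [mul_sub]
  rw [intervalIntegral.integral_comp_sub_mul _ hB.ne', smul_eq_mul, inv_mul_eq_div]
  congr 2 <;> ring

end FejerKernel

section Tauberian

open MeasureTheory Filter Topology Set

variable {f : ℝ → ℝ} {F : ℂ → ℂ} {M : ℝ}

lemma integral_mul_exp_mul_fejerKernel_eq (hf : Measurable f) (hM : ∀ u, |f u| ≤ M)
    (hF : ∀ s : ℂ, 0 < s.re → ∫ u in Ioi (0 : ℝ), (f u : ℂ) * Complex.exp (-s * u) = F s)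
    (B x : ℝ) {σ : ℝ} (hσ : 0 < σ) :
    ((∫ u in Ioi (0 : ℝ), f u * Real.exp (-σ * u) * fejerKernel (B * (x - u)) : ℝ) : ℂ) =
      ∫ y in (-1 : ℝ)..1, ((1 - |y| : ℝ) : ℂ) * Complex.exp (Complex.I * (B * x) * y) *
        F (σ + Complex.I * (B * y)) := by
  have unfold_kernel (u : ℝ) :
      ((f u * Real.exp (-σ * u) * fejerKernel (B * (x - u)) : ℝ) : ℂ) =
        ∫ y in Ioc (-1 : ℝ) 1, ((f u * Real.exp (-σ * u) : ℝ) : ℂ) *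
          (((1 - |y| : ℝ) : ℂ) * Complex.exp (Complex.I * (B * (x - u) : ℝ) * y)) := by
    rw [integral_const_mul, Complex.ofReal_mul, ofReal_fejerKernel,
      intervalIntegral.integral_of_le (by norm_num)]
  have majorant : Integrable (fun z : ℝ × ℝ ↦ (M * Real.exp (-σ * z.1)) * (1 : ℝ))
      ((volume.restrict (Ioi 0)).prod (volume.restrict (Ioc (-1) 1))) :=
    ((integrableOn_exp_mul_Ioi (by linarith) 0).const_mul M).mul_prod (g := fun _ ↦ (1 : ℝ))
      (integrable_const _)
  rw [← integral_complex_ofReal, intervalIntegral.integral_of_le (by norm_num)]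
  simp_rw [unfold_kernel]
  rw [integral_integral_swap]
  · refine setIntegral_congr_fun measurableSet_Ioc fun y _ ↦ ?_
    rw [← hF _ (by simp [hσ]), ← integral_const_mul]
    congr 1
    ext u
    push_cast
    rw [show Complex.I * (↑B * (↑x - ↑u)) * ↑y =
        Complex.I * (B * x) * y + (-Complex.I * (B * u) * y) by ring,
      show -((σ : ℂ) + Complex.I * (B * y)) * u = -σ * u + (-Complex.I * (B * u) * y) by ring,
      Complex.exp_add, Complex.exp_add]
    ring
  · refine majorant.mono' (Measurable.aestronglyMeasurable ?_) ?_
    · unfold Function.uncurry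
      fun_prop
    rw [Measure.prod_restrict]
    refine (ae_restrict_mem (measurableSet_Ioi.prod measurableSet_Ioc)).mono ?_
    rintro ⟨u, y⟩ ⟨-, hy⟩
    have triangle_le : ‖1 - |y|‖ ≤ 1 := by
      have : |y| ≤ 1 := abs_le.mpr ⟨hy.1.le, hy.2⟩
      rw [Real.norm_eq_abs, abs_le]
      constructor <;> linarith [abs_nonneg y]
    have hM₀ : 0 ≤ M := (abs_nonneg _).trans (hM u)
    simp only [Function.uncurry]
    rw [norm_mul, norm_mul, Complex.norm_real, Complex.norm_real, norm_mul, Real.norm_eq_abs,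
      Real.norm_eq_abs, abs_of_pos (Real.exp_pos _),
      show Complex.I * (B * (x - u) : ℝ) * y = ((B * (x - u) * y : ℝ) : ℂ) * Complex.I by
        push_cast; ring,
      Complex.norm_exp_ofReal_mul_I, mul_one]
    gcongr
    exact hM u

lemma integrable_mul_fejerKernel (hf : Measurable f) (hM : ∀ u, |f u| ≤ M) {B : ℝ} (hB : 0 < B)
    (x : ℝ) : Integrable fun u ↦ f u * fejerKernel (B * (x - u)) :=
  (integrable_fejerKernel_mul_sub hB x).bdd_mul (c := M) hf.aestronglyMeasurable
    (.of_forall hM)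

lemma tendsto_integral_mul_exp_mul_fejerKernel (hf : Measurable f) (hM : ∀ u, |f u| ≤ M)
    {B : ℝ} (hB : 0 < B) (x : ℝ) :
    Tendsto (fun σ ↦ ∫ u in Ioi (0 : ℝ), f u * Real.exp (-σ * u) * fejerKernel (B * (x - u)))
      (𝓝[>] 0) (𝓝 (∫ u in Ioi (0 : ℝ), f u * fejerKernel (B * (x - u)))) := by
  refine tendsto_integral_filter_of_dominated_convergence
    (fun u ↦ ‖f u * fejerKernel (B * (x - u))‖) (.of_forall fun σ ↦ ?_) ?_
    (integrable_mul_fejerKernel hf hM hB x).norm.integrableOn (.of_forall fun u ↦ ?_)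
  · have := continuous_fejerKernel.measurable
    exact Measurable.aestronglyMeasurable (by fun_prop)
  · filter_upwards [self_mem_nhdsWithin] with σ hσ
    filter_upwards [ae_restrict_mem measurableSet_Ioi] with u hu
    have damp : ‖Real.exp (-σ * u)‖ ≤ 1 := by
      rw [Real.norm_of_nonneg (Real.exp_pos _).le, Real.exp_le_one_iff, neg_mul,
        Left.neg_nonpos_iff]
      exact (mul_pos hσ hu).le
    rw [mul_right_comm, norm_mul]
    exact mul_le_of_le_one_right (norm_nonneg _) damp
  · have : Continuous fun σ : ℝ ↦ f u * Real.exp (-σ * u) * fejerKernel (B * (x - u)) := by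
      fun_prop
    simpa using (this.tendsto 0).mono_left nhdsWithin_le_nhds

lemma integral_mul_fejerKernel_eq (hf : Measurable f) (hM : ∀ u, |f u| ≤ M)
    (hFc : ContinuousOn F {s | 0 ≤ s.re})
    (hF : ∀ s : ℂ, 0 < s.re → ∫ u in Ioi (0 : ℝ), (f u : ℂ) * Complex.exp (-s * u) = F s)
    {B : ℝ} (hB : 0 < B) (x : ℝ) :
    ((∫ u in Ioi (0 : ℝ), f u * fejerKernel (B * (x - u)) : ℝ) : ℂ) =
      ∫ y in (-1 : ℝ)..1, ((1 - |y| : ℝ) : ℂ) * Complex.exp (Complex.I * (B * x) * y) *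
        F (Complex.I * (B * y)) := by
  -- Replacing `σ` by `|σ|` makes the integrand jointly continuous on all of `ℝ × ℝ`.
  have jointly : Continuous fun p : ℝ × ℝ ↦ F ((|p.1| : ℝ) + Complex.I * (B * p.2)) :=
    hFc.comp_continuous (by fun_prop) fun p ↦ by simp
  have boundary := ((intervalIntegral.continuous_parametric_intervalIntegral_of_continuous'
    (μ := volume) (f := fun σ y : ℝ ↦ ((1 - |y| : ℝ) : ℂ) *
      Complex.exp (Complex.I * (B * x) * y) * F ((|σ| : ℝ) + Complex.I * (B * y)))
    (Continuous.mul (by fun_prop) jointly) (-1) 1).tendsto 0).mono_left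
      (nhdsWithin_le_nhds (s := Ioi 0))
  simp only [abs_zero, Complex.ofReal_zero, zero_add] at boundary
  refine tendsto_nhds_unique ((Complex.continuous_ofReal.tendsto _).comp
    (tendsto_integral_mul_exp_mul_fejerKernel hf hM hB x)) (boundary.congr' ?_)
  filter_upwards [self_mem_nhdsWithin] with σ hσ
  simp only [Function.comp_apply, abs_of_pos (mem_Ioi.mp hσ)]
  exact (integral_mul_exp_mul_fejerKernel_eq hf hM hF B x hσ).symm

lemma tendsto_integral_mul_fejerKernel (hf : Measurable f) (hM : ∀ u, |f u| ≤ M)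
    (hFc : ContinuousOn F {s | 0 ≤ s.re})
    (hF : ∀ s : ℂ, 0 < s.re → ∫ u in Ioi (0 : ℝ), (f u : ℂ) * Complex.exp (-s * u) = F s)
    {B : ℝ} (hB : 0 < B) :
    Tendsto (fun x ↦ ∫ u in Ioi (0 : ℝ), f u * fejerKernel (B * (x - u))) atTop (𝓝 0) := by
  have riemannLebesgue := Real.tendsto_integral_exp_smul_cocompact
    ((Ioc (-1 : ℝ) 1).indicator fun y ↦ ((1 - |y| : ℝ) : ℂ) * F (Complex.I * (B * y)))
  have frequency : Tendsto (fun x : ℝ ↦ -(B * x) / (2 * Real.pi)) atTop (cocompact ℝ) :=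
    ((tendsto_neg_atTop_atBot.comp (tendsto_id.const_mul_atTop hB)).atBot_div_const
      (by positivity)).mono_right atBot_le_cocompact
  have complexLimit : Tendsto
      (fun x ↦ ((∫ u in Ioi (0 : ℝ), f u * fejerKernel (B * (x - u)) : ℝ) : ℂ)) atTop (𝓝 0) := by
    refine (riemannLebesgue.comp frequency).congr fun x ↦ ?_
    rw [integral_mul_fejerKernel_eq hf hM hFc hF hB x,
      intervalIntegral.integral_of_le (by norm_num), ← integral_indicator measurableSet_Ioc]
    simp only [Function.comp]
    congr 1
    ext y
    by_cases hy : y ∈ Ioc (-1 : ℝ) 1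
    · have phase : 2 * Real.pi * -(y * (-(B * x) / (2 * Real.pi))) = B * x * y := by field_simp
      simp only [indicator_of_mem hy]
      rw [Circle.smul_def, Real.fourierChar_apply, smul_eq_mul, phase]
      push_cast
      rw [show (B : ℂ) * x * y * Complex.I = Complex.I * (B * x) * y by ring]
      ring
    · simp [indicator_of_notMem hy]
  simpa [Function.comp_def] using (Complex.continuous_re.tendsto 0).comp complexLimit

variable {g : ℝ → ℝ}

lemma mul_integral_fejerKernel_le (hg : Measurable g) (hg₀ : ∀ u, 0 ≤ g u) (hM : ∀ u, g u ≤ M)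
    (hmono : ∀ u v, u ≤ v → g u * Real.exp (-(v - u)) ≤ g v) {B δ x : ℝ} (hB : 0 < B)
    (hδ : 0 < δ) (hx : δ < x) :
    g (x - δ) * Real.exp (-(2 * δ)) * ((∫ w in (-(B * δ))..(B * δ), fejerKernel w) / B) ≤
      ∫ u in Ioi (0 : ℝ), g u * fejerKernel (B * (x - u)) := by
  have hgK := integrable_mul_fejerKernel hg
    (fun u ↦ (abs_of_nonneg (hg₀ u)).trans_le (hM u)) hB x
  have hsub : Ioc (x - δ) (x + δ) ⊆ Ioi 0 := fun u hu ↦ by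
    rw [mem_Ioi]
    linarith [hu.1]
  rw [← intervalIntegral_fejerKernel_mul_sub hB, ← intervalIntegral.integral_const_mul,
    intervalIntegral.integral_of_le (by linarith)]
  calc ∫ u in Ioc (x - δ) (x + δ), g (x - δ) * Real.exp (-(2 * δ)) * fejerKernel (B * (x - u))
      ≤ ∫ u in Ioc (x - δ) (x + δ), g u * fejerKernel (B * (x - u)) := by
        refine setIntegral_mono_on ((integrable_fejerKernel_mul_sub hB x).const_mul _).integrableOn
          hgK.integrableOn measurableSet_Ioc fun u hu ↦
            mul_le_mul_of_nonneg_right ?_ (fejerKernel_nonneg _)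
        refine le_trans ?_ (hmono (x - δ) u hu.1.le)
        have := hg₀ (x - δ)
        gcongr
        linarith [hu.2]
    _ ≤ ∫ u in Ioi (0 : ℝ), g u * fejerKernel (B * (x - u)) :=
        setIntegral_mono_set hgK.integrableOn
          (.of_forall fun u ↦ mul_nonneg (hg₀ _) (fejerKernel_nonneg _)) hsub.eventuallyLE

lemma exists_mul_integral_fejerKernel_lt {c : ℝ} (hc : 1 < c) :
    ∃ δ > 0, ∃ B > 0, Real.exp (2 * δ) * (∫ w, fejerKernel w) <
      c * ∫ w in (-(B * δ))..(B * δ), fejerKernel w := by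
  have hlog := Real.log_pos hc
  obtain ⟨δ, hδ, hδc⟩ : ∃ δ > 0, Real.exp (2 * δ) < c :=
    ⟨Real.log c / 3, by positivity, by
      rw [← Real.lt_log_iff_exp_lt (by linarith)]; linarith⟩
  have hlt : Real.exp (2 * δ) * (∫ w, fejerKernel w) / c < ∫ w, fejerKernel w := by
    rw [div_lt_iff₀ (by linarith), mul_comm]
    exact mul_lt_mul_of_pos_left hδc integral_fejerKernel_pos
  have hlim := intervalIntegral_tendsto_integral integrable_fejerKernel tendsto_neg_atTop_atBot
    tendsto_id
  obtain ⟨R, hR₀, hR⟩ :=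
    ((eventually_gt_atTop (0 : ℝ)).and (hlim.eventually (lt_mem_nhds hlt))).exists
  refine ⟨δ, hδ, R / δ, by positivity, ?_⟩
  rwa [div_mul_cancel₀ R hδ.ne', ← div_lt_iff₀' (by linarith)]

/- Upper half of the Wiener–Ikehara theorem: averaging `g - 1` against a narrow Fejér kernel gives
`o(1)`, and slow decrease lets a value of `g` survive the averaging. -/
theorem eventually_le_of_continuousOn_laplace (hg : Measurable g) (hg₀ : ∀ u, 0 ≤ g u)
    (hM : ∀ u, g u ≤ M) (hmono : ∀ u v, u ≤ v → g u * Real.exp (-(v - u)) ≤ g v)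
    (hFc : ContinuousOn F {s | 0 ≤ s.re})
    (hF : ∀ s : ℂ, 0 < s.re →
      ∫ u in Ioi (0 : ℝ), ((g u - 1 : ℝ) : ℂ) * Complex.exp (-s * u) = F s)
    {c : ℝ} (hc : 1 < c) : ∀ᶠ x in atTop, g x ≤ c := by
  obtain ⟨δ, hδ, B, hB, hlt⟩ := exists_mul_integral_fejerKernel_lt hc
  set I := ∫ w, fejerKernel w
  set J := ∫ w in (-(B * δ))..(B * δ), fejerKernel w
  have hI : 0 < I := integral_fejerKernel_pos
  have hJ : 0 < J := pos_of_mul_pos_right ((by positivity : 0 < Real.exp (2 * δ) * I).trans hlt)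
    (by linarith)
  have bound : ∀ u, |g u - 1| ≤ M + 1 := fun u ↦
    abs_le.mpr ⟨by linarith [hg₀ u, hM u], by linarith [hM u]⟩
  have small := (tendsto_integral_mul_fejerKernel (hg.sub_const 1) bound hFc hF hB).eventually
    (gt_mem_nhds (show 0 < (c * J * Real.exp (-(2 * δ)) - I) / B by
      rw [Real.exp_neg, ← div_eq_mul_inv]
      exact div_pos (sub_pos.mpr ((lt_div_iff₀' (Real.exp_pos _)).mpr hlt)) hB))
  have shifted : ∀ᶠ x in atTop, g (x - δ) ≤ c := by
    filter_upwards [small, eventually_gt_atTop δ] with x hx hxδ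
    have split : ∫ u in Ioi (0 : ℝ), g u * fejerKernel (B * (x - u)) =
        (∫ u in Ioi (0 : ℝ), (g u - 1) * fejerKernel (B * (x - u))) +
          ∫ u in Ioi (0 : ℝ), fejerKernel (B * (x - u)) := by
      rw [← integral_add (integrable_mul_fejerKernel (hg.sub_const 1) bound hB x).integrableOn
        (integrable_fejerKernel_mul_sub hB x).integrableOn]
      congr 1
      ext u
      ring
    have total : ∫ u in Ioi (0 : ℝ), fejerKernel (B * (x - u)) ≤ I / B :=
      (setIntegral_le_integral (integrable_fejerKernel_mul_sub hB x)
        (.of_forall fun u ↦ fejerKernel_nonneg _)).trans_eq (integral_fejerKernel_mul_sub hB x)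
    have hle : g (x - δ) * (Real.exp (-(2 * δ)) * (J / B)) ≤ c * (Real.exp (-(2 * δ)) * (J / B)) :=
      calc g (x - δ) * (Real.exp (-(2 * δ)) * (J / B))
          ≤ (c * J * Real.exp (-(2 * δ)) - I) / B + I / B := by
            linarith [mul_integral_fejerKernel_le hg hg₀ hM hmono hB hδ hxδ]
        _ = c * (Real.exp (-(2 * δ)) * (J / B)) := by ring
    exact le_of_mul_le_mul_right hle (by positivity)
  simpa using (tendsto_atTop_add_const_right atTop δ tendsto_id).eventually shifted

end Tauberian

section PrimeNumberTheorem

open MeasureTheory Filter Topology Set ArithmeticFunction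

lemma exists_continuousOn_LSeries_vonMangoldt_eq :
    ∃ E : ℂ → ℂ, ContinuousOn E {s | 1 ≤ s.re} ∧
      ∀ s : ℂ, 1 < s.re → LSeries (fun n ↦ (vonMangoldt n : ℂ)) s = E s + 1 / (s - 1) := by
  refine ⟨vonMangoldt.LFunctionResidueClassAux (q := 1) 1,
    vonMangoldt.continuousOn_LFunctionResidueClassAux 1, fun s hs ↦ ?_⟩
  have trivial_class : vonMangoldt.residueClass (q := 1) 1 = fun n ↦ vonMangoldt n := by
    funext n
    simp [vonMangoldt.residueClass, Subsingleton.elim (_ : ZMod 1) 1]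
  rw [vonMangoldt.eqOn_LFunctionResidueClassAux (q := 1) (a := 1) isUnit_one hs]
  simp [trivial_class]

lemma LSeries_vonMangoldt_eq_mul_integral_psi {s : ℂ} (hs : 1 < s.re) :
    LSeries (fun n ↦ (vonMangoldt n : ℂ)) s =
      s * ∫ t in Ioi (1 : ℝ), (Chebyshev.psi t : ℂ) * (t : ℂ) ^ (-(s + 1)) := by
  have growth : (fun n : ℕ ↦ ∑ k ∈ Finset.Icc 1 n, vonMangoldt k) =O[atTop]
      fun n ↦ (n : ℝ) ^ (1 : ℝ) := by
    refine Asymptotics.IsBigO.of_bound (Real.log 4 + 4) (.of_forall fun n ↦ ?_)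
    have sum_eq : ∑ k ∈ Finset.Icc 1 n, vonMangoldt k = Chebyshev.psi n := by
      rw [Chebyshev.psi, Nat.floor_natCast]
      rfl
    rw [sum_eq, Real.norm_of_nonneg (Chebyshev.psi_nonneg _), Real.rpow_one,
      Real.norm_of_nonneg n.cast_nonneg]
    exact Chebyshev.psi_le_const_mul_self n.cast_nonneg
  rw [LSeries_eq_mul_integral_of_nonneg (fun n ↦ vonMangoldt n) zero_le_one hs growth
    fun n ↦ vonMangoldt_nonneg]
  congr 2
  ext t
  rw [Chebyshev.psi]
  push_cast
  rfl

/-- `ψ(eᵘ) / eᵘ`, the normalised Chebyshev function on the logarithmic scale on which the Mellin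
transform of `ψ` becomes a Laplace transform. -/
noncomputable def psiExp (u : ℝ) : ℝ := Chebyshev.psi (Real.exp u) * Real.exp (-u)

lemma psiExp_nonneg (u : ℝ) : 0 ≤ psiExp u :=
  mul_nonneg (Chebyshev.psi_nonneg _) (Real.exp_pos _).le

lemma psiExp_le (u : ℝ) : psiExp u ≤ Real.log 4 + 4 := by
  rw [psiExp, Real.exp_neg, ← div_eq_mul_inv, div_le_iff₀ (Real.exp_pos u)]
  exact Chebyshev.psi_le_const_mul_self (Real.exp_pos u).le

lemma measurable_psiExp : Measurable psiExp :=
  (Chebyshev.psi_mono.measurable.comp Real.measurable_exp).mul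
    (Real.measurable_exp.comp measurable_neg)

lemma psiExp_mul_exp_le {u v : ℝ} (h : u ≤ v) : psiExp u * Real.exp (-(v - u)) ≤ psiExp v := by
  have := Chebyshev.psi_mono (Real.exp_le_exp.mpr h)
  rw [psiExp, psiExp, mul_assoc, ← Real.exp_add, show -u + -(v - u) = -v by ring]
  gcongr

lemma integral_psi_mul_cpow_eq_laplace (s : ℂ) :
    ∫ t in Ioi (1 : ℝ), (Chebyshev.psi t : ℂ) * (t : ℂ) ^ (-(s + 1 + 1)) =
      ∫ u in Ioi (0 : ℝ), (psiExp u : ℂ) * Complex.exp (-s * u) := by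
  have image_exp : Real.exp '' Ioi 0 = Ioi 1 := by
    ext x
    simp only [mem_image, mem_Ioi]
    constructor
    · rintro ⟨u, hu, rfl⟩
      exact Real.one_lt_exp_iff.mpr hu
    · intro hx
      exact ⟨Real.log x, Real.log_pos hx, Real.exp_log (by linarith)⟩
  rw [← image_exp, integral_image_eq_integral_abs_deriv_smul measurableSet_Ioi
    (fun x _ ↦ (Real.hasDerivAt_exp x).hasDerivWithinAt) Real.exp_injective.injOn]
  refine setIntegral_congr_fun measurableSet_Ioi fun u _ ↦ ?_
  simp only [psiExp]
  rw [abs_of_pos (Real.exp_pos u), Complex.real_smul,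
    Complex.cpow_def_of_ne_zero (by exact_mod_cast (Real.exp_pos u).ne'),
    ← Complex.ofReal_log (Real.exp_pos u).le, Real.log_exp]
  push_cast
  rw [mul_left_comm, ← Complex.exp_add, mul_assoc, ← Complex.exp_add]
  congr 2
  ring

lemma integral_psiExp_sub_one_mul_exp {s : ℂ} (hs : 0 < s.re) :
    ∫ u in Ioi (0 : ℝ), ((psiExp u - 1 : ℝ) : ℂ) * Complex.exp (-s * u) =
      (∫ u in Ioi (0 : ℝ), (psiExp u : ℂ) * Complex.exp (-s * u)) - 1 / s := by
  have hexp : IntegrableOn (fun u : ℝ ↦ Complex.exp (-s * u)) (Ioi 0) :=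
    integrableOn_exp_mul_complex_Ioi (by simpa using hs) 0
  have hpsi : IntegrableOn (fun u : ℝ ↦ (psiExp u : ℂ) * Complex.exp (-s * u)) (Ioi 0) :=
    hexp.bdd_mul (c := Real.log 4 + 4)
      (Complex.measurable_ofReal.comp measurable_psiExp).aestronglyMeasurable
      (.of_forall fun u ↦ by
        rw [Complex.norm_real, Real.norm_of_nonneg (psiExp_nonneg u)]
        exact psiExp_le u)
  have laplace_one : ∫ u in Ioi (0 : ℝ), Complex.exp (-s * u) = 1 / s := by
    rw [integral_exp_mul_complex_Ioi (by simpa using hs)]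
    simp [neg_div_neg_eq]
  rw [← laplace_one, ← integral_sub hpsi hexp]
  congr 1
  ext u
  push_cast
  ring

lemma exists_continuousOn_laplace_psiExp :
    ∃ F : ℂ → ℂ, ContinuousOn F {s | 0 ≤ s.re} ∧ ∀ s : ℂ, 0 < s.re →
      ∫ u in Ioi (0 : ℝ), ((psiExp u - 1 : ℝ) : ℂ) * Complex.exp (-s * u) = F s := by
  obtain ⟨E, hEc, hE⟩ := exists_continuousOn_LSeries_vonMangoldt_eq
  have add_one_ne_zero (s : ℂ) (hs : 0 ≤ s.re) : s + 1 ≠ 0 := fun h ↦ by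
    have := congrArg Complex.re h
    simp only [Complex.add_re, Complex.one_re, Complex.zero_re] at this
    linarith
  refine ⟨fun s ↦ (E (s + 1) - 1) / (s + 1), ?_, fun s hs ↦ ?_⟩
  · refine ((hEc.comp (by fun_prop) fun s hs ↦ ?_).sub continuousOn_const).div (by fun_prop)
      add_one_ne_zero
    simpa using hs
  · have hs₀ : s ≠ 0 := by
      rintro rfl
      simp at hs
    have hs₁ := add_one_ne_zero s hs.le
    have key := LSeries_vonMangoldt_eq_mul_integral_psi (s := s + 1) (by simpa using hs)
    rw [hE _ (by simpa using hs), integral_psi_mul_cpow_eq_laplace, add_sub_cancel_right] at key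
    rw [integral_psiExp_sub_one_mul_exp hs]
    field_simp at key ⊢
    linear_combination -key

theorem eventually_lcmUpto_le_exp {ε : ℝ} (hε : 0 < ε) :
    ∀ᶠ n : ℕ in atTop, (Nat.lcmUpto n : ℝ) ≤ Real.exp ((1 + ε) * n) := by
  obtain ⟨F, hFc, hF⟩ := exists_continuousOn_laplace_psiExp
  have hpsi := eventually_le_of_continuousOn_laplace measurable_psiExp psiExp_nonneg psiExp_le
    (fun _ _ ↦ psiExp_mul_exp_le) hFc hF (show 1 < 1 + ε by linarith)
  filter_upwards [(Real.tendsto_log_atTop.comp tendsto_natCast_atTop_atTop).eventually hpsi,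
    eventually_gt_atTop 0] with n hn hn₀
  have hn₀' : (0 : ℝ) < n := by exact_mod_cast hn₀
  simp only [Function.comp, psiExp, Real.exp_neg, Real.exp_log hn₀'] at hn
  rw [← div_eq_mul_inv, div_le_iff₀ hn₀', Chebyshev.psi_eq_log_lcmUpto] at hn
  rwa [← Real.log_le_iff_le_exp (by exact_mod_cast Nat.lcmUpto_pos n)]

end PrimeNumberTheorem

section LinearIndependenceCriterion

open Filter Topology

lemma exists_int_linearForms_near_int {ι κ : Type*} [Fintype ι] [Fintype κ] (w : κ → ι → ℝ)
    {Q T : ℕ} (hQ : 0 < Q) (hT : Q ^ Fintype.card κ < (T + 1) ^ Fintype.card ι) :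
    ∃ l : ι → ℤ, l ≠ 0 ∧ (∀ i, |l i| ≤ T) ∧
      ∀ j, ∃ x : ℤ, |∑ i, l i * w j i - x| ≤ 1 / (Q : ℝ) := by
  classical
  have hQ' : (0 : ℝ) < Q := by exact_mod_cast hQ
  let form (u : ι → ℕ) (j : κ) : ℝ := ∑ i, u i * w j i
  let box (u : ι → ℕ) (j : κ) : ℕ := ⌊Q * Int.fract (form u j)⌋₊
  have box_mem : ∀ u ∈ Fintype.piFinset fun _ : ι ↦ Finset.range (T + 1),
      box u ∈ Fintype.piFinset fun _ : κ ↦ Finset.range Q := fun u _ ↦ by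
    simp only [Fintype.mem_piFinset, Finset.mem_range]
    intro j
    rw [Nat.floor_lt (by positivity)]
    exact mul_lt_of_lt_one_right hQ' (Int.fract_lt_one _)
  obtain ⟨u, hu, v, hv, huv, same_box⟩ :=
    Finset.exists_ne_map_eq_of_card_lt_of_maps_to (by simpa using hT) box_mem
  simp only [Fintype.mem_piFinset, Finset.mem_range] at hu hv
  refine ⟨fun i ↦ (u i : ℤ) - v i, fun h ↦ huv (funext fun i ↦ ?_), fun i ↦ ?_, fun j ↦
    ⟨⌊form u j⌋ - ⌊form v j⌋, ?_⟩⟩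
  · have := congrFun h i
    simp only [Pi.zero_apply] at this
    omega
  · have := hu i
    have := hv i
    change |(u i : ℤ) - v i| ≤ T
    rw [abs_le]
    omega
  · have difference : ∑ i, (((u i : ℤ) - v i : ℤ) : ℝ) * w j i - ((⌊form u j⌋ - ⌊form v j⌋ : ℤ) : ℝ)
        = Int.fract (form u j) - Int.fract (form v j) := by
      simp only [← Int.self_sub_floor, form]
      push_cast
      simp only [sub_mul, Finset.sum_sub_distrib]
      ring
    have floors : ⌊(Q : ℝ) * Int.fract (form u j)⌋₊ = ⌊(Q : ℝ) * Int.fract (form v j)⌋₊ :=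
      congrFun same_box j
    have hu₁ := Nat.floor_le (show 0 ≤ (Q : ℝ) * Int.fract (form u j) by positivity)
    have hu₂ := Nat.lt_floor_add_one ((Q : ℝ) * Int.fract (form u j))
    have hv₁ := Nat.floor_le (show 0 ≤ (Q : ℝ) * Int.fract (form v j) by positivity)
    have hv₂ := Nat.lt_floor_add_one ((Q : ℝ) * Int.fract (form v j))
    rw [floors] at hu₁ hu₂
    have same_floor : |Q * Int.fract (form u j) - Q * Int.fract (form v j)| ≤ 1 :=
      abs_le.mpr ⟨by linarith, by linarith⟩
    rwa [← mul_sub, abs_mul, abs_of_pos hQ', ← le_div_iff₀' hQ', ← difference] at same_floor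

lemma exists_pos_forall_mul_eq_int {ι : Type*} [Finite ι] (f : ι → ℚ) :
    ∃ N : ℕ, 0 < N ∧ ∀ i, ∃ z : ℤ, N * f i = z := by
  obtain ⟨⟨b, hb⟩, h⟩ := IsLocalization.exist_integer_multiples_of_finite (nonZeroDivisors ℤ) f
  refine ⟨b.natAbs, Int.natAbs_pos.mpr (nonZeroDivisors.ne_zero hb), fun i ↦ ?_⟩
  obtain ⟨z, hz⟩ := h i
  simp only [eq_intCast, zsmul_eq_mul] at hz
  refine ⟨b.sign * z, ?_⟩
  rw [Int.cast_mul, hz, ← mul_assoc, ← Int.cast_mul, Int.sign_mul_self_eq_natAbs]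
  rfl

lemma exists_common_denominator {E : Type*} [AddCommGroup E] [Module ℚ E] [FiniteDimensional ℚ E]
    {ι κ : Type*} [Finite ι] [Fintype κ] {e : κ → E} (he : LinearIndependent ℚ e) (g : ι → E) :
    ∃ (m : ℕ) (w : Fin m → E) (N : ℕ) (q : ι → Fin m → ℤ) (p : ι → κ → ℤ),
      m + Fintype.card κ = Module.finrank ℚ E ∧ 0 < N ∧
        ∀ i, N • g i = ∑ j, q i j • w j + ∑ k, p i k • e k := by
  classical
  let b := Module.Basis.sumExtend he
  have : Finite (Module.Basis.sumExtendIndex he) := by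
    have := Module.Finite.finite_basis b
    exact Finite.of_injective (Sum.inr : _ → κ ⊕ Module.Basis.sumExtendIndex he) Sum.inr_injective
  have : Fintype (Module.Basis.sumExtendIndex he) := Fintype.ofFinite _
  have b_inl (k : κ) : b (.inl k) = e k := by
    simp only [b, Module.Basis.sumExtend, Module.Basis.reindex_apply,
      Module.Basis.extend_apply_self]
    rfl
  obtain ⟨N, hN, hz⟩ := exists_pos_forall_mul_eq_int
    fun x : ι × (κ ⊕ Module.Basis.sumExtendIndex he) ↦ b.repr (g x.1) x.2
  choose z hz using hz
  let reindex := Fintype.equivFin (Module.Basis.sumExtendIndex he)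
  refine ⟨_, fun j ↦ b (.inr (reindex.symm j)), N, fun i j ↦ z (i, .inr (reindex.symm j)),
    fun i k ↦ z (i, .inl k), ?_, hN, fun i ↦ ?_⟩
  · rw [Module.finrank_eq_card_basis b, Fintype.card_sum, add_comm]
  · have coord (s) : N • (b.repr (g i) s • b s) = z (i, s) • b s := by
      rw [← Nat.cast_smul_eq_nsmul ℚ, smul_smul, hz (i, s), Int.cast_smul_eq_zsmul]
    rw [reindex.symm.sum_comp fun s ↦ z (i, .inr s) • b (.inr s), ← b.sum_repr (g i),
      Finset.smul_sum, Finset.sum_congr rfl fun s _ ↦ coord s, Fintype.sum_sum_type, add_comm]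
    simp only [b_inl]

lemma abs_le_of_add_lt_one {ι κ : Type*} [Fintype ι] [Fintype κ] {γ : ι → ℝ} {ω : κ → ℝ}
    {N H δ : ℝ} {q : ι → κ → ℤ} {p x : _ → ℤ} {c : ι → ℤ}
    (hγ : ∀ i, N * γ i = ∑ j, q i j * ω j + p i) (hx : ∀ j, |ω j - x j| ≤ δ)
    (hc : ∀ i, |(c i : ℝ)| ≤ H)
    (hlt : |N * ∑ i, c i * γ i| + H * (∑ i, ∑ j, |(q i j : ℝ)|) * δ < 1) :
    |N * ∑ i, c i * γ i| ≤ H * (∑ i, ∑ j, |(q i j : ℝ)|) * δ := by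
  set Z : ℤ := ∑ i, c i * (∑ j, q i j * x j + p i) with hZ
  set R : ℝ := ∑ i, c i * ∑ j, q i j * (ω j - x j) with hR
  have decomposition : N * ∑ i, c i * γ i = Z + R := by
    rw [hZ, hR]
    push_cast
    rw [Finset.mul_sum, ← Finset.sum_add_distrib]
    refine Finset.sum_congr rfl fun i _ ↦ ?_
    simp only [mul_sub, Finset.sum_sub_distrib]
    linear_combination (c i : ℝ) * hγ i
  have remainder : |R| ≤ H * (∑ i, ∑ j, |(q i j : ℝ)|) * δ := by
    calc |R| ≤ ∑ i, |(c i : ℝ)| * |∑ j, q i j * (ω j - x j)| := by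
          simpa only [abs_mul] using Finset.abs_sum_le_sum_abs
            (fun i ↦ (c i : ℝ) * ∑ j, q i j * (ω j - x j)) Finset.univ
      _ ≤ ∑ i, H * ∑ j, |(q i j : ℝ)| * δ := by
          refine Finset.sum_le_sum fun i _ ↦ mul_le_mul (hc i) ?_ (abs_nonneg _)
            ((abs_nonneg _).trans (hc i))
          refine (Finset.abs_sum_le_sum_abs _ _).trans (Finset.sum_le_sum fun j _ ↦ ?_)
          rw [abs_mul]
          exact mul_le_mul_of_nonneg_left (hx j) (abs_nonneg _)
      _ = H * (∑ i, ∑ j, |(q i j : ℝ)|) * δ := by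
          simp_rw [← Finset.sum_mul, ← Finset.mul_sum, ← Finset.sum_mul, mul_assoc]
  have hZ_zero : Z = 0 := by
    have : |(Z : ℝ)| < 1 := by
      rw [← add_sub_cancel_right (Z : ℝ) R, ← decomposition]
      exact (abs_sub _ _).trans_lt (by linarith)
    exact Int.abs_lt_one_iff.mp (by exact_mod_cast this)
  rwa [decomposition, hZ_zero, Int.cast_zero, zero_add]

lemma exists_nat_lt_exp_and_le {α A Λ : ℝ} (hα : 0 < α) (hA : 1 ≤ A) (hΛ : 1 ≤ Λ) (k₀ : ℕ) :
    ∃ k : ℕ, k₀ ≤ k ∧ A * Λ < Real.exp (α * k) ∧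
      (k : ℝ) ≤ k₀ + 1 + Real.log A / α + Real.log Λ / α := by
  have hlog : Real.log (A * Λ) / α = Real.log A / α + Real.log Λ / α := by
    rw [Real.log_mul (by positivity) (by positivity), add_div]
  have hlog₀ : 0 ≤ Real.log (A * Λ) / α :=
    div_nonneg (Real.log_nonneg (one_le_mul_of_one_le_of_one_le hA hΛ)) hα.le
  refine ⟨k₀ + (⌊Real.log (A * Λ) / α⌋₊ + 1), Nat.le_add_right _ _, ?_, ?_⟩
  · have := Nat.lt_floor_add_one (Real.log (A * Λ) / α)
    rw [← Real.log_lt_iff_lt_exp (by positivity), ← div_lt_iff₀' hα]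
    push_cast
    linarith [(Nat.cast_nonneg k₀ : (0 : ℝ) ≤ k₀)]
  · have := Nat.floor_le hlog₀
    push_cast
    linarith

lemma exists_nat_forall_exists_exp_lt {α τ : ℝ} (hα : 0 < α) (hτ : α ≤ τ) {m : ℕ}
    (hm : m * (τ - α) < 2 * α) {A M : ℝ} (hA : 1 ≤ A) (hM : 0 ≤ M) (k₀ : ℕ) :
    ∃ Q : ℕ, 0 < Q ∧ ∀ Λ : ℝ, 1 ≤ Λ → Λ ^ 2 ≤ (Q : ℝ) ^ m →
      ∃ k : ℕ, k₀ ≤ k ∧ A * Λ < Real.exp (α * k) ∧ M * Real.exp (τ * k) < Λ * Q := by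
  set β := (τ - α) / α with hβ
  have hβ₀ : 0 ≤ β := div_nonneg (by linarith) hα.le
  have gap : 0 < 1 - β * (m / 2) := by
    rw [show β * (m / 2) = m * (τ - α) / (2 * α) by rw [hβ]; ring, sub_pos,
      div_lt_one (by linarith)]
    exact hm
  obtain ⟨Q, hQ, hQC⟩ := ((eventually_ge_atTop 1).and
    ((Real.tendsto_log_atTop.comp tendsto_natCast_atTop_atTop).eventually (eventually_gt_atTop
      ((Real.log (M + 1) + τ * (k₀ + 1 + Real.log A / α)) / (1 - β * (m / 2)))))).exists
  have hQ' : (1 : ℝ) ≤ Q := by exact_mod_cast hQ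
  refine ⟨Q, hQ, fun Λ hΛ hΛQ ↦ ?_⟩
  obtain ⟨k, hk₀, hk, hk_le⟩ := exists_nat_lt_exp_and_le hα hA hΛ k₀
  refine ⟨k, hk₀, hk, (mul_lt_mul_of_pos_right (lt_add_one M) (Real.exp_pos _)).trans_le ?_⟩
  have log_Λ : Real.log Λ ≤ m / 2 * Real.log Q := by
    have := Real.log_le_log (by positivity) hΛQ
    rw [Real.log_pow, Real.log_pow] at this
    push_cast at this
    linarith
  rw [← Real.log_le_log_iff (by positivity) (by positivity),
    Real.log_mul (by positivity) (by positivity), Real.log_exp,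
    Real.log_mul (by positivity) (by positivity)]
  rw [Function.comp_apply, div_lt_iff₀ gap] at hQC
  calc Real.log (M + 1) + τ * k
      ≤ Real.log (M + 1) + τ * (k₀ + 1 + Real.log A / α + Real.log Λ / α) := by
        have : 0 ≤ τ := by linarith
        gcongr
    _ = Real.log (M + 1) + τ * (k₀ + 1 + Real.log A / α) + β * Real.log Λ + Real.log Λ := by
        rw [hβ]
        field_simp
        ring
    _ ≤ Real.log Λ + Real.log Q := by
        linarith [mul_le_mul_of_nonneg_left log_Λ hβ₀]

lemma exists_dual_near_int {κ : Type*} [Fintype κ] (w : κ → ℝ × ℝ) {Q : ℕ} (hQ : 0 < Q) :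
    ∃ (l : ℤ × ℤ) (x : κ → ℤ), 1 ≤ ‖((l.1 : ℝ), (l.2 : ℝ))‖ ∧
      ‖((l.1 : ℝ), (l.2 : ℝ))‖ ^ 2 ≤ (Q : ℝ) ^ Fintype.card κ ∧
      ∀ j, |l.1 * (w j).1 + l.2 * (w j).2 - x j| ≤ 1 / (Q : ℝ) := by
  set T := Nat.sqrt (Q ^ Fintype.card κ)
  obtain ⟨l, hl, hlT, hx⟩ := exists_int_linearForms_near_int (fun j ↦ ![(w j).1, (w j).2]) hQ
    (T := T) (by rw [Fintype.card_fin]; exact Nat.lt_succ_sqrt' _)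
  choose x hx using hx
  simp only [Fin.sum_univ_two, Matrix.cons_val_zero, Matrix.cons_val_one] at hx
  refine ⟨(l 0, l 1), x, ?_, ?_, hx⟩
  · have : l 0 ≠ 0 ∨ l 1 ≠ 0 := by
      by_contra! h
      exact hl (funext fun i ↦ by fin_cases i <;> simp [h.1, h.2])
    rw [Prod.norm_mk, le_max_iff, Real.norm_eq_abs, Real.norm_eq_abs]
    exact this.imp (fun h ↦ by exact_mod_cast Int.one_le_abs h)
      fun h ↦ by exact_mod_cast Int.one_le_abs h
  · have hT : ‖((l 0 : ℝ), (l 1 : ℝ))‖ ≤ T := by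
      rw [Prod.norm_mk, Real.norm_eq_abs, Real.norm_eq_abs]
      exact max_le (by exact_mod_cast hlT 0) (by exact_mod_cast hlT 1)
    calc ‖((l 0 : ℝ), (l 1 : ℝ))‖ ^ 2 ≤ (T : ℝ) ^ 2 := by gcongr
      _ ≤ (Q : ℝ) ^ Fintype.card κ := by exact_mod_cast Nat.sqrt_le' _

lemma exists_common_denominator_prod {V : Submodule ℚ (ℝ × ℝ)} [FiniteDimensional ℚ V]
    (h₁ : ((1 : ℝ), (0 : ℝ)) ∈ V) (h₂ : ((0 : ℝ), (1 : ℝ)) ∈ V) {ι : Type*} [Finite ι]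
    {g : ι → ℝ × ℝ} (hg : ∀ i, g i ∈ V) :
    ∃ (m : ℕ) (w : Fin m → ℝ × ℝ) (N : ℕ) (q : ι → Fin m → ℤ) (p : ι → ℤ × ℤ),
      m + 2 = Module.finrank ℚ V ∧ 0 < N ∧ ∀ i (l : ℤ × ℤ),
        N * (l.1 * (g i).1 + l.2 * (g i).2) =
          ∑ j, q i j * (l.1 * (w j).1 + l.2 * (w j).2) + (l.1 * (p i).1 + l.2 * (p i).2 : ℤ) := by
  let e : Fin 2 → V := ![⟨(1, 0), h₁⟩, ⟨(0, 1), h₂⟩]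
  have he : LinearIndependent ℚ e := by
    rw [LinearIndependent.pair_iff]
    intro s t hst
    have := congrArg Subtype.val hst
    simpa [Rat.smul_def] using this
  obtain ⟨m, w, N, q, p, hm, hN, hgw⟩ := exists_common_denominator he fun i ↦ (⟨g i, hg i⟩ : V)
  refine ⟨m, fun j ↦ w j, N, q, fun i ↦ (p i 0, p i 1), by simpa using hm, hN, fun i l ↦ ?_⟩
  have hgi := congrArg Subtype.val (hgw i)
  simp only [Fin.sum_univ_two, e, Submodule.coe_add, Submodule.coe_sum,
    Matrix.cons_val_zero, Matrix.cons_val_one] at hgi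
  have h_fst : N * (g i).1 = ∑ j, q i j * (w j : ℝ × ℝ).1 + p i 0 := by
    simpa [Prod.fst_sum] using congrArg Prod.fst hgi
  have h_snd : N * (g i).2 = ∑ j, q i j * (w j : ℝ × ℝ).2 + p i 1 := by
    simpa [Prod.snd_sum] using congrArg Prod.snd hgi
  push_cast
  simp only [mul_add, Finset.sum_add_distrib, mul_left_comm _ (l.1 : ℝ), mul_left_comm _ (l.2 : ℝ),
    ← Finset.mul_sum]
  linear_combination (l.1 : ℝ) * h_fst + (l.2 : ℝ) * h_snd

lemma abs_pairing_le (x y : ℝ × ℝ) : |x.1 * y.1 + x.2 * y.2| ≤ 2 * (‖x‖ * ‖y‖) :=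
  calc |x.1 * y.1 + x.2 * y.2| ≤ |x.1| * |y.1| + |x.2| * |y.2| := by
        simpa only [abs_mul] using abs_add_le (x.1 * y.1) (x.2 * y.2)
    _ ≤ ‖x‖ * ‖y‖ + ‖x‖ * ‖y‖ := by
        gcongr
        exacts [norm_fst_le x, norm_fst_le y, norm_snd_le x, norm_snd_le y]
    _ = 2 * (‖x‖ * ‖y‖) := by ring

lemma sum_mul_pairing {ι : Type*} [Fintype ι] (c : ι → ℝ) (g : ι → ℝ × ℝ) (x : ℝ × ℝ) :
    ∑ i, c i * (x.1 * (g i).1 + x.2 * (g i).2) =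
      x.1 * (∑ i, c i • g i).1 + x.2 * (∑ i, c i • g i).2 := by
  rw [Prod.fst_sum, Prod.snd_sum, Finset.mul_sum, Finset.mul_sum, ← Finset.sum_add_distrib]
  refine Finset.sum_congr rfl fun i _ ↦ ?_
  simp only [Prod.smul_fst, Prod.smul_snd, smul_eq_mul]
  ring

/- Siegel-type criterion: a dual vector `l` that is nearly integral on a basis of `V` makes each
`l · y` nearly an integer, hence too small, while non-degeneracy of the forms keeps some `l · y`
large. -/
theorem two_mul_le_finrank_sub_two_mul {V : Submodule ℚ (ℝ × ℝ)} [FiniteDimensional ℚ V]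
    (h₁ : ((1 : ℝ), (0 : ℝ)) ∈ V) (h₂ : ((0 : ℝ), (1 : ℝ)) ∈ V) {ι β : Type*} [Fintype ι]
    {g : ι → ℝ × ℝ} (hg : ∀ i, g i ∈ V) {α h α' : ℝ} (hα : 0 < α) (hτ : α ≤ h + α')
    (H : ∀ᶠ k : ℕ in atTop, ∃ D > 0, ∃ c : β → ι → ℤ,
      (∀ b i, |(c b i : ℝ)| ≤ D * Real.exp (h * k)) ∧
      (∀ b, ‖∑ i, (c b i : ℝ) • g i‖ ≤ Real.exp (-(α * k))) ∧
      ∀ l : ℝ × ℝ, ∃ b, D * Real.exp (-(α' * k)) * ‖l‖ ≤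
        |l.1 * (∑ i, (c b i : ℝ) • g i).1 + l.2 * (∑ i, (c b i : ℝ) • g i).2|) :
    2 * α ≤ (Module.finrank ℚ V - 2) * (h + α' - α) := by
  obtain ⟨m, w, N, q, p, hm, hN, hgw⟩ := exists_common_denominator_prod h₁ h₂ hg
  obtain ⟨k₀, hk₀⟩ := eventually_atTop.mp H
  rw [← hm, Nat.cast_add, Nat.cast_two, add_sub_cancel_right]
  by_contra! hlt
  have hN₁ : (1 : ℝ) ≤ N := by exact_mod_cast hN
  set M : ℝ := ∑ i, ∑ j, |(q i j : ℝ)|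
  obtain ⟨Q, hQ, hk⟩ := exists_nat_forall_exists_exp_lt hα hτ hlt (A := 4 * N) (M := M)
    (by linarith) (by positivity) k₀
  obtain ⟨l, x, hΛ₁, hΛQ, hx⟩ := exists_dual_near_int w hQ
  set Λ := ‖((l.1 : ℝ), (l.2 : ℝ))‖
  rw [Fintype.card_fin] at hΛQ
  obtain ⟨k, hk, small, large⟩ := hk Λ hΛ₁ hΛQ
  obtain ⟨D, hD, c, hc, hy, hlow⟩ := hk₀ k hk
  obtain ⟨b, hb⟩ := hlow (l.1, l.2)
  have pairing := sum_mul_pairing (fun i ↦ (c b i : ℝ)) g ((l.1 : ℝ), (l.2 : ℝ))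
  set y := ∑ i, (c b i : ℝ) • g i
  have upper : N * |l.1 * y.1 + l.2 * y.2| < 1 / 2 := by
    have hle : |l.1 * y.1 + l.2 * y.2| ≤ 2 * (Λ * Real.exp (-(α * k))) :=
      (abs_pairing_le ((l.1 : ℝ), (l.2 : ℝ)) y).trans (by gcongr; exact hy b)
    have hsmall : 4 * N * Λ * Real.exp (-(α * k)) < 1 := by
      rwa [Real.exp_neg, ← div_eq_mul_inv, div_lt_one (Real.exp_pos _)]
    nlinarith [mul_le_mul_of_nonneg_left hle (by linarith : (0 : ℝ) ≤ N)]
  have error_lt : D * Real.exp (h * k) * M * (1 / Q) < |l.1 * y.1 + l.2 * y.2| := by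
    refine lt_of_lt_of_le ?_ hb
    have hexp : Real.exp (h * k) = Real.exp ((h + α') * k) * Real.exp (-(α' * k)) := by
      rw [← Real.exp_add]
      ring_nf
    have hQ' : (0 : ℝ) < Q := by exact_mod_cast hQ
    rw [mul_one_div, div_lt_iff₀ hQ', hexp]
    calc D * (Real.exp ((h + α') * k) * Real.exp (-(α' * k))) * M
        = D * Real.exp (-(α' * k)) * (M * Real.exp ((h + α') * k)) := by ring
      _ < D * Real.exp (-(α' * k)) * (Λ * Q) := by gcongr
      _ = D * Real.exp (-(α' * k)) * Λ * Q := by ring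
  have enlarge : |l.1 * y.1 + l.2 * y.2| ≤ N * |l.1 * y.1 + l.2 * y.2| :=
    le_mul_of_one_le_left (abs_nonneg _) hN₁
  have conclusion := abs_le_of_add_lt_one (fun i ↦ hgw i l) hx (hc b)
    (by rw [pairing, abs_mul, Nat.abs_cast]; linarith)
  rw [pairing, abs_mul, Nat.abs_cast] at conclusion
  linarith

end LinearIndependenceCriterion

section LinearSeries

open PowerSeries
open scoped Polynomial

/-- The power series `b + X`; for `b ≠ 0` its inverse is the expansion of `x ↦ 1 / x` at `b`. -/
noncomputable def linearSeries {R : Type*} [Semiring R] (b : R) : R⟦X⟧ := X + C b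

/-- The expansion of a polynomial around `t`, as a power series. -/
noncomputable def taylorSeries {R : Type*} [CommRing R] (t : R) : R[X] →+* R⟦X⟧ :=
  Polynomial.coeToPowerSeries.ringHom.comp (Polynomial.taylorAlgHom t).toRingHom

section CommRing

variable {R : Type*} [CommRing R] (t b : R)

lemma taylorSeries_apply (p : R[X]) : taylorSeries t p = (Polynomial.taylor t p : R[X]) := rfl

@[simp]
lemma taylorSeries_C : taylorSeries t (.C b) = C b := by
  simp [taylorSeries_apply]

@[simp]
lemma taylorSeries_X_add_C : taylorSeries t (.X + .C b) = linearSeries (t + b) := by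
  simp [taylorSeries_apply, linearSeries, add_assoc]

@[simp]
lemma taylorSeries_taylor (p : R[X]) :
    taylorSeries t (Polynomial.taylor b p) = taylorSeries (t + b) p := by
  rw [taylorSeries_apply, taylorSeries_apply, Polynomial.taylor_taylor]

@[simp]
lemma constantCoeff_linearSeries : constantCoeff (linearSeries b) = b := by
  simp [linearSeries]

end CommRing

section Field

variable {K : Type*} [Field K] {b : K}

lemma linearSeries_mul_inv (hb : b ≠ 0) : linearSeries b * (linearSeries b)⁻¹ = 1 :=
  PowerSeries.mul_inv_cancel _ (by rwa [constantCoeff_linearSeries])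

lemma linearSeries_inv (hb : b ≠ 0) :
    (linearSeries b)⁻¹ = C b⁻¹ * rescale (-b⁻¹) (mk 1) := by
  rw [eq_comm, eq_inv_iff_mul_eq_one (by rwa [constantCoeff_linearSeries])]
  have factorization : linearSeries b = C b * rescale (-b⁻¹) (1 - X) := by
    rw [map_sub, map_one, rescale_X, mul_sub, ← mul_assoc, ← map_mul, mul_neg, mul_inv_cancel₀ hb,
      linearSeries, map_neg, map_one]
    ring
  calc C b⁻¹ * rescale (-b⁻¹) (mk 1) * linearSeries b
      = C (b⁻¹ * b) * rescale (-b⁻¹) (mk 1 * (1 - X)) := by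
        rw [factorization, map_mul, map_mul]; ring
    _ = 1 := by rw [inv_mul_cancel₀ hb, mk_one_mul_one_sub_eq_one, map_one, map_one, mul_one]

lemma coeff_linearSeries_inv (hb : b ≠ 0) (k : ℕ) :
    coeff k (linearSeries b)⁻¹ = b⁻¹ * (-b⁻¹) ^ k := by
  simp [linearSeries_inv hb]

lemma coeff_linearSeries_inv_pow_succ (hb : b ≠ 0) (d s : ℕ) :
    coeff s ((linearSeries b)⁻¹ ^ (d + 1)) = (-1) ^ s * (d + s).choose s / b ^ (d + 1 + s) := by
  rw [linearSeries_inv hb, mul_pow, ← map_pow, ← map_pow, mk_one_pow_eq_mk_choose_add,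
    coeff_C_mul, coeff_rescale, coeff_mk, Nat.choose_symm_add, neg_pow, inv_pow, inv_pow,
    pow_add b]
  ring

end Field

end LinearSeries

section WeightedNorm

open PowerSeries

/-- The weighted `ℓ¹`-norm `∑ |fₖ| 2⁻ᵏ` of the power series `f = ∑ fₖ Xᵏ` is at most `B`. -/
def WeightedNormLE (f : ℝ⟦X⟧) (B : ℝ) : Prop :=
  ∀ N : ℕ, ∑ k ∈ Finset.range N, |coeff k f| * (1 / 2) ^ k ≤ B

namespace WeightedNormLE

variable {f g : ℝ⟦X⟧} {B B' : ℝ}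

lemma nonneg (h : WeightedNormLE f B) : 0 ≤ B := by
  simpa using h 0

lemma mono (h : WeightedNormLE f B) (hB : B ≤ B') : WeightedNormLE f B' :=
  fun N ↦ (h N).trans hB

lemma abs_coeff_le (h : WeightedNormLE f B) (k : ℕ) : |coeff k f| ≤ 2 ^ k * B := by
  have single : |coeff k f| * (1 / 2) ^ k ≤ B :=
    (Finset.single_le_sum (f := fun k ↦ |coeff k f| * (1 / 2 : ℝ) ^ k)
      (fun _ _ ↦ by positivity) (Finset.self_mem_range_succ k)).trans (h (k + 1))
  rwa [one_div, inv_pow, ← div_eq_mul_inv, div_le_iff₀' (by positivity)] at single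

lemma add (hf : WeightedNormLE f B) (hg : WeightedNormLE g B') :
    WeightedNormLE (f + g) (B + B') := fun N ↦ by
  refine le_trans ?_ (add_le_add (hf N) (hg N))
  rw [← Finset.sum_add_distrib]
  gcongr with k
  rw [map_add, ← add_mul]
  gcongr
  exact abs_add_le _ _

lemma mul (hf : WeightedNormLE f B) (hg : WeightedNormLE g B') :
    WeightedNormLE (f * g) (B * B') := fun N ↦ by
  refine le_trans ?_ (mul_le_mul (hf N) (hg N) (by positivity) hf.nonneg)
  let term (p : ℕ × ℕ) : ℝ := |coeff p.1 f| * (1 / 2) ^ p.1 * (|coeff p.2 g| * (1 / 2) ^ p.2)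
  have coeff_mul_le (k : ℕ) :
      |coeff k (f * g)| * (1 / 2) ^ k ≤ ∑ p ∈ Finset.HasAntidiagonal.antidiagonal k, term p := by
    calc |coeff k (f * g)| * (1 / 2) ^ k
        ≤ (∑ p ∈ Finset.HasAntidiagonal.antidiagonal k, |coeff p.1 f * coeff p.2 g|) *
            (1 / 2) ^ k := by
          rw [coeff_mul]
          gcongr
          exact Finset.abs_sum_le_sum_abs _ _
      _ = ∑ p ∈ Finset.HasAntidiagonal.antidiagonal k, term p := by
          rw [Finset.sum_mul]
          refine Finset.sum_congr rfl fun p hp ↦ ?_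
          rw [← Finset.HasAntidiagonal.mem_antidiagonal.mp hp, abs_mul, pow_add]
          ring
  have antidiagonal_eq : ∀ k ∈ Finset.range N, Finset.HasAntidiagonal.antidiagonal k =
      {p ∈ Finset.range N ×ˢ Finset.range N | p.1 + p.2 = k} := fun k hk ↦ by
    ext p
    simp only [Finset.HasAntidiagonal.mem_antidiagonal, Finset.mem_filter, Finset.mem_product,
      Finset.mem_range] at hk ⊢
    omega
  calc ∑ k ∈ Finset.range N, |coeff k (f * g)| * (1 / 2) ^ k
      ≤ ∑ k ∈ Finset.range N, ∑ p ∈ Finset.range N ×ˢ Finset.range N with p.1 + p.2 = k, term p :=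
        Finset.sum_le_sum fun k hk ↦ antidiagonal_eq k hk ▸ coeff_mul_le k
    _ ≤ ∑ p ∈ Finset.range N ×ˢ Finset.range N, term p :=
        Finset.sum_fiberwise_le_sum_of_sum_fiber_nonneg fun _ _ ↦
          Finset.sum_nonneg fun _ _ ↦ by positivity
    _ = _ := by rw [Finset.sum_mul_sum, ← Finset.sum_product']

lemma const (c : ℝ) : WeightedNormLE (C c) |c| := by
  rintro (_ | N)
  · simp
  · simp [Finset.sum_range_succ', coeff_C]

lemma X : WeightedNormLE X (1 / 2) := by
  rintro (_ | _ | N)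
  · norm_num
  · norm_num
  · simp [Finset.sum_range_succ', coeff_X]

lemma prod {ι : Type*} (s : Finset ι) {f : ι → ℝ⟦X⟧} {B : ι → ℝ}
    (h : ∀ i ∈ s, WeightedNormLE (f i) (B i)) : WeightedNormLE (∏ i ∈ s, f i) (∏ i ∈ s, B i) := by
  classical
  induction s using Finset.induction_on with
  | empty => simpa using const 1
  | insert i s hi ih =>
    rw [Finset.prod_insert hi, Finset.prod_insert hi]
    exact (h i (by simp)).mul (ih fun j hj ↦ h j (by simp [hj]))

lemma pow (hf : WeightedNormLE f B) (k : ℕ) : WeightedNormLE (f ^ k) (B ^ k) := by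
  simpa using prod (Finset.range k) fun _ _ ↦ hf

protected lemma linearSeries (b : ℝ) : WeightedNormLE (linearSeries b) (|b| + 1 / 2) :=
  add_comm (1 / 2) |b| ▸ X.add (const b)

lemma linearSeries_inv {b : ℝ} (hb : 1 ≤ |b|) :
    WeightedNormLE (linearSeries b)⁻¹ (1 / (|b| - 1 / 2)) := fun N ↦ by
  have hb₀ : b ≠ 0 := abs_pos.mp (by linarith)
  have ratio_lt_one : 1 / (2 * |b|) < 1 := by
    rw [div_lt_one (by positivity)]
    linarith
  calc ∑ k ∈ Finset.range N, |coeff k (linearSeries b)⁻¹| * (1 / 2) ^ k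
      = |b|⁻¹ * ∑ k ∈ Finset.range N, (1 / (2 * |b|)) ^ k := by
        rw [Finset.mul_sum]
        refine Finset.sum_congr rfl fun k _ ↦ ?_
        rw [coeff_linearSeries_inv hb₀, abs_mul, abs_inv, abs_pow, abs_neg, abs_inv, mul_assoc,
          ← mul_pow]
        congr 2
        field_simp
    _ ≤ |b|⁻¹ * (1 - 1 / (2 * |b|))⁻¹ := by
        gcongr
        rw [← tsum_geometric_of_lt_one (by positivity) ratio_lt_one]
        exact (summable_geometric_of_lt_one (by positivity) ratio_lt_one).sum_le_tsum _
          fun _ _ ↦ by positivity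
    _ = 1 / (|b| - 1 / 2) := by
        have : |b| ≠ 0 := by positivity
        have : |b| - 1 / 2 ≠ 0 := by linarith
        rw [← mul_inv, mul_sub, one_div]
        field_simp

end WeightedNormLE

end WeightedNorm

section PartialFractions

open Polynomial Lagrange

variable {K ι : Type*} [Field K] (s : Finset ι) (v : ι → K)

lemma taylorSeries_X_sub_C (t b : K) : taylorSeries t (X - C b) = linearSeries (t - b) := by
  rw [sub_eq_add_neg, ← C_neg, taylorSeries_X_add_C, ← sub_eq_add_neg]

lemma taylorSeries_nodal (t : K) :
    taylorSeries t (nodal s v) = ∏ i ∈ s, linearSeries (t - v i) := by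
  simp_rw [nodal_eq, map_prod, taylorSeries_X_sub_C]

lemma X_sub_C_pow_dvd_iff_X_pow_dvd_taylorSeries {t : K} {n : ℕ} {p : K[X]} :
    (X - C t) ^ n ∣ p ↔ PowerSeries.X ^ n ∣ taylorSeries t p := by
  rw [X_sub_C_pow_dvd_iff, X_pow_dvd_iff, PowerSeries.X_pow_dvd_iff]
  simp_rw [taylorSeries_apply, coeff_coe, taylor_apply]

lemma taylorSeries_nodal_mul_inv {t : K} (ht : ∀ i ∈ s, t ≠ v i) :
    taylorSeries t (nodal s v) * (taylorSeries t (nodal s v))⁻¹ = 1 := by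
  refine PowerSeries.mul_inv_cancel _ ?_
  rw [taylorSeries_nodal, map_prod]
  simp_rw [constantCoeff_linearSeries]
  exact Finset.prod_ne_zero_iff.mpr fun i hi ↦ sub_ne_zero.mpr (ht i hi)

variable [DecidableEq ι] (P : K[X]) (a : ℕ)

/-- The coefficient of `(X - v i) ^ (k - a)` in the partial fraction decomposition of the quotient
of `P` by the `a`-th power of `∏ i ∈ s, (X - v i)`. -/
noncomputable def partialFractionCoeff (i : ι) (k : ℕ) : K :=
  PowerSeries.coeff k
    (taylorSeries (v i) P * (taylorSeries (v i) (nodal (s.erase i) v))⁻¹ ^ a)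

/-- The numerator of the principal part at `v i` of the partial fraction decomposition, over the
common denominator `∏ i ∈ s, (X - v i) ^ a`. -/
noncomputable def principalNumerator (i : ι) : K[X] :=
  ∑ k ∈ Finset.range a,
    C (partialFractionCoeff s v P a i k) * ((X - C (v i)) ^ k * nodal (s.erase i) v ^ a)

variable {s v P a}

lemma X_sub_C_pow_dvd_sub_principalNumerator (hv : Set.InjOn v s) {i : ι} (hi : i ∈ s) :
    (X - C (v i)) ^ a ∣ P - principalNumerator s v P a i := by
  set E := taylorSeries (v i) (nodal (s.erase i) v)
  have inv_pow_mul : E⁻¹ ^ a * E ^ a = 1 := by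
    rw [← mul_pow, mul_comm, taylorSeries_nodal_mul_inv, one_pow]
    intro m hm h
    exact Finset.ne_of_mem_erase hm (hv (Finset.mem_of_mem_erase hm) hi h.symm)
  have expansion : taylorSeries (v i) (P - principalNumerator s v P a i) =
      (taylorSeries (v i) P * E⁻¹ ^ a - ∑ k ∈ Finset.range a,
        PowerSeries.C (partialFractionCoeff s v P a i k) * PowerSeries.X ^ k) * E ^ a := by
    rw [sub_mul, mul_assoc, inv_pow_mul, mul_one, map_sub, principalNumerator, map_sum,
      Finset.sum_mul]
    simp_rw [map_mul, map_pow, taylorSeries_X_sub_C, taylorSeries_C, sub_self, linearSeries,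
      map_zero, add_zero, mul_assoc, E]
  rw [X_sub_C_pow_dvd_iff_X_pow_dvd_taylorSeries, expansion]
  refine Dvd.dvd.mul_right (PowerSeries.X_pow_dvd_iff.mpr fun m hm ↦ ?_) _
  rw [map_sub, map_sum, sub_eq_zero]
  simp_rw [PowerSeries.coeff_C_mul, PowerSeries.coeff_X_pow, mul_ite, mul_one, mul_zero]
  rw [Finset.sum_ite_eq, if_pos (Finset.mem_range.mpr hm), partialFractionCoeff]

lemma X_sub_C_pow_dvd_principalNumerator {i j : ι} (hi : i ∈ s) (hij : i ≠ j) :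
    (X - C (v i)) ^ a ∣ principalNumerator s v P a j :=
  Finset.dvd_sum fun _ _ ↦ ((pow_dvd_pow_of_dvd
    (X_sub_C_dvd_nodal v (Finset.mem_erase.mpr ⟨hij, hi⟩)) a).mul_left _).mul_left _

lemma natDegree_principalTerm {i : ι} (hi : i ∈ s) (k : ℕ) :
    ((X - C (v i)) ^ k * nodal (s.erase i) v ^ a).natDegree = k + a * (s.card - 1) := by
  rw [((monic_X_sub_C _).pow k).natDegree_mul (nodal_monic.pow a), natDegree_pow, natDegree_pow,
    natDegree_X_sub_C, natDegree_nodal, Finset.card_erase_of_mem hi, mul_one]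

lemma natDegree_principalNumerator_lt (ha : 0 < a) {i : ι} (hi : i ∈ s) :
    (principalNumerator s v P a i).natDegree < a * s.card := by
  have degree_le : (principalNumerator s v P a i).natDegree ≤ (a - 1) + a * (s.card - 1) := by
    refine natDegree_sum_le_of_forall_le _ _ fun k hk ↦ (natDegree_C_mul_le _ _).trans ?_
    rw [natDegree_principalTerm hi]
    have := Finset.mem_range.mp hk
    omega
  have : a * (s.card - 1) + a = a * s.card := by
    rw [← Nat.mul_succ, Nat.succ_eq_add_one, Nat.sub_add_cancel (Finset.card_pos.mpr ⟨i, hi⟩)]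
  omega

theorem eq_sum_principalNumerator (hv : Set.InjOn v s) (hP : P.natDegree < a * s.card) :
    P = ∑ i ∈ s, principalNumerator s v P a i := by
  have ha : 0 < a := Nat.pos_of_mul_pos_right (Nat.zero_lt_of_lt hP)
  have dvd : ∏ i ∈ s, (X - C (v i)) ^ a ∣ P - ∑ i ∈ s, principalNumerator s v P a i := by
    refine Finset.prod_dvd_of_coprime (fun i hi j hj hij ↦ ?_) fun i hi ↦ ?_
    · exact (isCoprime_X_sub_C_of_isUnit_sub
        (sub_ne_zero.mpr (hv.ne hi hj hij)).isUnit).pow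
    · rw [← Finset.add_sum_erase _ _ hi, ← sub_sub]
      refine dvd_sub (X_sub_C_pow_dvd_sub_principalNumerator hv hi) (Finset.dvd_sum fun j hj ↦ ?_)
      exact X_sub_C_pow_dvd_principalNumerator hi (Finset.ne_of_mem_erase hj).symm
  rw [← sub_eq_zero]
  refine eq_zero_of_dvd_of_natDegree_lt dvd ?_
  have product_degree : (∏ i ∈ s, (X - C (v i)) ^ a).natDegree = a * s.card := by
    rw [natDegree_prod_of_monic _ _ fun i _ ↦ (monic_X_sub_C _).pow _]
    simp [mul_comm]
  rw [product_degree]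
  refine (natDegree_sub_le _ _).trans_lt (max_lt hP ?_)
  refine (natDegree_sum_le _ _).trans_lt ?_
  rw [Finset.fold_max_lt]
  exact ⟨Nat.zero_lt_of_lt hP, fun i hi ↦ natDegree_principalNumerator_lt ha hi⟩

/-- The coefficients sum to the limit of `x * P x / ∏ i ∈ s, (x - v i) ^ a` at infinity. -/
lemma sum_partialFractionCoeff_sub_one (hv : Set.InjOn v s)
    (hP : P.natDegree + 1 < a * s.card) : ∑ i ∈ s, partialFractionCoeff s v P a i (a - 1) = 0 := by
  obtain ⟨b, rfl⟩ := Nat.exists_eq_add_one.mpr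
    (Nat.pos_of_mul_pos_right (Nat.zero_lt_of_lt hP))
  have hs : 0 < s.card := Nat.pos_of_mul_pos_left (Nat.zero_lt_of_lt hP)
  have degree : (b + 1) * s.card = b + (b + 1) * (s.card - 1) + 1 := by
    obtain ⟨c, hc⟩ := Nat.exists_eq_add_one.mpr hs
    rw [hc, Nat.add_sub_cancel]
    ring
  have top_coeff := congrArg (coeff · (b + (b + 1) * (s.card - 1)))
    (eq_sum_principalNumerator hv (by omega : P.natDegree < (b + 1) * s.card))
  simp only [finsetSum_coeff, principalNumerator] at top_coeff
  rw [coeff_eq_zero_of_natDegree_lt (by omega)] at top_coeff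
  rw [top_coeff]
  refine Finset.sum_congr rfl fun i hi ↦ ?_
  rw [Finset.sum_range_succ, Finset.sum_eq_zero fun k hk ↦ ?_, zero_add, coeff_C_mul,
    ← natDegree_principalTerm (v := v) hi,
    (((monic_X_sub_C (v i)).pow b).mul (nodal_monic.pow (b + 1))).coeff_natDegree, mul_one,
    Nat.add_sub_cancel]
  refine coeff_eq_zero_of_natDegree_lt ((natDegree_C_mul_le _ _).trans_lt ?_)
  rw [natDegree_principalTerm hi]
  have := Finset.mem_range.mp hk
  omega

lemma taylorSeries_mul_inv_eq_sum_partialFractionCoeff (hv : Set.InjOn v s)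
    (hP : P.natDegree < a * s.card) {t : K} (ht : ∀ i ∈ s, t ≠ v i) :
    taylorSeries t P * (taylorSeries t (nodal s v))⁻¹ ^ a = ∑ i ∈ s, ∑ k ∈ Finset.range a,
      PowerSeries.C (partialFractionCoeff s v P a i k) * (linearSeries (t - v i))⁻¹ ^ (a - k) := by
  conv_lhs => rw [eq_sum_principalNumerator hv hP, map_sum, Finset.sum_mul]
  refine Finset.sum_congr rfl fun i hi ↦ ?_
  rw [principalNumerator, map_sum, Finset.sum_mul]
  refine Finset.sum_congr rfl fun k hk ↦ ?_
  have linear := linearSeries_mul_inv (sub_ne_zero.mpr (ht i hi))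
  have nodal_erase := taylorSeries_nodal_mul_inv (s.erase i) v
    fun m hm ↦ ht m (Finset.mem_of_mem_erase hm)
  set L := linearSeries (t - v i)
  set E := taylorSeries t (nodal (s.erase i) v)
  have split := pow_mul_pow_sub L⁻¹ (Finset.mem_range.mp hk).le
  calc taylorSeries t (C (partialFractionCoeff s v P a i k) *
        ((X - C (v i)) ^ k * nodal (s.erase i) v ^ a)) * (taylorSeries t (nodal s v))⁻¹ ^ a
      = PowerSeries.C (partialFractionCoeff s v P a i k) * (L ^ k * L⁻¹ ^ a) *
          (E * E⁻¹) ^ a := by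
        rw [nodal_eq_mul_nodal_erase hi, map_mul (taylorSeries t) (X - C (v i)),
          PowerSeries.mul_inv_rev, map_mul, map_mul, map_pow, map_pow, taylorSeries_C,
          taylorSeries_X_sub_C]
        ring
    _ = PowerSeries.C (partialFractionCoeff s v P a i k) * ((L * L⁻¹) ^ k * L⁻¹ ^ (a - k)) := by
        rw [nodal_erase, one_pow, mul_one, ← split, mul_pow, mul_assoc]
    _ = _ := by rw [linear, one_pow, one_mul]

end PartialFractions

section ZetaSums

open Filter Topology
open scoped Polynomial

/-- The finite part `∑ u ≤ j, u⁻ⁱ` of the series of `zeta i`. -/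
noncomputable def zetaPartialSum (j i : ℕ) : ℝ := ∑ u ∈ Finset.range j, 1 / ((u : ℝ) + 1) ^ i

lemma hasSum_zeta {i : ℕ} (hi : 2 ≤ i) :
    HasSum (fun t : ℕ ↦ 1 / ((t : ℝ) + 1) ^ i) (zeta i) := by
  have summable := (summable_nat_add_iff 1).mpr (Real.summable_one_div_nat_pow (p := i) |>.mpr hi)
  simp only [Nat.cast_add, Nat.cast_one] at summable
  exact summable.hasSum

lemma hasSum_sub_add_of_antitone {f : ℕ → ℝ} (hf : Antitone f) (hf₀ : Tendsto f atTop (𝓝 0))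
    (j : ℕ) : HasSum (fun t ↦ f t - f (t + j)) (∑ u ∈ Finset.range j, f u) := by
  have telescope (u : ℕ) : HasSum (fun t ↦ f (t + u) - f (t + u + 1)) (f u) := by
    rw [hasSum_iff_tendsto_nat_of_nonneg fun t ↦ sub_nonneg.mpr (hf (Nat.le_succ _))]
    have partial_sum (N : ℕ) :
        ∑ t ∈ Finset.range N, (f (t + u) - f (t + u + 1)) = f u - f (N + u) := by
      simpa [add_right_comm] using Finset.sum_range_sub' (fun t ↦ f (t + u)) N
    simpa only [partial_sum, sub_zero] using
      tendsto_const_nhds.sub ((tendsto_add_atTop_iff_nat u).mpr hf₀)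
  refine (hasSum_sum fun u _ ↦ telescope u).congr_fun fun t ↦ ?_
  simpa [add_assoc] using (Finset.sum_range_sub' (fun u ↦ f (t + u)) j).symm

/-- `zeta 1` is a junk value; for `i = 1` it cancels out of the sum. -/
lemma hasSum_sum_div_add_pow (J : Finset ℕ) (w : ℕ → ℝ) {i : ℕ} (hi : 1 ≤ i)
    (hw : 2 ≤ i ∨ ∑ j ∈ J, w j = 0) :
    HasSum (fun t : ℕ ↦ ∑ j ∈ J, w j / ((t : ℝ) + 1 + j) ^ i)
      (∑ j ∈ J, w j * (zeta i - zetaPartialSum j i)) := by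
  let f (t : ℕ) : ℝ := 1 / ((t : ℝ) + 1) ^ i
  have antitone : Antitone f := fun t u h ↦ by
    simp only [f]
    gcongr
  have tendsto_zero : Tendsto f atTop (𝓝 0) := by
    simp only [f, ← one_div_pow]
    simpa [(Nat.one_le_iff_ne_zero.mp hi)] using
      (tendsto_one_div_add_atTop_nhds_zero_nat (𝕜 := ℝ)).pow i
  have shifted : HasSum (fun t ↦ ∑ j ∈ J, w j * (f t - f (t + j)))
      (∑ j ∈ J, w j * zetaPartialSum j i) :=
    hasSum_sum fun j _ ↦ (hasSum_sub_add_of_antitone antitone tendsto_zero j).mul_left _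
  have unshifted : HasSum (fun t ↦ (∑ j ∈ J, w j) * f t) ((∑ j ∈ J, w j) * zeta i) := by
    rcases hw with hi | hw
    · exact (hasSum_zeta hi).mul_left _
    · simp only [hw, zero_mul, hasSum_zero]
  simp_rw [mul_sub, Finset.sum_sub_distrib, ← Finset.sum_mul]
  refine (unshifted.sub shifted).congr_fun fun t ↦ ?_
  rw [Finset.sum_mul, ← Finset.sum_sub_distrib]
  refine Finset.sum_congr rfl fun j _ ↦ ?_
  simp only [f]
  push_cast
  ring

/-- The poles `0, -1, …, -n` of the rational functions `P / (x (x + 1) ⋯ (x + n)) ^ a`. -/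
def poles (m : ℕ) : ℝ := -m

lemma injective_poles : Function.Injective poles := fun i j h ↦ by
  simpa [poles] using h

/-- The expansion of `P / (x (x + 1) ⋯ (x + n)) ^ a` around `t`. -/
noncomputable def quotientSeries (P : ℝ[X]) (a n : ℕ) (t : ℝ) : PowerSeries ℝ :=
  taylorSeries t P * (taylorSeries t (Lagrange.nodal (Finset.range (n + 1)) poles))⁻¹ ^ a

/-- The coefficient of `(x + j) ^ (-p)` in the partial fraction decomposition of
`P / (x (x + 1) ⋯ (x + n)) ^ a`. -/
noncomputable def poleCoeff (P : ℝ[X]) (a n j p : ℕ) : ℝ :=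
  partialFractionCoeff (Finset.range (n + 1)) poles P a j (a - p)

variable {P : ℝ[X]} {a n : ℕ}

lemma sum_poleCoeff_one (hP : P.natDegree + 1 < a * (n + 1)) :
    ∑ j ∈ Finset.range (n + 1), poleCoeff P a n j 1 = 0 :=
  sum_partialFractionCoeff_sub_one injective_poles.injOn (by simpa using hP)

lemma coeff_quotientSeries (hP : P.natDegree < a * (n + 1)) {t : ℝ} (ht : 0 < t) (s : ℕ) :
    PowerSeries.coeff s (quotientSeries P a n t) =
      ∑ p ∈ Finset.Icc 1 a, (-1) ^ s * (p + s - 1).choose s *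
        ∑ j ∈ Finset.range (n + 1), poleCoeff P a n j p / (t + j) ^ (p + s) := by
  have avoids_poles : ∀ m ∈ Finset.range (n + 1), t ≠ poles m := fun m _ ↦ by
    have : poles m ≤ 0 := neg_nonpos.mpr m.cast_nonneg
    exact (this.trans_lt ht).ne'
  rw [quotientSeries, taylorSeries_mul_inv_eq_sum_partialFractionCoeff injective_poles.injOn
    (by simpa using hP) avoids_poles, Finset.sum_comm, map_sum]
  refine Finset.sum_nbij' (a - ·) (a - ·) ?_ ?_ ?_ ?_ fun k hk ↦ ?_
  any_goals
    simp only [Finset.mem_range, Finset.mem_Icc]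
    omega
  have hk := Finset.mem_range.mp hk
  obtain ⟨d, hd⟩ := Nat.exists_eq_add_one.mpr (Nat.sub_pos_of_lt hk)
  rw [map_sum, Finset.mul_sum]
  refine Finset.sum_congr rfl fun j _ ↦ ?_
  have : t - poles j = t + j := sub_neg_eq_add _ _
  rw [PowerSeries.coeff_C_mul, this, poleCoeff, Nat.sub_sub_self hk.le, hd,
    coeff_linearSeries_inv_pow_succ (by positivity), show d + 1 + s - 1 = d + s by omega]
  ring

theorem hasSum_coeff_quotientSeries (hP : P.natDegree + 1 < a * (n + 1)) (s : ℕ) :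
    HasSum (fun t : ℕ ↦ PowerSeries.coeff s (quotientSeries P a n (t + 1)))
      (∑ p ∈ Finset.Icc 1 a, (-1) ^ s * (p + s - 1).choose s *
        ∑ j ∈ Finset.range (n + 1), poleCoeff P a n j p *
          (zeta (p + s) - zetaPartialSum j (p + s))) := by
  simp_rw [fun t : ℕ ↦ coeff_quotientSeries (by omega : P.natDegree < a * (n + 1))
    (by positivity : (0 : ℝ) < t + 1) s]
  refine hasSum_sum fun p hp ↦ (hasSum_sum_div_add_pow _ _ ?_ ?_).mul_left _ <;>
    have hp := (Finset.mem_Icc.mp hp).1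
  · omega
  · rcases hp.eq_or_lt with rfl | hp
    · exact .inr (sum_poleCoeff_one hP)
    · exact .inl (by omega)

end ZetaSums

section Numerator

open Polynomial

/-- The polynomial `X (X + 1) ⋯ (X + n - 1) / n!`, which takes integer values at integers. -/
noncomputable def risingBinomial (n : ℕ) : ℝ[X] :=
  C (1 / (n.factorial : ℝ)) * ∏ i ∈ Finset.range n, (X + C (i : ℝ))

/-- The end point `c` of the `q`-th block `c - n + 1, …, c` of integers; the blocks with `q < 2 r`
tile the interval from `1` to `2 r n + 1` with the exception of its midpoint `r n + 1`. -/
def blockEnd (n r q : ℕ) : ℕ := (q + 1) * n + if q < r then 0 else 1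

/-- A polynomial vanishing at the integers from `1` to `2 r n + 1` except at their midpoint
`r n + 1`, normalised by a power of `n!` and, for even `n`, invariant under `x ↦ -n - x`. -/
noncomputable def blockProduct (n r : ℕ) : ℝ[X] :=
  ∏ q ∈ Finset.range (2 * r), taylor (-(blockEnd n r q : ℝ)) (risingBinomial n) *
    taylor (1 + blockEnd n r q : ℝ) (risingBinomial n)

/-- The factor of `x ↦ (x - (r n + 1)) (x + n + r n + 1)` left out of `blockProduct`. -/
noncomputable def middleFactor (n r : ℕ) : ℝ[X] :=
  (X + C (-(r * n + 1 : ℝ))) * (X + C (n + (r * n + 1) : ℝ))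

/-- The numerator of the `b`-th auxiliary rational function; the denominator is
`(x (x + 1) ⋯ (x + n)) ^ a`. For `b = 0` it vanishes to order `3` at `1, …, 2 r n + 1` except at
`r n + 1`, where it does not vanish; for `b = 1` it also vanishes to order `2` there. -/
noncomputable def numerator (a n r b : ℕ) : ℝ[X] :=
  C ((n.factorial : ℝ) ^ a) * blockProduct n r ^ 3 * (middleFactor n r ^ 2) ^ b

lemma taylorSeries_risingBinomial (t : ℝ) (n : ℕ) : taylorSeries t (risingBinomial n) =
    PowerSeries.C (1 / (n.factorial : ℝ)) * ∏ i ∈ Finset.range n, linearSeries (t + i) := by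
  simp only [risingBinomial, map_mul, map_prod, taylorSeries_C, taylorSeries_X_add_C]

lemma taylorSeries_blockProduct (t : ℝ) (n r : ℕ) : taylorSeries t (blockProduct n r) =
    ∏ q ∈ Finset.range (2 * r), taylorSeries (t + -(blockEnd n r q : ℝ)) (risingBinomial n) *
      taylorSeries (t + (1 + blockEnd n r q)) (risingBinomial n) := by
  simp only [blockProduct, map_prod, map_mul, taylorSeries_taylor]

lemma taylorSeries_middleFactor (t : ℝ) (n r : ℕ) : taylorSeries t (middleFactor n r) =
    linearSeries (t + -(r * n + 1)) * linearSeries (t + (n + (r * n + 1))) := by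
  simp only [middleFactor, map_mul, taylorSeries_X_add_C]

lemma taylorSeries_numerator (t : ℝ) (a n r b : ℕ) : taylorSeries t (numerator a n r b) =
    PowerSeries.C (n.factorial : ℝ) ^ a *
      (taylorSeries t (blockProduct n r) ^ 3 * (taylorSeries t (middleFactor n r) ^ 2) ^ b) := by
  simp only [numerator, map_mul, map_pow, taylorSeries_C, mul_assoc]

lemma natDegree_risingBinomial_le (n : ℕ) : (risingBinomial n).natDegree ≤ n := by
  refine (natDegree_C_mul_le _ _).trans ?_
  rw [natDegree_prod_of_monic _ _ fun m _ ↦ monic_X_add_C _]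
  simp only [natDegree_X_add_C, Finset.sum_const, Finset.card_range, smul_eq_mul, mul_one, le_refl]

lemma natDegree_blockProduct_le (n r : ℕ) : (blockProduct n r).natDegree ≤ 4 * r * n := by
  calc (blockProduct n r).natDegree
      ≤ ∑ _ ∈ Finset.range (2 * r), (n + n) := by
        refine (natDegree_prod_le _ _).trans (Finset.sum_le_sum fun q _ ↦ ?_)
        refine natDegree_mul_le.trans ?_
        rw [natDegree_taylor, natDegree_taylor]
        exact add_le_add (natDegree_risingBinomial_le n) (natDegree_risingBinomial_le n)
    _ = 4 * r * n := by
        rw [Finset.sum_const, Finset.card_range, smul_eq_mul]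
        ring

lemma natDegree_middleFactor (n r : ℕ) : (middleFactor n r).natDegree = 2 := by
  rw [middleFactor, (monic_X_add_C _).natDegree_mul (monic_X_add_C _), natDegree_X_add_C,
    natDegree_X_add_C]

lemma natDegree_numerator_le (a n r b : ℕ) :
    (numerator a n r b).natDegree ≤ 12 * r * n + 4 * b := by
  refine natDegree_mul_le.trans (add_le_add ?_ ?_)
  · refine (natDegree_C_mul_le _ _).trans ?_
    rw [natDegree_pow]
    linarith [natDegree_blockProduct_le n r]
  · rw [natDegree_pow, natDegree_pow, natDegree_middleFactor]
    omega

end Numerator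

section Cofactor

open PowerSeries

lemma inv_prod_powerSeries {K ι : Type*} [Field K] (s : Finset ι) (f : ι → K⟦X⟧) :
    (∏ i ∈ s, f i)⁻¹ = ∏ i ∈ s, (f i)⁻¹ := by
  classical
  induction s using Finset.induction_on with
  | empty => simp
  | insert i s hi ih =>
    rw [Finset.prod_insert hi, Finset.prod_insert hi, PowerSeries.mul_inv_rev, ih, mul_comm]

/-- The expansion of `n! / ∏ m ≠ j, (x + m)` around the pole `-j`. -/
noncomputable def cofactorSeries (n j : ℕ) : ℝ⟦X⟧ :=
  C (n.factorial : ℝ) *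
    (taylorSeries (poles j) (Lagrange.nodal ((Finset.range (n + 1)).erase j) poles))⁻¹

lemma cofactorSeries_eq_prod (n j : ℕ) : cofactorSeries n j =
    C (n.factorial : ℝ) *
      ∏ m ∈ (Finset.range (n + 1)).erase j, (linearSeries ((m : ℝ) - j))⁻¹ := by
  rw [cofactorSeries, taylorSeries_nodal, inv_prod_powerSeries]
  simp only [poles, neg_sub_neg]

lemma poleCoeff_numerator (a n r b j p : ℕ) : poleCoeff (numerator a n r b) a n j p =
    coeff (a - p) (cofactorSeries n j ^ a * (taylorSeries (poles j) (blockProduct n r) ^ 3 *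
      (taylorSeries (poles j) (middleFactor n r) ^ 2) ^ b)) := by
  rw [poleCoeff, partialFractionCoeff, taylorSeries_numerator, cofactorSeries, mul_pow]
  congr 1
  ring

lemma prod_range_erase_sub {M : Type*} [CommMonoid M] (f : ℝ → M) {n j : ℕ} (hj : j ≤ n) :
    ∏ m ∈ (Finset.range (n + 1)).erase j, f ((m : ℝ) - j) =
      (∏ i ∈ Finset.range j, f (-((i : ℝ) + 1))) *
        ∏ i ∈ Finset.range (n - j), f ((i : ℝ) + 1) := by
  have split : (Finset.range (n + 1)).erase j =
      (Finset.range j).disjUnion (Finset.Ico (j + 1) (n + 1))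
        (Finset.disjoint_left.mpr fun x hx hx' ↦ by
          simp only [Finset.mem_range, Finset.mem_Ico] at hx hx'; omega) := by
    ext x
    simp only [Finset.mem_erase, Finset.mem_range, Finset.mem_disjUnion, Finset.mem_Ico]
    omega
  rw [split, Finset.prod_disjUnion, Finset.prod_Ico_eq_prod_range, ← Finset.prod_range_reflect,
    Nat.add_sub_add_right]
  congr 1 <;> refine Finset.prod_congr rfl fun i hi ↦ congrArg f ?_
  · have hi := Finset.mem_range.mp hi
    rw [Nat.sub_sub, Nat.cast_sub (by omega)]
    push_cast
    ring
  · push_cast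
    ring

lemma factorial_mul_prod_range_erase_inv {n j : ℕ} (hj : j ≤ n) :
    (n.factorial : ℝ) * ∏ m ∈ (Finset.range (n + 1)).erase j, ((m : ℝ) - j)⁻¹ =
      (-1) ^ j * n.choose j := by
  have prod_add_one (k : ℕ) : ∏ i ∈ Finset.range k, ((i : ℝ) + 1) = k.factorial := by
    exact_mod_cast Finset.prod_range_add_one_eq_factorial k
  rw [Finset.prod_inv_distrib, prod_range_erase_sub (fun x ↦ x) hj, Finset.prod_neg,
    prod_add_one, prod_add_one, Finset.card_range, Nat.cast_choose ℝ hj, mul_inv, mul_inv,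
    ← inv_pow, inv_neg_one, div_eq_mul_inv, mul_inv]
  ring

end Cofactor

section Integrality

open PowerSeries

/-- The power series `f` over `ℝ` for which `f (d X)` has integer coefficients. -/
noncomputable def integralSubring (d : ℕ) : Subring ℝ⟦X⟧ :=
  (PowerSeries.map (Int.castRingHom ℝ)).range.comap (rescale (d : ℝ))

lemma mem_integralSubring {d : ℕ} {f : ℝ⟦X⟧} :
    f ∈ integralSubring d ↔ ∀ k, ∃ z : ℤ, (d : ℝ) ^ k * coeff k f = z := by
  rw [integralSubring, Subring.mem_comap, RingHom.mem_range]
  constructor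
  · rintro ⟨g, hg⟩ k
    exact ⟨coeff k g, by rw [← coeff_rescale, ← hg, coeff_map, eq_intCast]⟩
  · intro h
    choose z hz using h
    refine ⟨mk z, ?_⟩
    ext k
    rw [coeff_map, coeff_rescale, hz, coeff_mk, eq_intCast]

lemma C_intCast_mem_integralSubring (d : ℕ) (z : ℤ) : C (z : ℝ) ∈ integralSubring d := by
  rw [map_intCast]
  exact intCast_mem _ z

lemma C_inv_mul_X_mem_integralSubring {d m : ℕ} (hm : m ∣ d) :
    C (m : ℝ)⁻¹ * X ∈ integralSubring d := by
  refine mem_integralSubring.mpr fun k ↦ ?_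
  rw [coeff_C_mul, coeff_X]
  split_ifs with h
  · rcases Nat.eq_zero_or_pos m with rfl | hm₀
    · exact ⟨0, by simp⟩
    · refine ⟨(d / m : ℕ), ?_⟩
      rw [h, pow_one, mul_one, Int.cast_natCast, Nat.cast_div hm (by positivity), div_eq_mul_inv]
  · exact ⟨0, by simp⟩

lemma linearSeries_mem_integralSubring (d : ℕ) (z : ℤ) :
    linearSeries (z : ℝ) ∈ integralSubring d :=
  add_mem (by simpa using C_inv_mul_X_mem_integralSubring (one_dvd d))
    (C_intCast_mem_integralSubring d z)

lemma rescale_neg_inv_mem_integralSubring {d : ℕ} {z : ℤ} (hz : z ∣ d) (hz₀ : z ≠ 0) :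
    rescale (-(z : ℝ)⁻¹) (mk 1) ∈ integralSubring d := by
  refine mem_integralSubring.mpr fun k ↦ ?_
  obtain ⟨e, he⟩ := hz
  refine ⟨(-e) ^ k, ?_⟩
  have hd : (d : ℝ) = z * e := by exact_mod_cast he
  have hz₀ : (z : ℝ) ≠ 0 := by exact_mod_cast hz₀
  rw [coeff_rescale, coeff_mk, Pi.one_apply, mul_one, ← mul_pow, hd]
  push_cast
  congr 1
  field_simp

lemma taylorSeries_risingBinomial_succ_sub (m : ℕ) (t : ℝ) :
    taylorSeries (t + 1) (risingBinomial (m + 1)) - taylorSeries t (risingBinomial (m + 1)) =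
      taylorSeries (t + 1) (risingBinomial m) := by
  have shift : ∏ i ∈ Finset.range m, linearSeries (t + ((i + 1 : ℕ) : ℝ)) =
      ∏ i ∈ Finset.range m, linearSeries (t + 1 + i) :=
    Finset.prod_congr rfl fun i _ ↦ by congr 1; push_cast; ring
  have linear_sub : linearSeries (t + 1 + m) - linearSeries (t + (0 : ℕ)) = C ((m : ℝ) + 1) := by
    rw [linearSeries, linearSeries, add_sub_add_left_eq_sub, ← map_sub]
    congr 1
    push_cast
    ring
  have factorial_succ : C (1 / ((m + 1).factorial : ℝ)) * C ((m : ℝ) + 1) =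
      C (1 / (m.factorial : ℝ)) := by
    rw [← map_mul, Nat.factorial_succ]
    congr 1
    push_cast
    field_simp
  rw [taylorSeries_risingBinomial, taylorSeries_risingBinomial, taylorSeries_risingBinomial,
    Finset.prod_range_succ, Finset.prod_range_succ', shift, ← mul_sub, ← mul_sub, linear_sub,
    ← factorial_succ]
  ring

lemma taylorSeries_zero_risingBinomial_succ (m : ℕ) :
    taylorSeries 0 (risingBinomial (m + 1)) = C ((m + 1 : ℕ) : ℝ)⁻¹ * X *
      ∏ i ∈ Finset.range m, (C ((i + 1 : ℕ) : ℝ)⁻¹ * X + 1) := by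
  have factor (i : ℕ) : C ((i + 1 : ℕ) : ℝ)⁻¹ * X + 1 =
      C ((i + 1 : ℕ) : ℝ)⁻¹ * linearSeries (0 + ((i + 1 : ℕ) : ℝ)) := by
    rw [linearSeries, mul_add, ← map_mul, zero_add, inv_mul_cancel₀ (by positivity), map_one]
  have factorial_inv : ((m + 1).factorial : ℝ)⁻¹ =
      ((m + 1 : ℕ) : ℝ)⁻¹ * ∏ i ∈ Finset.range m, ((i + 1 : ℕ) : ℝ)⁻¹ := by
    rw [Finset.prod_inv_distrib, ← Nat.cast_prod, Finset.prod_range_add_one_eq_factorial,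
      Nat.factorial_succ, Nat.cast_mul, mul_inv]
  have linear_zero : linearSeries (0 + ((0 : ℕ) : ℝ)) = X := by simp [linearSeries]
  simp_rw [factor]
  rw [Finset.prod_mul_distrib, ← map_prod, taylorSeries_risingBinomial, Finset.prod_range_succ',
    linear_zero, one_div, factorial_inv, map_mul]
  ring

lemma taylorSeries_risingBinomial_mem_integralSubring {d m : ℕ}
    (hd : ∀ i, 1 ≤ i → i ≤ m → i ∣ d) (c : ℤ) :
    taylorSeries (c : ℝ) (risingBinomial m) ∈ integralSubring d := by
  induction m generalizing c with
  | zero => simp [taylorSeries_risingBinomial]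
  | succ m ih =>
    have step (c : ℤ) := taylorSeries_risingBinomial_succ_sub m c
    have difference_mem (c : ℤ) := ih (fun i h₁ h₂ ↦ hd i h₁ (by omega)) (c + 1)
    push_cast at difference_mem
    simp_rw [← step] at difference_mem
    induction c using Int.induction_on with
    | zero =>
      rw [Int.cast_zero, taylorSeries_zero_risingBinomial_succ]
      refine mul_mem (C_inv_mul_X_mem_integralSubring (hd _ (by omega) le_rfl))
        (prod_mem fun i hi ↦ add_mem (C_inv_mul_X_mem_integralSubring (hd _ (by omega) ?_))
          (one_mem _))
      exact Nat.succ_le_succ (Finset.mem_range.mp hi).le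
    | succ c ihc =>
      have := add_mem (difference_mem c) ihc
      push_cast at this ⊢
      rwa [sub_add_cancel] at this
    | pred c ihc =>
      have := sub_mem ihc (difference_mem (-c - 1))
      push_cast at this ⊢
      rwa [sub_add_cancel, sub_sub_cancel] at this

lemma cofactorSeries_mem_integralSubring {d n j : ℕ} (hj : j ≤ n)
    (hd : ∀ i, 1 ≤ i → i ≤ n → i ∣ d) : cofactorSeries n j ∈ integralSubring d := by
  have expansion : cofactorSeries n j = C (((-1) ^ j * n.choose j : ℤ) : ℝ) *
      ∏ m ∈ (Finset.range (n + 1)).erase j, rescale (-((m : ℝ) - j)⁻¹) (mk 1) := by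
    push_cast
    rw [← factorial_mul_prod_range_erase_inv hj, map_mul, map_prod, mul_assoc,
      ← Finset.prod_mul_distrib, cofactorSeries_eq_prod]
    congr 1
    refine Finset.prod_congr rfl fun m hm ↦ linearSeries_inv (sub_ne_zero.mpr ?_)
    exact_mod_cast Finset.ne_of_mem_erase hm
  rw [expansion]
  refine mul_mem (C_intCast_mem_integralSubring d _) (prod_mem fun m hm ↦ ?_)
  have hmj := Finset.ne_of_mem_erase hm
  have hmn := Finset.mem_range.mp (Finset.mem_of_mem_erase hm)
  have sub_dvd : (m : ℤ) - j ∣ d := by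
    rw [← Int.natAbs_dvd]
    exact Int.natCast_dvd_natCast.mpr (hd _ (by omega) (by omega))
  simpa using rescale_neg_inv_mem_integralSubring sub_dvd (by omega)

theorem exists_int_pow_mul_poleCoeff {d n j : ℕ} (hj : j ≤ n)
    (hd : ∀ i, 1 ≤ i → i ≤ n → i ∣ d) (a r b p : ℕ) :
    ∃ z : ℤ, (d : ℝ) ^ (a - p) * poleCoeff (numerator a n r b) a n j p = z := by
  have rising_mem (c : ℤ) :
      taylorSeries (poles j + c) (risingBinomial n) ∈ integralSubring d := by
    simpa [poles] using taylorSeries_risingBinomial_mem_integralSubring hd (-j + c)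
  have linear_mem (c : ℤ) : linearSeries (poles j + c) ∈ integralSubring d := by
    simpa [poles] using linearSeries_mem_integralSubring d (-j + c)
  have blocks_mem : taylorSeries (poles j) (blockProduct n r) ∈ integralSubring d := by
    rw [taylorSeries_blockProduct]
    refine prod_mem fun q _ ↦ mul_mem ?_ ?_
    · simpa using rising_mem (-blockEnd n r q)
    · simpa using rising_mem (1 + blockEnd n r q)
  have middle_mem : taylorSeries (poles j) (middleFactor n r) ∈ integralSubring d := by
    rw [taylorSeries_middleFactor]
    refine mul_mem ?_ ?_
    · simpa using linear_mem (-(r * n + 1))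
    · simpa using linear_mem (n + (r * n + 1))
  rw [poleCoeff_numerator]
  exact mem_integralSubring.mp (mul_mem (pow_mem (cofactorSeries_mem_integralSubring hj hd) a)
    (mul_mem (pow_mem blocks_mem 3) (pow_mem (pow_mem middle_mem 2) b))) _

end Integrality

section Reflection

open Polynomial

lemma rescale_neg_one_taylorSeries {R : Type*} [CommRing R] (t c : R) (p : R[X]) :
    PowerSeries.rescale (-1) (taylorSeries t p) = taylorSeries (c - t) (p.comp (C c - X)) := by
  have rescale_C (b : R) : PowerSeries.rescale (-1) (PowerSeries.C b) = PowerSeries.C b := by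
    ext k
    rcases k with _ | k <;> simp [PowerSeries.coeff_C]
  suffices (PowerSeries.rescale (-1)).comp (taylorSeries t) =
      (taylorSeries (c - t)).comp (compRingHom (C c - X)) from RingHom.congr_fun this p
  refine ringHom_ext (fun b ↦ ?_) ?_
  · simp [rescale_C]
  · simp only [RingHom.comp_apply, coe_compRingHom_apply, X_comp, taylorSeries_apply, taylor_X,
      map_sub, taylor_C, coe_add, coe_sub, coe_C, coe_X, map_add, rescale_C,
      PowerSeries.rescale_X, map_neg, map_one]
    ring

lemma rescale_inv_powerSeries {K : Type*} [Field K] (c : K) (f : PowerSeries K) :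
    PowerSeries.rescale c f⁻¹ = (PowerSeries.rescale c f)⁻¹ := by
  have constantCoeff_rescale : PowerSeries.constantCoeff (PowerSeries.rescale c f) =
      PowerSeries.constantCoeff f := by
    rw [← PowerSeries.coeff_zero_eq_constantCoeff_apply, PowerSeries.coeff_rescale, pow_zero,
      one_mul, PowerSeries.coeff_zero_eq_constantCoeff_apply]
  by_cases hf : PowerSeries.constantCoeff f = 0
  · rw [PowerSeries.inv_eq_zero.mpr hf,
      PowerSeries.inv_eq_zero.mpr (constantCoeff_rescale.trans hf), map_zero]
  · rw [PowerSeries.eq_inv_iff_mul_eq_one (constantCoeff_rescale ▸ hf), ← map_mul,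
      PowerSeries.inv_mul_cancel f hf, map_one]

lemma nodal_poles_erase_comp {n j : ℕ} (hn : Even n) (hj : j ≤ n) :
    (Lagrange.nodal ((Finset.range (n + 1)).erase j) poles).comp (C (-n : ℝ) - X) =
      Lagrange.nodal ((Finset.range (n + 1)).erase (n - j)) poles := by
  have factor : ∀ m ∈ (Finset.range (n + 1)).erase j,
      (X - C (poles m)).comp (C (-n : ℝ) - X) = -(X - C (poles (n - m))) := fun m hm ↦ by
    have hm := Finset.mem_range.mp (Finset.mem_of_mem_erase hm)
    rw [sub_comp, X_comp, C_comp, poles, poles, Nat.cast_sub (Nat.le_of_lt_succ hm)]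
    simp only [map_neg, map_sub]
    ring
  rw [Lagrange.nodal_eq, prod_comp, Finset.prod_congr rfl factor, Finset.prod_neg,
    Finset.card_erase_of_mem (Finset.mem_range.mpr (by omega)), Finset.card_range,
    Nat.add_sub_cancel, hn.neg_one_pow, one_mul, Lagrange.nodal_eq]
  refine Finset.prod_nbij' (n - ·) (n - ·) ?_ ?_ ?_ ?_ fun _ _ ↦ rfl <;>
    simp only [Finset.mem_erase, Finset.mem_range] <;> omega

lemma poleCoeff_reflect {P : ℝ[X]} {n : ℕ} (hP : P.comp (C (-n : ℝ) - X) = P) (hn : Even n)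
    {j : ℕ} (hj : j ≤ n) (a p : ℕ) :
    poleCoeff P a n (n - j) p = (-1) ^ (a - p) * poleCoeff P a n j p := by
  have reflect_pole : poles (n - j) = -n - poles j := by
    simp only [poles, Nat.cast_sub hj]
    ring
  rw [poleCoeff, poleCoeff, partialFractionCoeff, partialFractionCoeff, reflect_pole,
    ← nodal_poles_erase_comp hn hj]
  conv_lhs => rw [← hP]
  rw [← rescale_neg_one_taylorSeries, ← rescale_neg_one_taylorSeries, ← rescale_inv_powerSeries,
    ← map_pow, ← map_mul, PowerSeries.coeff_rescale]

lemma sum_poleCoeff_eq_zero {P : ℝ[X]} {n : ℕ} (hP : P.comp (C (-n : ℝ) - X) = P) (hn : Even n)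
    {a p : ℕ} (hp : Odd (a - p)) : ∑ j ∈ Finset.range (n + 1), poleCoeff P a n j p = 0 := by
  rw [← self_eq_neg, ← Finset.sum_neg_distrib, ← Finset.sum_range_reflect]
  refine Finset.sum_congr rfl fun j hj ↦ ?_
  rw [Nat.add_sub_cancel,
    poleCoeff_reflect hP hn (Nat.le_of_lt_succ (Finset.mem_range.mp hj)), hp.neg_one_pow,
    neg_one_mul]

lemma taylor_risingBinomial_comp {n : ℕ} (hn : Even n) (c : ℝ) :
    (taylor c (risingBinomial n)).comp (C (-n : ℝ) - X) = taylor (1 - c) (risingBinomial n) := by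
  have factor (i : ℕ) : (X + C (i : ℝ)).comp (X + C c) = X + C (c + i) := by
    simp only [add_comp, X_comp, C_comp, add_assoc, map_add]
  have factor' (i : ℕ) : (X + C (i : ℝ)).comp (X + C (1 - c)) = X + C (1 - c + i) := by
    simp only [add_comp, X_comp, C_comp, add_assoc, map_add]
  have reflected : ∀ i ∈ Finset.range n, (X + C (c + (n - 1 - i : ℕ))).comp (C (-n : ℝ) - X) =
      -(X + C (1 - c + i)) := fun i hi ↦ by
    have hi := Finset.mem_range.mp hi
    have : ((n - 1 - i : ℕ) : ℝ) = n - 1 - i := by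
      rw [Nat.sub_sub, Nat.cast_sub (by omega)]
      push_cast
      ring
    rw [add_comp, X_comp, C_comp, this]
    simp only [map_neg, map_add, map_sub]
    ring
  simp only [taylor_apply, risingBinomial, mul_comp, C_comp, prod_comp, factor, factor']
  congr 1
  rw [← Finset.prod_range_reflect, Finset.prod_congr rfl reflected, Finset.prod_neg,
    Finset.card_range, hn.neg_one_pow, one_mul]

lemma numerator_comp {n : ℕ} (hn : Even n) (a r b : ℕ) :
    (numerator a n r b).comp (C (-n : ℝ) - X) = numerator a n r b := by
  have blocks : (blockProduct n r).comp (C (-n : ℝ) - X) = blockProduct n r := by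
    simp only [blockProduct, prod_comp, mul_comp, taylor_risingBinomial_comp hn, sub_neg_eq_add,
      sub_add_cancel_left]
    exact Finset.prod_congr rfl fun _ _ ↦ mul_comm _ _
  have middle : (middleFactor n r).comp (C (-n : ℝ) - X) = middleFactor n r := by
    simp only [middleFactor, mul_comp, add_comp, X_comp, C_comp]
    simp only [map_neg, map_add]
    ring
  simp only [numerator, mul_comp, pow_comp, C_comp, blocks, middle]

end Reflection

section Size

open Real PowerSeries

lemma div_exp_one_pow_le_factorial (n : ℕ) : ((n : ℝ) / exp 1) ^ n ≤ n.factorial := by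
  have h := pow_div_factorial_le_exp (n : ℝ) n.cast_nonneg n
  rw [div_le_iff₀ (by positivity)] at h
  rwa [div_pow, div_le_iff₀ (by positivity), ← exp_nat_mul, mul_one, mul_comm]

lemma prod_one_div_sub_half_le {x : ℝ} (hx : 1 ≤ x) (N : ℕ) :
    ∏ m ∈ Finset.range N, 1 / (x + m - 1 / 2) ≤
      (1 + N / x) * (∏ m ∈ Finset.range N, (x + m))⁻¹ := by
  induction N with
  | zero => simp
  | succ N ih =>
    have half : 0 < x + N - 1 / 2 := by linarith [N.cast_nonneg (α := ℝ)]
    have ratio : 1 / (x + N - 1 / 2) ≤ (x + (N + 1)) / (x + N) * (x + N)⁻¹ := by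
      rw [← div_eq_mul_inv, div_div, div_le_div_iff₀ half (by positivity)]
      nlinarith
    rw [Finset.prod_range_succ, Finset.prod_range_succ]
    calc (∏ m ∈ Finset.range N, 1 / (x + m - 1 / 2)) * (1 / (x + N - 1 / 2))
        ≤ ((1 + N / x) * (∏ m ∈ Finset.range N, (x + m))⁻¹) *
            ((x + (N + 1)) / (x + N) * (x + N)⁻¹) :=
          mul_le_mul ih ratio (by positivity)
            (mul_nonneg (by positivity)
              (inv_nonneg.mpr (Finset.prod_nonneg fun m _ ↦ by positivity)))
      _ = _ := by
          push_cast
          field_simp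

lemma WeightedNormLE.taylorSeries_risingBinomial {n : ℕ} {t M : ℝ} (hM : 0 ≤ M)
    (h : ∀ i < n, |t + i| + 1 / 2 ≤ M * n) :
    WeightedNormLE (taylorSeries t (risingBinomial n)) ((M * exp 1) ^ n) := by
  rw [_root_.taylorSeries_risingBinomial]
  refine ((const _).mul <| prod _ fun i hi ↦
    (WeightedNormLE.linearSeries _).mono (h i (Finset.mem_range.mp hi))).mono ?_
  have split : M * n = M * exp 1 * (n / exp 1) := by field_simp
  rw [Finset.prod_const, Finset.card_range, abs_of_pos (by positivity), one_div_mul_eq_div,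
    div_le_iff₀ (by positivity), split, mul_pow]
  gcongr
  exact div_exp_one_pow_le_factorial n

lemma WeightedNormLE.taylorSeries_blockProduct {n r : ℕ} {t M : ℝ}
    (hM : |t| + (2 * r + 1) * n + 2 ≤ M * n) :
    WeightedNormLE (taylorSeries t (blockProduct n r)) ((M * exp 1) ^ (4 * r * n)) := by
  have hn : (0 : ℝ) < n := n.cast_nonneg.lt_of_ne fun h ↦ by
    rw [← h] at hM
    linarith [abs_nonneg t]
  have hM₀ : 0 ≤ M := by
    refine nonneg_of_mul_nonneg_left (le_trans ?_ hM) hn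
    positivity
  have shifted (c : ℝ) (hc : |c| ≤ 2 * r * n + 2) :
      WeightedNormLE (taylorSeries (t + c) (risingBinomial n)) ((M * exp 1) ^ n) := by
    refine WeightedNormLE.taylorSeries_risingBinomial hM₀ fun i hi ↦ ?_
    have hi : (i : ℝ) + 1 ≤ n := by exact_mod_cast hi
    linarith [abs_add_three t c i, Nat.abs_cast (R := ℝ) i]
  have blockEnd_le (q : ℕ) (hq : q ∈ Finset.range (2 * r)) :
      (blockEnd n r q : ℝ) ≤ 2 * r * n + 1 := by
    have : (q + 1) * n ≤ 2 * r * n := Nat.mul_le_mul_right n (Finset.mem_range.mp hq)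
    rw [blockEnd]
    split_ifs <;> norm_cast <;> omega
  have exponent : (M * exp 1) ^ (4 * r * n) =
      ∏ _q ∈ Finset.range (2 * r), (M * exp 1) ^ n * (M * exp 1) ^ n := by
    rw [Finset.prod_const, Finset.card_range]
    ring
  rw [_root_.taylorSeries_blockProduct, exponent]
  refine WeightedNormLE.prod _ fun q hq ↦ (shifted _ ?_).mul (shifted _ ?_)
  · rw [abs_neg, Nat.abs_cast]
    linarith [blockEnd_le q hq]
  · rw [abs_of_nonneg (by positivity)]
    linarith [blockEnd_le q hq]

lemma WeightedNormLE.taylorSeries_middleFactor {n r : ℕ} {t M : ℝ}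
    (hM : |t| + (2 * r + 1) * n + 2 ≤ M * n) :
    WeightedNormLE (taylorSeries t (middleFactor n r)) ((M * n) ^ 2) := by
  have hrn : (0 : ℝ) ≤ r * n := by positivity
  rw [_root_.taylorSeries_middleFactor, pow_two]
  refine ((WeightedNormLE.linearSeries _).mono ?_).mul ((WeightedNormLE.linearSeries _).mono ?_)
  · have h := abs_add_le t (-(r * n + 1))
    rw [abs_neg, abs_of_pos (by positivity : (0 : ℝ) < r * n + 1)] at h
    linarith
  · have h := abs_add_le t (n + (r * n + 1))
    rw [abs_of_pos (by positivity : (0 : ℝ) < n + (r * n + 1))] at h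
    linarith

/-- Bounds the expansions of `numerator a n r b / n! ^ a` for `b ≤ 1` around points of
`[-n, 3 r n]`. -/
noncomputable def numeratorBound (n r : ℕ) : ℝ :=
  (3 * (r + 2) * exp 1) ^ (12 * r * n) * (3 * (r + 2) * n) ^ 4

lemma numeratorBound_nonneg (n r : ℕ) : 0 ≤ numeratorBound n r := by
  rw [numeratorBound]
  positivity

lemma WeightedNormLE.blockProduct_mul_middleFactor {n r b : ℕ} {t τ : ℝ} (hn : 1 ≤ n)
    (hb : b ≤ 1) (hτ : 1 ≤ τ) (ht : |t| + (2 * r + 1) * n + 2 ≤ 3 * (r + 2) * τ * n) :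
    WeightedNormLE
      (taylorSeries t (blockProduct n r) ^ 3 * (taylorSeries t (middleFactor n r) ^ 2) ^ b)
      (τ ^ (12 * r * n + 4) * numeratorBound n r) := by
  refine (((taylorSeries_blockProduct ht).pow 3).mul
    (((taylorSeries_middleFactor ht).pow 2).pow b)).mono ?_
  have one_le : 1 ≤ 3 * (r + 2) * τ * n := by
    have hn : (1 : ℝ) ≤ n := by exact_mod_cast hn
    have : (0 : ℝ) ≤ r * n := by positivity
    linarith [abs_nonneg t]
  calc ((3 * (r + 2) * τ * exp 1) ^ (4 * r * n)) ^ 3 * (((3 * (r + 2) * τ * n) ^ 2) ^ 2) ^ b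
      ≤ ((3 * (r + 2) * τ * exp 1) ^ (4 * r * n)) ^ 3 * (((3 * (r + 2) * τ * n) ^ 2) ^ 2) ^ 1 := by
        gcongr
        exact one_le_pow₀ (one_le_pow₀ one_le)
    _ = τ ^ (12 * r * n + 4) * numeratorBound n r := by
        have regroup : 3 * (r + 2) * τ * exp 1 = τ * (3 * (r + 2) * exp 1) := by ring
        rw [numeratorBound, regroup, mul_pow, mul_pow]
        ring

lemma WeightedNormLE.cofactorSeries {n j : ℕ} (hj : j ≤ n) :
    WeightedNormLE (cofactorSeries n j) (2 ^ n * (n + 1) ^ 2) := by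
  have prod_le (k : ℕ) : ∏ i ∈ Finset.range k, 1 / (((i : ℝ) + 1) - 1 / 2) ≤
      (k + 1) / k.factorial := by
    refine (Finset.prod_congr rfl fun i _ ↦ by ring).trans_le <|
      (prod_one_div_sub_half_le le_rfl k).trans_eq ?_
    rw [← Finset.prod_range_add_one_eq_factorial]
    push_cast
    rw [div_one, add_comm, div_eq_mul_inv]
    simp only [add_comm]
  have prod_nonneg (k : ℕ) : 0 ≤ ∏ i ∈ Finset.range k, 1 / (((i : ℝ) + 1) - 1 / 2) :=
    Finset.prod_nonneg fun i _ ↦ one_div_nonneg.mpr (by linarith [i.cast_nonneg (α := ℝ)])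
  have one_le_abs (m : ℕ) (hm : m ∈ (Finset.range (n + 1)).erase j) : 1 ≤ |(m : ℝ) - j| := by
    have := Int.one_le_abs (sub_ne_zero.mpr (Nat.cast_injective.ne (Finset.ne_of_mem_erase hm) :
      (m : ℤ) ≠ j))
    exact_mod_cast this
  rw [cofactorSeries_eq_prod]
  refine ((const _).mul (prod _ fun m hm ↦ linearSeries_inv (one_le_abs m hm))).mono ?_
  rw [prod_range_erase_sub (fun x ↦ 1 / (|x| - 1 / 2)) hj, Nat.abs_cast]
  have abs_succ (i : ℕ) : |(i : ℝ) + 1| = i + 1 := abs_of_pos (by positivity)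
  simp only [abs_neg, abs_succ]
  calc (n.factorial : ℝ) * ((∏ i ∈ Finset.range j, 1 / (((i : ℝ) + 1) - 1 / 2)) *
        ∏ i ∈ Finset.range (n - j), 1 / (((i : ℝ) + 1) - 1 / 2))
      ≤ n.factorial * ((j + 1) / j.factorial * (((n - j : ℕ) + 1) / (n - j).factorial)) := by
        gcongr
        · exact prod_nonneg _
        · exact prod_le _
        · exact prod_le _
    _ = n.choose j * ((j + 1) * ((n - j : ℕ) + 1)) := by
        rw [Nat.cast_choose ℝ hj]
        ring
    _ ≤ 2 ^ n * ((n + 1) * (n + 1)) := by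
        gcongr
        · exact_mod_cast Nat.choose_le_two_pow n j
        · exact n.sub_le j
    _ = 2 ^ n * (n + 1) ^ 2 := by ring

/-- Bounds the coefficients of partial fractions of `numerator a n r b` with `b ≤ 1`. -/
noncomputable def poleCoeffBound (a n r : ℕ) : ℝ :=
  2 ^ a * ((2 ^ n * (n + 1) ^ 2) ^ a * numeratorBound n r)

lemma abs_poleCoeff_numerator_le (a : ℕ) {n b j : ℕ} (r p : ℕ) (hn : 1 ≤ n) (hb : b ≤ 1)
    (hj : j ≤ n) : |poleCoeff (numerator a n r b) a n j p| ≤ poleCoeffBound a n r := by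
  have hn₁ : (1 : ℝ) ≤ n := by exact_mod_cast hn
  have hj₁ : (j : ℝ) ≤ n := by exact_mod_cast hj
  have hrn : (0 : ℝ) ≤ r * n := by positivity
  have bound := WeightedNormLE.blockProduct_mul_middleFactor (r := r) (t := poles j) hn hb le_rfl
    (by rw [poles, abs_neg, Nat.abs_cast]; linarith)
  rw [one_pow, one_mul] at bound
  rw [poleCoeff_numerator, poleCoeffBound]
  refine ((((WeightedNormLE.cofactorSeries hj).pow a).mul bound).abs_coeff_le _).trans ?_
  have := numeratorBound_nonneg n r
  gcongr
  · norm_num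
  · exact a.sub_le p

end Size

section Middle

open PowerSeries

lemma quotientSeries_numerator (a n r b : ℕ) (t : ℝ) :
    quotientSeries (numerator a n r b) a n t =
      taylorSeries t (blockProduct n r) ^ 3 * (taylorSeries t (middleFactor n r) ^ 2) ^ b *
        (C (n.factorial : ℝ) * ∏ m ∈ Finset.range (n + 1), (linearSeries (t + m))⁻¹) ^ a := by
  rw [quotientSeries, taylorSeries_numerator, taylorSeries_nodal, inv_prod_powerSeries]
  simp only [poles, sub_neg_eq_add]
  ring

lemma abs_constantCoeff_taylorSeries_risingBinomial (t : ℝ) (n : ℕ) :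
    |constantCoeff (taylorSeries t (risingBinomial n))| =
      (∏ i ∈ Finset.range n, |t + i|) / n.factorial := by
  rw [taylorSeries_risingBinomial, map_mul, map_prod, constantCoeff_C, abs_mul,
    Finset.abs_prod, abs_of_pos (by positivity), one_div_mul_eq_div]
  simp only [constantCoeff_linearSeries]

lemma one_le_abs_constantCoeff_risingBinomial {t : ℝ} {n : ℕ} (ht : 1 ≤ t ∨ t ≤ -n) :
    1 ≤ |constantCoeff (taylorSeries t (risingBinomial n))| := by
  rw [abs_constantCoeff_taylorSeries_risingBinomial, one_le_div (by positivity),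
    ← Finset.prod_range_add_one_eq_factorial]
  push_cast
  rcases ht with ht | ht
  · gcongr with i
    exact le_abs.mpr (.inl (by linarith))
  · rw [← Finset.prod_range_reflect]
    gcongr with i hi
    have reflect : ((n - 1 - i : ℕ) : ℝ) + 1 + i = n := by
      have := Finset.mem_range.mp hi
      norm_cast
      omega
    exact le_abs.mpr (.inr (by linarith))

lemma one_le_abs_constantCoeff_blockProduct (n r : ℕ) :
    1 ≤ |constantCoeff (taylorSeries (r * n + 1 : ℝ) (blockProduct n r))| := by
  rw [taylorSeries_blockProduct, map_prod, Finset.abs_prod]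
  refine Finset.one_le_prod fun q _ ↦ ?_
  rw [map_mul, abs_mul]
  refine one_le_mul_of_one_le_of_one_le (one_le_abs_constantCoeff_risingBinomial ?_)
    (one_le_abs_constantCoeff_risingBinomial (.inl ?_))
  · by_cases hq : q < r
    · have : (q + 1) * n ≤ r * n := Nat.mul_le_mul_right n hq
      left
      rw [blockEnd, if_pos hq]
      have : (((q + 1) * n : ℕ) : ℝ) ≤ (r * n : ℕ) := by exact_mod_cast this
      push_cast at this ⊢
      linarith
    · have : (r + 1) * n ≤ (q + 1) * n := Nat.mul_le_mul_right n (by omega)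
      right
      rw [blockEnd, if_neg hq]
      have : (((r + 1) * n : ℕ) : ℝ) ≤ ((q + 1) * n : ℕ) := by exact_mod_cast this
      push_cast at this ⊢
      linarith
  · have : (0 : ℝ) ≤ r * n := by positivity
    have : (0 : ℝ) ≤ blockEnd n r q := Nat.cast_nonneg _
    linarith

/-- The value `n! / ∏ m ≤ n, (x + m)` at `x = r n + 1`, raised to the power `a`. -/
noncomputable def middleScale (a n r : ℕ) : ℝ :=
  (n.factorial / (r * n + 1).ascFactorial (n + 1)) ^ a

lemma middleScale_pos (a n r : ℕ) : 0 < middleScale a n r := by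
  have : 0 < (r * n + 1).ascFactorial (n + 1) := Nat.ascFactorial_pos _ _
  rw [middleScale]
  positivity

lemma cast_ascFactorial_eq_prod (n r : ℕ) :
    ((r * n + 1).ascFactorial (n + 1) : ℝ) = ∏ m ∈ Finset.range (n + 1), ((r * n + 1 : ℝ) + m) := by
  rw [Nat.ascFactorial_eq_prod_range]
  push_cast
  rfl

lemma constantCoeff_quotientSeries_middle (a n r : ℕ) :
    constantCoeff (quotientSeries (numerator a n r 0) a n (r * n + 1)) =
      constantCoeff (taylorSeries (r * n + 1 : ℝ) (blockProduct n r)) ^ 3 * middleScale a n r := by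
  rw [quotientSeries_numerator, middleScale, cast_ascFactorial_eq_prod, div_eq_mul_inv,
    ← Finset.prod_inv_distrib]
  simp only [map_mul, map_pow, map_prod, constantCoeff_inv, constantCoeff_linearSeries,
    constantCoeff_C, pow_zero, mul_one]

lemma middleScale_le_abs_constantCoeff (a n r : ℕ) :
    middleScale a n r ≤ |constantCoeff (quotientSeries (numerator a n r 0) a n (r * n + 1))| := by
  have hpos := middleScale_pos a n r
  rw [constantCoeff_quotientSeries_middle, abs_mul, abs_pow, abs_of_pos hpos]
  exact le_mul_of_one_le_left hpos.le (one_le_pow₀ (one_le_abs_constantCoeff_blockProduct n r))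

lemma quotientSeries_one_middle (a n r : ℕ) :
    quotientSeries (numerator a n r 1) a n (r * n + 1) =
      X ^ 2 * (linearSeries (r * n + 1 + (n + (r * n + 1) : ℝ)) ^ 2 *
        quotientSeries (numerator a n r 0) a n (r * n + 1)) := by
  have linearSeries_zero : linearSeries (0 : ℝ) = X := by rw [linearSeries, map_zero, add_zero]
  rw [quotientSeries_numerator, quotientSeries_numerator, taylorSeries_middleFactor,
    add_neg_cancel, linearSeries_zero]
  ring

lemma constantCoeff_quotientSeries_one_middle (a n r : ℕ) :
    constantCoeff (quotientSeries (numerator a n r 1) a n (r * n + 1)) = 0 := by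
  simp [quotientSeries_one_middle]

lemma middleScale_le_abs_coeff_two (a n r : ℕ) :
    middleScale a n r ≤ |coeff 2 (quotientSeries (numerator a n r 1) a n (r * n + 1))| := by
  have coeff_two : coeff 2 (quotientSeries (numerator a n r 1) a n (r * n + 1)) =
      (r * n + 1 + (n + (r * n + 1))) ^ 2 *
        constantCoeff (quotientSeries (numerator a n r 0) a n (r * n + 1)) := by
    rw [quotientSeries_one_middle, coeff_X_pow_mul', if_pos le_rfl, Nat.sub_self,
      coeff_zero_eq_constantCoeff_apply, map_mul, map_pow, constantCoeff_linearSeries]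
  have one_le : (1 : ℝ) ≤ r * n + 1 + (n + (r * n + 1)) := by
    have : (0 : ℝ) ≤ r * n := by positivity
    linarith [n.cast_nonneg (α := ℝ)]
  rw [coeff_two, abs_mul, abs_of_nonneg (by positivity)]
  exact (middleScale_le_abs_constantCoeff a n r).trans
    (le_mul_of_one_le_left (abs_nonneg _) (one_le_pow₀ one_le))

end Middle

section Vanishing

open PowerSeries

lemma X_dvd_taylorSeries_risingBinomial {n i : ℕ} {t : ℝ} (hi : i < n) (ht : t + i = 0) :
    X ∣ taylorSeries t (risingBinomial n) := by
  rw [X_dvd_iff, taylorSeries_risingBinomial, map_mul, map_prod]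
  exact mul_eq_zero_of_right _ <| Finset.prod_eq_zero (Finset.mem_range.mpr hi) <| by
    rw [constantCoeff_linearSeries, ht]

lemma exists_add_eq_blockEnd {n r t : ℕ} (ht : 1 ≤ t) (ht' : t ≤ 2 * r * n + 1)
    (ht_middle : t ≠ r * n + 1) : ∃ q < 2 * r, ∃ i < n, t + i = blockEnd n r q := by
  have hn : 0 < n := Nat.pos_of_ne_zero fun h ↦ by simp [h] at ht' ht_middle; omega
  have exists_block (x : ℕ) (hx : x < 2 * r * n) :
      ∃ q < 2 * r, ∃ i < n, x + 1 + i = (q + 1) * n ∧ (q < r ↔ x < r * n) := by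
    refine ⟨x / n, (Nat.div_lt_iff_lt_mul hn).mpr hx, n - 1 - x % n, by omega, ?_,
      Nat.div_lt_iff_lt_mul hn⟩
    have := Nat.div_add_mod x n
    have := Nat.mod_lt x hn
    rw [add_mul, one_mul, mul_comm (x / n)]
    omega
  have double : 2 * r * n = r * n + r * n := by ring
  rcases lt_or_gt_of_ne ht_middle with h | h
  · obtain ⟨q, hq, i, hi, block, lt_iff⟩ := exists_block (t - 1) (by omega)
    refine ⟨q, hq, i, hi, ?_⟩
    rw [blockEnd, if_pos (lt_iff.mpr (by omega))]
    omega
  · obtain ⟨q, hq, i, hi, block, lt_iff⟩ := exists_block (t - 2) (by omega)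
    refine ⟨q, hq, i, hi, ?_⟩
    rw [blockEnd, if_neg (lt_iff.not.mpr (by omega))]
    omega

lemma X_dvd_taylorSeries_blockProduct {n r t : ℕ} (ht : 1 ≤ t) (ht' : t ≤ 2 * r * n + 1)
    (ht_middle : t ≠ r * n + 1) : X ∣ taylorSeries (t : ℝ) (blockProduct n r) := by
  obtain ⟨q, hq, i, hi, block⟩ := exists_add_eq_blockEnd ht ht' ht_middle
  have root : (t : ℝ) + -(blockEnd n r q : ℝ) + i = 0 := by
    rw [← block]
    push_cast
    ring
  rw [taylorSeries_blockProduct]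
  exact ((X_dvd_taylorSeries_risingBinomial hi root).mul_right _).trans
    (Finset.dvd_prod_of_mem _ (Finset.mem_range.mpr hq))

lemma coeff_quotientSeries_numerator_eq_zero (a b : ℕ) {n r t e : ℕ} (ht : 1 ≤ t)
    (ht' : t ≤ 2 * r * n + 1) (ht_middle : t ≠ r * n + 1) (he : e < 3) :
    coeff e (quotientSeries (numerator a n r b) a n t) = 0 := by
  have divisible : X ^ 3 ∣ quotientSeries (numerator a n r b) a n t := by
    rw [quotientSeries_numerator, mul_assoc]
    exact (pow_dvd_pow_of_dvd (X_dvd_taylorSeries_blockProduct ht ht' ht_middle) 3).mul_right _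
  exact X_pow_dvd_iff.mp divisible e he

end Vanishing

section Tail

open PowerSeries

lemma abs_coeff_quotientSeries_numerator_le (a : ℕ) {n r b e : ℕ} {t τ B : ℝ} (hn : 1 ≤ n)
    (hb : b ≤ 1) (he : e ≤ 2) (ht : 1 ≤ t) (hτ : 1 ≤ τ)
    (htτ : t + (2 * r + 1) * n + 2 ≤ 3 * (r + 2) * τ * n)
    (hB : ∏ m ∈ Finset.range (n + 1), 1 / (t + m - 1 / 2) ≤
      B / (r * n + 1).ascFactorial (n + 1)) :
    |coeff e (quotientSeries (numerator a n r b) a n t)| ≤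
      middleScale a n r * (4 * numeratorBound n r * (τ ^ (12 * r * n + 4) * B ^ a)) := by
  have one_le_add (m : ℕ) : 1 ≤ t + m := by linarith [m.cast_nonneg (α := ℝ)]
  have prod_nonneg : 0 ≤ ∏ m ∈ Finset.range (n + 1), 1 / (t + m - 1 / 2) :=
    Finset.prod_nonneg fun m _ ↦ one_div_nonneg.mpr (by linarith [one_le_add m])
  have inverse_bound : WeightedNormLE
      (C (n.factorial : ℝ) * ∏ m ∈ Finset.range (n + 1), (linearSeries (t + m))⁻¹)
      (n.factorial * ∏ m ∈ Finset.range (n + 1), 1 / (t + m - 1 / 2)) := by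
    refine ((WeightedNormLE.const _).mono (Nat.abs_cast _).le).mul
      (WeightedNormLE.prod _ fun m _ ↦ ?_)
    have habs : |t + m| = t + m := abs_of_pos (by linarith [one_le_add m])
    have bound := WeightedNormLE.linearSeries_inv (habs.symm ▸ one_le_add m : 1 ≤ |t + m|)
    rwa [habs] at bound
  have bound := (WeightedNormLE.blockProduct_mul_middleFactor (r := r) hn hb hτ
    (by rwa [abs_of_pos (by linarith : 0 < t)])).mul (inverse_bound.pow a)
  rw [← quotientSeries_numerator] at bound
  have hNB := numeratorBound_nonneg n r
  calc |coeff e (quotientSeries (numerator a n r b) a n t)|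
      ≤ 2 ^ e * (τ ^ (12 * r * n + 4) * numeratorBound n r *
          (n.factorial * ∏ m ∈ Finset.range (n + 1), 1 / (t + m - 1 / 2)) ^ a) :=
        bound.abs_coeff_le e
    _ ≤ 2 ^ 2 * (τ ^ (12 * r * n + 4) * numeratorBound n r *
          (n.factorial * (B / (r * n + 1).ascFactorial (n + 1))) ^ a) := by
        gcongr
        norm_num
    _ = _ := by
        rw [middleScale]
        ring

/-- Bounds the ratio of the coefficients of order at most `2` of the middle terms to
`middleScale`. -/
noncomputable def middleRatio (a n r : ℕ) : ℝ := 4 * numeratorBound n r * 3 ^ a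

lemma abs_coeff_quotientSeries_middle_le (a : ℕ) {n r b e : ℕ} (hn : 1 ≤ n) (hr : 1 ≤ r)
    (hb : b ≤ 1) (he : e ≤ 2) :
    |coeff e (quotientSeries (numerator a n r b) a n (r * n + 1))| ≤
      middleScale a n r * middleRatio a n r := by
  have hn₁ : (1 : ℝ) ≤ n := by exact_mod_cast hn
  have hrn : (n : ℝ) ≤ r * n := by exact_mod_cast Nat.le_mul_of_pos_left n hr
  have prod_le : ∏ m ∈ Finset.range (n + 1), 1 / ((r * n + 1 : ℝ) + m - 1 / 2) ≤
      3 / (r * n + 1).ascFactorial (n + 1) := by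
    refine (prod_one_div_sub_half_le (by linarith) (n + 1)).trans ?_
    rw [← cast_ascFactorial_eq_prod, div_eq_mul_inv 3]
    gcongr
    suffices ((n + 1 : ℕ) : ℝ) / (r * n + 1) ≤ 2 by linarith
    rw [div_le_iff₀ (by positivity)]
    push_cast
    linarith
  simpa only [middleRatio, one_pow, one_mul] using abs_coeff_quotientSeries_numerator_le a hn hb he
    (by linarith) le_rfl (by linarith) prod_le

lemma prod_one_div_sub_half_le_inv_pow {n r : ℕ} {t τ : ℝ} (hτ₀ : 0 < τ)
    (hτ : τ * (r * n + 1 + n) = t - 1 / 2 + n) (hτ₁ : 1 ≤ τ) :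
    ∏ m ∈ Finset.range (n + 1), 1 / (t + m - 1 / 2) ≤
      τ⁻¹ ^ (n + 1) / (r * n + 1).ascFactorial (n + 1) := by
  have as_prod : τ⁻¹ ^ (n + 1) / (r * n + 1).ascFactorial (n + 1) =
      ∏ m ∈ Finset.range (n + 1), τ⁻¹ * (r * n + 1 + m : ℝ)⁻¹ := by
    rw [cast_ascFactorial_eq_prod, Finset.prod_mul_distrib, Finset.prod_const, Finset.card_range,
      Finset.prod_inv_distrib, div_eq_mul_inv]
  rw [as_prod]
  have hle (m : ℕ) (hm : m ∈ Finset.range (n + 1)) :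
      τ * (r * n + 1 + m) ≤ t + m - 1 / 2 := by
    have hm : (m : ℝ) ≤ n := by exact_mod_cast Nat.lt_succ_iff.mp (Finset.mem_range.mp hm)
    nlinarith
  refine Finset.prod_le_prod (fun m hm ↦ ?_) fun m hm ↦ ?_
  · exact one_div_nonneg.mpr (le_trans (by positivity) (hle m hm))
  · rw [← mul_inv, ← one_div]
    exact one_div_le_one_div_of_le (by positivity) (hle m hm)

lemma pow_mul_inv_pow_le {a r : ℕ} (n : ℕ) {τ y : ℝ} (hτ : 0 < τ) (inv_le : τ⁻¹ ≤ 2 / 3)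
    (inv_le' : τ⁻¹ ≤ y) (ha : 12 * r + 6 ≤ a) :
    τ ^ (12 * r * n + 4) * (τ⁻¹ ^ (n + 1)) ^ a ≤ (2 / 3) ^ ((a - 12 * r) * n) * y ^ 2 := by
  obtain ⟨c, rfl⟩ := Nat.exists_eq_add_of_le ha
  have exponent : (n + 1) * (12 * r + 6 + c) =
      (12 * r * n + 4) + ((12 * r + 6 + c - 12 * r) * n + (2 + (12 * r + c))) := by
    rw [show 12 * r + 6 + c - 12 * r = 6 + c by omega]
    ring
  rw [← pow_mul, exponent, pow_add τ⁻¹ (12 * r * n + 4), ← mul_assoc, ← mul_pow,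
    mul_inv_cancel₀ hτ.ne', one_pow, one_mul, pow_add, pow_add _ 2]
  gcongr
  exact (mul_le_of_le_one_right (by positivity) (pow_le_one₀ (by positivity) (by linarith))).trans
    (by gcongr)

lemma abs_coeff_quotientSeries_tail_le {a n r b e t : ℕ} (hn : 1 ≤ n) (hr : 1 ≤ r) (hb : b ≤ 1)
    (he : e ≤ 2) (ha : 12 * r + 6 ≤ a) (ht : 2 * r * n + 2 ≤ t) :
    |coeff e (quotientSeries (numerator a n r b) a n t)| ≤
      middleScale a n r * (4 * numeratorBound n r *
        ((2 / 3) ^ ((a - 12 * r) * n) * (3 * (r + 2) * n) ^ 2)) * (1 / (t : ℝ) ^ 2) := by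
  have hn₁ : (1 : ℝ) ≤ n := by exact_mod_cast hn
  have hrn : (n : ℝ) ≤ r * n := by exact_mod_cast Nat.le_mul_of_pos_left n hr
  have ht₁ : 2 * (r * n) + 2 ≤ (t : ℝ) := by
    rw [← mul_assoc]
    exact_mod_cast ht
  set τ : ℝ := (t - 1 / 2 + n) / (r * n + 1 + n) with hτ
  have hτ_mul : τ * (r * n + 1 + n) = t - 1 / 2 + n := div_mul_cancel₀ _ (by positivity)
  have three_halves_le : 3 / 2 ≤ τ := by
    rw [hτ, le_div_iff₀ (by positivity)]
    linarith
  have inv_le : τ⁻¹ ≤ 2 / 3 := by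
    rw [inv_le_comm₀ (by positivity) (by norm_num)]
    linarith
  have inv_le_div : τ⁻¹ ≤ 3 * (r + 2) * n / t := by
    rw [hτ, inv_div, div_le_div_iff₀ (by linarith) (by linarith)]
    exact mul_le_mul (by linarith) (by linarith) (by linarith) (by positivity)
  have decay := pow_mul_inv_pow_le n (by positivity) inv_le inv_le_div ha
  have growth : (t : ℝ) + (2 * r + 1) * n + 2 ≤ 3 * (r + 2) * τ * n := by
    nlinarith
  refine (abs_coeff_quotientSeries_numerator_le a hn hb he (by linarith) (by linarith) growth
    (prod_one_div_sub_half_le_inv_pow (by positivity) hτ_mul (by linarith))).trans ?_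
  have := middleScale_pos a n r
  have := numeratorBound_nonneg n r
  calc middleScale a n r * (4 * numeratorBound n r * (τ ^ (12 * r * n + 4) * (τ⁻¹ ^ (n + 1)) ^ a))
      ≤ middleScale a n r * (4 * numeratorBound n r *
          ((2 / 3) ^ ((a - 12 * r) * n) * (3 * (r + 2) * n / t) ^ 2)) := by gcongr
    _ = _ := by
        rw [div_pow]
        ring

lemma abs_sub_le_of_hasSum {f : ℕ → ℝ} {S G : ℝ} {s : ℕ} (hS : HasSum f S)
    (hf : ∀ t, t ≠ s → |f t| ≤ G * (1 / ((t : ℝ) + 1) ^ 2)) (hG : 0 ≤ G) :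
    |S - f s| ≤ G * zeta 2 := by
  have removed := hS.update s 0
  rw [zero_sub, neg_add_eq_sub] at removed
  rw [← removed.tsum_eq, ← Real.norm_eq_abs]
  refine tsum_of_norm_bounded ((hasSum_zeta le_rfl).mul_left G) fun t ↦ ?_
  rcases eq_or_ne t s with rfl | h
  · rw [Function.update_self, norm_zero]
    positivity
  · rw [Function.update_of_ne h]
    exact hf t h

/-- Bounds the contribution of the terms beyond the middle one to the sum of the `e`-th
coefficients (`e ≤ 2`) of the auxiliary quotients, relative to `middleScale`. -/
noncomputable def tailBound (a n r : ℕ) : ℝ :=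
  4 * numeratorBound n r * ((2 / 3) ^ ((a - 12 * r) * n) * (3 * (r + 2) * n) ^ 2) * zeta 2

lemma abs_sub_middle_le {a n r b e : ℕ} (hn : 1 ≤ n) (hr : 1 ≤ r) (hb : b ≤ 1) (he : e ≤ 2)
    (ha : 12 * r + 6 ≤ a) {S : ℝ}
    (hS : HasSum (fun t : ℕ ↦ coeff e (quotientSeries (numerator a n r b) a n (t + 1))) S) :
    |S - coeff e (quotientSeries (numerator a n r b) a n (r * n + 1))| ≤
      middleScale a n r * tailBound a n r := by
  have hB := (middleScale_pos a n r).le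
  have hNB := numeratorBound_nonneg n r
  have close := abs_sub_le_of_hasSum (s := r * n) (G := middleScale a n r * (4 *
    numeratorBound n r * ((2 / 3) ^ ((a - 12 * r) * n) * (3 * (r + 2) * n) ^ 2))) hS
    (fun t ht ↦ ?_) (by positivity)
  · rw [tailBound, ← mul_assoc]
    exact_mod_cast close
  have cast_succ : (t : ℝ) + 1 = (t + 1 : ℕ) := by push_cast; rfl
  rw [cast_succ]
  by_cases h : t + 1 ≤ 2 * r * n + 1
  · rw [coeff_quotientSeries_numerator_eq_zero a b (by omega) h (by omega) (by omega), abs_zero]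
    positivity
  · exact abs_coeff_quotientSeries_tail_le hn hr hb he ha (by omega)

end Tail

section Nondegeneracy

lemma mul_max_le_abs_add_of_le {x K u v l₁ l₂ : ℝ} (hK : 1 ≤ K) (hl : |l₁| ≤ 4 * K * |l₂|)
    (hu : |u| ≤ x) (hv : 15 * K * x ≤ |v|) : x * max |l₁| |l₂| ≤ |l₁ * u + l₂ * v| := by
  have hx : 0 ≤ x := (abs_nonneg u).trans hu
  have upper : |l₁ * u| ≤ 4 * K * |l₂| * x := by
    rw [abs_mul]
    gcongr
  have lower : |l₂| * (15 * K * x) ≤ |l₂ * v| := by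
    rw [abs_mul]
    gcongr
  have triangle : |l₂ * v| - |l₁ * u| ≤ |l₁ * u + l₂ * v| := by
    simpa only [abs_neg, sub_neg_eq_add, add_comm] using
      abs_sub_abs_le_abs_sub (l₂ * v) (-(l₁ * u))
  have max_le : max |l₁| |l₂| ≤ 4 * K * |l₂| :=
    max_le hl (le_mul_of_one_le_left (abs_nonneg _) (by linarith))
  have : 0 ≤ K * |l₂| * x := by positivity
  linarith [mul_le_mul_of_nonneg_left max_le hx]

lemma mul_max_le_abs_add_of_ge {x K u v l₁ l₂ : ℝ} (hx : 0 ≤ x) (hK : 1 ≤ K)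
    (hl : 4 * K * |l₂| ≤ |l₁|) (hu : 15 * K * x ≤ |u|) (hv : |v| ≤ 17 * K * K * x) :
    x * max |l₁| |l₂| ≤ |l₁ * u + l₂ * v| := by
  have lower : |l₁| * (15 * K * x) ≤ |l₁ * u| := by
    rw [abs_mul]
    gcongr
  have upper : 4 * |l₂ * v| ≤ |l₁| * (17 * K * x) := by
    calc 4 * |l₂ * v| ≤ 4 * (|l₂| * (17 * K * K * x)) := by
          rw [abs_mul]
          gcongr
      _ = 4 * K * |l₂| * (17 * K * x) := by ring
      _ ≤ |l₁| * (17 * K * x) := by gcongr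
  have triangle : |l₁ * u| - |l₂ * v| ≤ |l₁ * u + l₂ * v| := by
    simpa only [abs_neg, sub_neg_eq_add] using abs_sub_abs_le_abs_sub (l₁ * u) (-(l₂ * v))
  have max_eq : max |l₁| |l₂| = |l₁| :=
    max_eq_left ((le_mul_of_one_le_left (abs_nonneg _) (by linarith)).trans hl)
  have hKx : |l₁| * x ≤ |l₁| * (K * x) := by
    gcongr
    exact le_mul_of_one_le_left hx hK
  rw [max_eq]
  linarith [show 0 ≤ |l₁| * x by positivity]

lemma mul_norm_le_abs_pairing {x K : ℝ} {y z : ℝ × ℝ} (hK : 1 ≤ K) (hy₁ : 15 * K * x ≤ |y.1|)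
    (hy₂ : |y.2| ≤ 17 * K * K * x) (hz₁ : |z.1| ≤ x) (hz₂ : 15 * K * x ≤ |z.2|) (l : ℝ × ℝ) :
    x * ‖l‖ ≤ |l.1 * y.1 + l.2 * y.2| ∨ x * ‖l‖ ≤ |l.1 * z.1 + l.2 * z.2| := by
  rw [Prod.norm_def, Real.norm_eq_abs, Real.norm_eq_abs]
  rcases le_total |l.1| (4 * K * |l.2|) with hl | hl
  · exact .inr (mul_max_le_abs_add_of_le hK hl hz₁ hz₂)
  · exact .inl (mul_max_le_abs_add_of_ge ((abs_nonneg _).trans hz₁) hK hl hy₁ hy₂)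

end Nondegeneracy

section ZetaForms

open scoped Polynomial

/-- The odd integers `i` with `3 ≤ i ≤ a`, which index the zeta values in the linear forms. -/
def oddIndices (a : ℕ) : Finset ℕ := {i ∈ Finset.Icc 3 a | Odd i}

/-- The vectors spanning the space under study: `(1, 0)` and `(0, 1)`, followed by
`(ζ(i), (i (i + 1) / 2) ζ(i + 2))` for `i ∈ oddIndices a`. -/
noncomputable def zetaVector (a : ℕ) : Fin 2 ⊕ oddIndices a → ℝ × ℝ :=
  Sum.elim ![(1, 0), (0, 1)] fun i ↦ (zeta i, (i : ℝ) * (i + 1) / 2 * zeta (i + 2))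

/-- The rational term of the linear form in zeta values which sums the `s`-th coefficients of
`quotientSeries P a n` over the positive integers. -/
noncomputable def rationalPart (P : ℝ[X]) (a n s : ℕ) : ℝ :=
  -∑ p ∈ Finset.Icc 1 a, (p + s - 1).choose s *
    ∑ j ∈ Finset.range (n + 1), poleCoeff P a n j p * zetaPartialSum j (p + s)

/-- The coefficients of the pair of linear forms attached to `P / (x (x + 1) ⋯ (x + n)) ^ a` with
respect to `zetaVector a`. -/
noncomputable def formCoeff (P : ℝ[X]) (a n : ℕ) : Fin 2 ⊕ oddIndices a → ℝ :=
  Sum.elim ![rationalPart P a n 0, rationalPart P a n 2]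
    fun p ↦ ∑ j ∈ Finset.range (n + 1), poleCoeff P a n j p

/-- The values of the pair of linear forms attached to `P / (x (x + 1) ⋯ (x + n)) ^ a`. -/
noncomputable def zetaForm (P : ℝ[X]) (a n : ℕ) : ℝ × ℝ :=
  ∑ i, formCoeff P a n i • zetaVector a i

lemma sum_Icc_eq_sum_oddIndices {a : ℕ} {F : ℕ → ℝ} (h₁ : F 1 = 0)
    (heven : ∀ p ≤ a, Even p → F p = 0) : ∑ p ∈ Finset.Icc 1 a, F p = ∑ p : oddIndices a, F p := by
  rw [Finset.sum_coe_sort (oddIndices a) F]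
  refine (Finset.sum_subset (fun p hp ↦ ?_) fun p hp hp' ↦ ?_).symm <;>
    simp only [oddIndices, Finset.mem_filter, Finset.mem_Icc] at *
  · omega
  · by_cases hodd : Odd p
    · obtain rfl : p = 1 := by
        obtain ⟨q, rfl⟩ := hodd
        by_contra!
        exact hp' ⟨by omega, by simp⟩
      exact h₁
    · exact heven p hp.2 (Nat.not_odd_iff_even.mp hodd)

variable {P : ℝ[X]} {a n : ℕ}

section Values

variable (ha : Odd a) (hn : Even n) (hP : P.comp (Polynomial.C (-n : ℝ) - Polynomial.X) = P)
  (hdeg : P.natDegree + 1 < a * (n + 1))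

include ha hn hP hdeg

lemma hasSum_coeff_quotientSeries_odd {s : ℕ} (hs : Even s) :
    HasSum (fun t : ℕ ↦ PowerSeries.coeff s (quotientSeries P a n (t + 1)))
      (rationalPart P a n s + ∑ p : oddIndices a,
        (∑ j ∈ Finset.range (n + 1), poleCoeff P a n j p) *
          ((p + s - 1 : ℕ).choose s * zeta (p + s))) := by
  rw [← sum_Icc_eq_sum_oddIndices (F := fun p ↦
    (∑ j ∈ Finset.range (n + 1), poleCoeff P a n j p) * ((p + s - 1).choose s * zeta (p + s)))]
  · convert hasSum_coeff_quotientSeries hdeg s using 1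
    rw [rationalPart, neg_add_eq_sub, ← Finset.sum_sub_distrib]
    refine Finset.sum_congr rfl fun p _ ↦ ?_
    rw [hs.neg_one_pow, one_mul]
    simp only [mul_sub, Finset.sum_sub_distrib, ← Finset.sum_mul]
    ring
  · simp only [sum_poleCoeff_one hdeg, zero_mul]
  · intro p hp heven
    rw [sum_poleCoeff_eq_zero hP hn (Nat.Odd.sub_even hp ha heven), zero_mul]

lemma hasSum_zetaForm_fst :
    HasSum (fun t : ℕ ↦ PowerSeries.coeff 0 (quotientSeries P a n (t + 1)))
      (zetaForm P a n).1 := by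
  convert hasSum_coeff_quotientSeries_odd ha hn hP hdeg Even.zero using 1
  simp [zetaForm, formCoeff, zetaVector, Fintype.sum_sum_type, Prod.fst_sum]

lemma hasSum_zetaForm_snd :
    HasSum (fun t : ℕ ↦ PowerSeries.coeff 2 (quotientSeries P a n (t + 1)))
      (zetaForm P a n).2 := by
  convert hasSum_coeff_quotientSeries_odd ha hn hP hdeg even_two using 1
  simp [zetaForm, formCoeff, zetaVector, Fintype.sum_sum_type, Prod.snd_sum,
    Nat.cast_choose_two, mul_comm]

end Values

lemma pow_mul_zetaPartialSum_mem_range {d j : ℕ} (hd : ∀ i, 1 ≤ i → i ≤ j → i ∣ d) (i : ℕ) :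
    (d : ℝ) ^ i * zetaPartialSum j i ∈ (Int.castRingHom ℝ).range := by
  rw [zetaPartialSum, Finset.mul_sum]
  refine sum_mem fun u hu ↦ ?_
  obtain ⟨e, rfl⟩ := hd (u + 1) (Nat.le_add_left 1 u) (Finset.mem_range.mp hu)
  have cancel : ((u + 1) * e : ℕ) ^ i * (1 / ((u : ℝ) + 1) ^ i) = ((e ^ i : ℕ) : ℝ) := by
    push_cast
    field_simp
    exact mul_pow _ _ i
  rw [cancel]
  exact natCast_mem _ _

lemma pow_mul_rationalPart_mem_range {d : ℕ} (hd : ∀ i, 1 ≤ i → i ≤ n → i ∣ d)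
    (hP : ∀ j ≤ n, ∀ p, (d : ℝ) ^ (a - p) * poleCoeff P a n j p ∈ (Int.castRingHom ℝ).range)
    (s : ℕ) : (d : ℝ) ^ (a + s) * rationalPart P a n s ∈ (Int.castRingHom ℝ).range := by
  rw [rationalPart, mul_neg, Finset.mul_sum]
  refine neg_mem (sum_mem fun p hp ↦ ?_)
  rw [mul_left_comm, Finset.mul_sum]
  refine mul_mem (natCast_mem _ _) (sum_mem fun j hj ↦ ?_)
  have hj := Nat.le_of_lt_succ (Finset.mem_range.mp hj)
  rw [show a + s = (a - p) + (p + s) by have := (Finset.mem_Icc.mp hp).2; omega, pow_add,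
    mul_mul_mul_comm]
  exact mul_mem (hP j hj p)
    (pow_mul_zetaPartialSum_mem_range (fun i h₁ h₂ ↦ hd i h₁ (h₂.trans hj)) _)

lemma pow_mul_formCoeff_mem_range {d : ℕ} (hd : ∀ i, 1 ≤ i → i ≤ n → i ∣ d)
    (hP : ∀ j ≤ n, ∀ p, (d : ℝ) ^ (a - p) * poleCoeff P a n j p ∈ (Int.castRingHom ℝ).range)
    (i : Fin 2 ⊕ oddIndices a) :
    (d : ℝ) ^ (a + 2) * formCoeff P a n i ∈ (Int.castRingHom ℝ).range := by
  have raise {k : ℕ} {x : ℝ} (hk : k ≤ a + 2) (hx : (d : ℝ) ^ k * x ∈ (Int.castRingHom ℝ).range) :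
      (d : ℝ) ^ (a + 2) * x ∈ (Int.castRingHom ℝ).range := by
    rw [← Nat.sub_add_cancel hk, pow_add, mul_assoc]
    exact mul_mem (pow_mem (natCast_mem _ d) _) hx
  rcases i with i | p
  · fin_cases i
    · exact raise (Nat.le_add_right a 2) (pow_mul_rationalPart_mem_range hd hP 0)
    · exact pow_mul_rationalPart_mem_range hd hP 2
  · refine raise (k := a - p) (by omega) ?_
    rw [formCoeff, Sum.elim_inr, Finset.mul_sum]
    exact sum_mem fun j hj ↦ hP j (Nat.le_of_lt_succ (Finset.mem_range.mp hj)) p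

lemma abs_zetaPartialSum_le (j i : ℕ) : |zetaPartialSum j i| ≤ j := by
  have card_nsmul : (Finset.range j).card • (1 : ℝ) = j := by simp
  rw [zetaPartialSum, ← card_nsmul]
  refine (Finset.abs_sum_le_sum_abs _ _).trans (Finset.sum_le_card_nsmul _ _ _ fun u _ ↦ ?_)
  rw [abs_of_pos (by positivity)]
  exact div_le_one_of_le₀ (one_le_pow₀ (by linarith [u.cast_nonneg (α := ℝ)])) (by positivity)

lemma abs_rationalPart_le {M : ℝ} (hM : ∀ j ≤ n, ∀ p, |poleCoeff P a n j p| ≤ M) (s : ℕ) :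
    |rationalPart P a n s| ≤ a * ((a + s) ^ s * ((n + 1) ^ 2 * M)) := by
  have hM₀ : 0 ≤ M := (abs_nonneg _).trans (hM 0 n.zero_le 0)
  rw [rationalPart, abs_neg]
  calc |∑ p ∈ Finset.Icc 1 a, ((p + s - 1).choose s : ℝ) *
        ∑ j ∈ Finset.range (n + 1), poleCoeff P a n j p * zetaPartialSum j (p + s)|
      ≤ ∑ _ ∈ Finset.Icc 1 a, (a + s : ℝ) ^ s * ∑ _ ∈ Finset.range (n + 1), M * (n + 1) := by
        refine (Finset.abs_sum_le_sum_abs _ _).trans (Finset.sum_le_sum fun p hp ↦ ?_)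
        have hp := (Finset.mem_Icc.mp hp).2
        rw [abs_mul, Nat.abs_cast]
        gcongr
        · exact_mod_cast (Nat.choose_le_pow _ s).trans (Nat.pow_le_pow_left (by omega) s)
        · refine (Finset.abs_sum_le_sum_abs _ _).trans (Finset.sum_le_sum fun j hj ↦ ?_)
          have hj := Nat.le_of_lt_succ (Finset.mem_range.mp hj)
          rw [abs_mul]
          gcongr
          · exact hM j hj p
          · exact (abs_zetaPartialSum_le j _).trans (by exact_mod_cast hj.trans n.le_succ)
    _ = a * ((a + s) ^ s * ((n + 1) ^ 2 * M)) := by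
        simp only [Finset.sum_const, Finset.card_range, Nat.card_Icc, nsmul_eq_mul,
          Nat.add_sub_cancel]
        push_cast
        ring

lemma abs_formCoeff_le (ha : 1 ≤ a) {M : ℝ} (hM : ∀ j ≤ n, ∀ p, |poleCoeff P a n j p| ≤ M)
    (i : Fin 2 ⊕ oddIndices a) :
    |formCoeff P a n i| ≤ a * (a + 2) ^ 2 * ((n + 1) ^ 2 * M) := by
  have hM₀ : 0 ≤ M := (abs_nonneg _).trans (hM 0 n.zero_le 0)
  have ha₁ : (1 : ℝ) ≤ a := by exact_mod_cast ha
  have one_le_sq : 1 ≤ (a + 2 : ℝ) ^ 2 := one_le_pow₀ (by linarith)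
  rcases i with i | p
  · rw [mul_assoc]
    fin_cases i
    · refine (abs_rationalPart_le hM 0).trans ?_
      rw [pow_zero]
      gcongr
    · exact abs_rationalPart_le hM 2
  · calc |∑ j ∈ Finset.range (n + 1), poleCoeff P a n j p|
        ≤ (Finset.range (n + 1)).card • M :=
          (Finset.abs_sum_le_sum_abs _ _).trans (Finset.sum_le_card_nsmul _ _ _ fun j hj ↦
            hM j (Nat.le_of_lt_succ (Finset.mem_range.mp hj)) p)
      _ = 1 * ((n + 1) ^ 1 * M) := by
          rw [Finset.card_range, nsmul_eq_mul]
          push_cast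
          ring
      _ ≤ a * (a + 2) ^ 2 * ((n + 1) ^ 2 * M) := by
          gcongr
          · exact one_le_mul_of_one_le_of_one_le ha₁ one_le_sq
          · linarith [n.cast_nonneg (α := ℝ)]
          · norm_num

end ZetaForms

section ExponentialRates

open Filter Real

/-- The sequence `f` grows at exponential rate at most `c`, that is
`limsup (log |f n|) / n ≤ c`. -/
def ExpRateLE (f : ℕ → ℝ) (c : ℝ) : Prop :=
  ∀ δ > 0, ∀ᶠ n : ℕ in atTop, |f n| ≤ exp ((c + δ) * n)

namespace ExpRateLE

variable {f g : ℕ → ℝ} {c d : ℝ}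

lemma of_abs_le (hg : ExpRateLE g c) (h : ∀ᶠ n in atTop, |f n| ≤ |g n|) : ExpRateLE f c :=
  fun δ hδ ↦ by
    filter_upwards [h, hg δ hδ] with n h₁ h₂ using h₁.trans h₂

lemma eventually_le (hf : ExpRateLE f c) (hcd : c < d) : ∀ᶠ n : ℕ in atTop, f n ≤ exp (d * n) := by
  filter_upwards [hf (d - c) (sub_pos.mpr hcd)] with n hn
  rw [add_sub_cancel] at hn
  exact (le_abs_self _).trans hn

lemma mul (hf : ExpRateLE f c) (hg : ExpRateLE g d) :
    ExpRateLE (fun n ↦ f n * g n) (c + d) := fun δ hδ ↦ by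
  filter_upwards [hf (δ / 2) (half_pos hδ), hg (δ / 2) (half_pos hδ)] with n hfn hgn
  calc |f n * g n| ≤ exp ((c + δ / 2) * n) * exp ((d + δ / 2) * n) := by
        rw [abs_mul]
        gcongr
    _ = exp ((c + d + δ) * n) := by
        rw [← exp_add]
        ring_nf

lemma exp_mul (c : ℝ) : ExpRateLE (fun n ↦ exp (c * n)) c := fun δ hδ ↦ .of_forall fun n ↦ by
  rw [abs_exp]
  gcongr
  linarith

lemma natCast_pow (k : ℕ) : ExpRateLE (fun n ↦ (n : ℝ) ^ k) 0 := fun δ hδ ↦ by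
  filter_upwards [((isLittleO_pow_exp_pos_mul_atTop k hδ).comp_tendsto
    tendsto_natCast_atTop_atTop).bound one_pos] with n hn
  simpa only [Function.comp_apply, norm_eq_abs, abs_exp, one_mul, zero_add] using hn

lemma natCast : ExpRateLE (fun n ↦ (n : ℝ)) 0 := by
  simpa only [pow_one] using natCast_pow 1

lemma const (C : ℝ) : ExpRateLE (fun _ ↦ C) 0 := fun δ hδ ↦ by
  have : Tendsto (fun n : ℕ ↦ exp (δ * n)) atTop atTop :=
    tendsto_exp_atTop.comp (tendsto_natCast_atTop_atTop.const_mul_atTop hδ)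
  simpa only [zero_add] using this.eventually_ge_atTop |C|

lemma const_mul (C : ℝ) (hf : ExpRateLE f c) : ExpRateLE (fun n ↦ C * f n) c := by
  simpa only [zero_add] using (const C).mul hf

lemma natCast_add_one : ExpRateLE (fun n ↦ (n + 1 : ℝ)) 0 := by
  refine (natCast.const_mul 2).of_abs_le ?_
  filter_upwards [eventually_ge_atTop 1] with n hn
  have hn₁ : (1 : ℝ) ≤ n := by exact_mod_cast hn
  rw [abs_of_nonneg (by positivity), abs_of_nonneg (by positivity)]
  linarith

lemma const_pow {x : ℝ} (hx : 0 < x) : ExpRateLE (fun n ↦ x ^ n) (log x) := by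
  convert exp_mul (log x) using 2 with n
  rw [mul_comm, exp_nat_mul, exp_log hx]

lemma pow (hf : ExpRateLE f c) (k : ℕ) : ExpRateLE (fun n ↦ f n ^ k) (k * c) := by
  induction k with
  | zero => simpa using const 1
  | succ k ih =>
    push_cast
    simpa only [pow_succ, add_mul, one_mul] using ih.mul hf

end ExpRateLE

lemma expRateLE_lcmUpto : ExpRateLE (fun n ↦ (Nat.lcmUpto n : ℝ)) 1 := fun δ hδ ↦ by
  filter_upwards [eventually_lcmUpto_le_exp hδ] with n hn
  rwa [Nat.abs_cast]

lemma factorial_le_exp_one_mul {n : ℕ} (hn : 1 ≤ n) :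
    (n.factorial : ℝ) ≤ exp 1 * n * (n / exp 1) ^ n := by
  have hn₁ : (1 : ℝ) ≤ n := by exact_mod_cast hn
  obtain ⟨m, rfl⟩ := Nat.exists_eq_add_of_le' hn
  have stirling : Stirling.stirlingSeq (m + 1) ≤ exp 1 / √2 :=
    (Stirling.stirlingSeq'_antitone m.zero_le).trans_eq Stirling.stirlingSeq_one
  rw [Stirling.stirlingSeq, div_le_iff₀ (by positivity), sqrt_mul zero_le_two] at stirling
  calc _ ≤ exp 1 / √2 * (√2 * √(m + 1 : ℕ) * ((m + 1 : ℕ) / exp 1) ^ (m + 1)) := stirling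
    _ = exp 1 * √(m + 1 : ℕ) * ((m + 1 : ℕ) / exp 1) ^ (m + 1) := by field_simp
    _ ≤ _ := by
        gcongr
        exact sqrt_le_self_iff.mpr (.inr hn₁)

lemma expRateLE_factorial_div_pow : ExpRateLE (fun n ↦ n.factorial / (n : ℝ) ^ n) (-1) := by
  have rate := (ExpRateLE.natCast.const_mul (exp 1)).mul (ExpRateLE.exp_mul (-1))
  rw [zero_add] at rate
  refine rate.of_abs_le ?_
  filter_upwards [eventually_ge_atTop 1] with n hn
  have : (0 : ℝ) < n := by exact_mod_cast hn
  rw [abs_of_nonneg (by positivity), abs_of_nonneg (by positivity), div_le_iff₀ (by positivity)]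
  refine (factorial_le_exp_one_mul hn).trans_eq ?_
  rw [div_pow, neg_one_mul, exp_neg, ← exp_one_pow n]
  ring

lemma expRateLE_pow_div_factorial : ExpRateLE (fun n ↦ (n : ℝ) ^ n / n.factorial) 1 := by
  refine (ExpRateLE.exp_mul 1).of_abs_le (.of_forall fun n ↦ ?_)
  rw [abs_exp, abs_of_nonneg (by positivity), one_mul]
  exact pow_div_factorial_le_exp n n.cast_nonneg n

lemma expRateLE_middleScale (a : ℕ) {r : ℕ} (hr : 1 ≤ r) :
    ExpRateLE (fun n ↦ middleScale a n r) (-(a * (1 + log r))) := by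
  have hr₁ : (0 : ℝ) < r := by exact_mod_cast hr
  have rate := (expRateLE_factorial_div_pow.mul (ExpRateLE.const_pow (inv_pos.mpr hr₁))).pow a
  rw [log_inv, ← neg_add, mul_neg] at rate
  refine rate.of_abs_le ?_
  filter_upwards [eventually_ge_atTop 1] with n hn
  have : (0 : ℝ) < n := by exact_mod_cast hn
  have pow_le : (r * n : ℝ) ^ n ≤ (r * n + 1).ascFactorial (n + 1) := by
    exact_mod_cast (Nat.pow_le_pow_left (Nat.le_succ _) n).trans
      ((Nat.pow_le_pow_right (Nat.succ_pos _) n.le_succ).trans (Nat.pow_succ_le_ascFactorial _ _))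
  rw [middleScale, abs_of_nonneg (by positivity), abs_of_nonneg (by positivity)]
  gcongr
  rw [inv_pow, ← div_eq_mul_inv, div_div, ← mul_pow, mul_comm (n : ℝ)]
  gcongr

lemma expRateLE_middleScale_inv (a r : ℕ) :
    ExpRateLE (fun n ↦ (middleScale a n r)⁻¹) (a * (1 + log (r + 2))) := by
  have hr : (0 : ℝ) < r + 2 := by positivity
  have rate := ((ExpRateLE.natCast.const_mul (r + 2 : ℝ)).mul
    (expRateLE_pow_div_factorial.mul (ExpRateLE.const_pow hr))).pow a
  rw [zero_add] at rate
  refine rate.of_abs_le ?_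
  filter_upwards [eventually_ge_atTop 1] with n hn
  have : (1 : ℝ) ≤ n := by exact_mod_cast hn
  have le_pow : ((r * n + 1).ascFactorial (n + 1) : ℝ) ≤ ((r + 2) * n) ^ (n + 1) := by
    exact_mod_cast (Nat.ascFactorial_le_pow_add _ _).trans
      (Nat.pow_le_pow_left (by linarith : r * n + (n + 1) ≤ (r + 2) * n) _)
  rw [middleScale, ← inv_pow, inv_div, abs_of_nonneg (by positivity),
    abs_of_nonneg (by positivity)]
  gcongr
  calc ((r * n + 1).ascFactorial (n + 1) : ℝ) / n.factorial
      ≤ ((r + 2) * n) ^ (n + 1) / n.factorial := by gcongr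
    _ = (r + 2) * n * (n ^ n / n.factorial * (r + 2) ^ n) := by
        rw [pow_succ, mul_pow]
        ring

/-- The exponential growth rate of `numeratorBound n r` in `n`. -/
noncomputable def numeratorRate (r : ℕ) : ℝ := 12 * r * log (3 * (r + 2) * exp 1)

lemma expRateLE_numeratorBound (r : ℕ) :
    ExpRateLE (fun n ↦ numeratorBound n r) (numeratorRate r) := by
  have base_pos : 0 < 3 * (r + 2) * exp 1 := by positivity
  have rate := ((ExpRateLE.const_pow base_pos).pow (12 * r)).mul
    ((ExpRateLE.natCast.const_mul (3 * (r + 2 : ℝ))).pow 4)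
  convert rate using 2
  · rw [numeratorBound, ← pow_mul, mul_comm _ (12 * r)]
  · rw [numeratorRate]
    push_cast
    ring

lemma one_le_middleRatio (a : ℕ) {n : ℕ} (hn : 1 ≤ n) (r : ℕ) : 1 ≤ middleRatio a n r := by
  have hn₁ : (1 : ℝ) ≤ n := by exact_mod_cast hn
  have one_le_mul : 1 ≤ 3 * (r + 2 : ℝ) := by linarith [r.cast_nonneg (α := ℝ)]
  have one_le_exp : 1 ≤ exp 1 := one_le_exp zero_le_one
  have one_le_numeratorBound : 1 ≤ numeratorBound n r :=
    one_le_mul_of_one_le_of_one_le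
      (one_le_pow₀ (one_le_mul_of_one_le_of_one_le one_le_mul one_le_exp))
      (one_le_pow₀ (one_le_mul_of_one_le_of_one_le one_le_mul hn₁))
  exact one_le_mul_of_one_le_of_one_le (by linarith) (one_le_pow₀ (by norm_num))

lemma expRateLE_middleRatio (a r : ℕ) :
    ExpRateLE (fun n ↦ middleRatio a n r) (numeratorRate r) := by
  convert (expRateLE_numeratorBound r).const_mul (4 * 3 ^ a) using 2
  rw [middleRatio]
  ring

lemma expRateLE_tailBound {a r : ℕ} (ha : 12 * r ≤ a) :
    ExpRateLE (fun n ↦ tailBound a n r) (numeratorRate r - (a - 12 * r) * log (3 / 2)) := by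
  have rate := (expRateLE_numeratorBound r).mul
    (((ExpRateLE.const_pow (by norm_num : (0 : ℝ) < 2 / 3)).pow (a - 12 * r)).mul
      (ExpRateLE.natCast_pow 2))
  convert rate.const_mul (4 * (3 * (r + 2)) ^ 2 * zeta 2) using 2
  · rw [tailBound, ← pow_mul, mul_comm _ (a - 12 * r), mul_pow _ _ 2]
    ring
  · have log_eq : log (3 / 2) = -log (2 / 3) := by rw [← log_inv, inv_div]
    rw [log_eq, Nat.cast_sub ha]
    push_cast
    ring

lemma eventually_tailBound_le {a r : ℕ} (ha : 12 * r ≤ a)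
    (hr : 2 * numeratorRate r < (a - 12 * r) * log (3 / 2)) :
    ∀ᶠ n in atTop, tailBound a n r ≤ 1 / (16 * middleRatio a n r) := by
  have rate := (expRateLE_tailBound ha).mul ((expRateLE_middleRatio a r).const_mul 16)
  filter_upwards [rate.eventually_le (d := 0) (by linarith), eventually_ge_atTop 1] with n hn hn₁
  have := one_le_middleRatio a hn₁ r
  rwa [zero_mul, exp_zero, ← le_div_iff₀ (by positivity)] at hn

lemma expRateLE_poleCoeffBound (a r : ℕ) :
    ExpRateLE (fun n ↦ poleCoeffBound a n r) (a * log 2 + numeratorRate r) := by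
  have rate := (((ExpRateLE.const_pow zero_lt_two).mul (ExpRateLE.natCast_add_one.pow 2)).pow a).mul
    (expRateLE_numeratorBound r)
  rw [mul_zero, add_zero] at rate
  exact rate.const_mul (2 ^ a)

end ExponentialRates

section RankBound

open Filter Real

variable {a n r b : ℕ}

lemma natDegree_numerator_add_one_lt (hn : 1 ≤ n) (hb : b ≤ 1) (ha : 12 * r + 6 ≤ a) :
    (numerator a n r b).natDegree + 1 < a * (n + 1) := by
  have := natDegree_numerator_le a n r b
  calc (numerator a n r b).natDegree + 1 < (12 * r + 6) * (n + 1) := by nlinarith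
    _ ≤ a * (n + 1) := by gcongr

lemma abs_zetaForm_fst_sub_le (ha : Odd a) (hn : Even n) (hn₁ : 1 ≤ n) (hr : 1 ≤ r) (hb : b ≤ 1)
    (har : 12 * r + 6 ≤ a) :
    |(zetaForm (numerator a n r b) a n).1 -
        PowerSeries.coeff 0 (quotientSeries (numerator a n r b) a n (r * n + 1))| ≤
      middleScale a n r * tailBound a n r :=
  abs_sub_middle_le hn₁ hr hb zero_le_two har <| hasSum_zetaForm_fst ha hn (numerator_comp hn a r b)
    (natDegree_numerator_add_one_lt hn₁ hb har)

lemma abs_zetaForm_snd_sub_le (ha : Odd a) (hn : Even n) (hn₁ : 1 ≤ n) (hr : 1 ≤ r) (hb : b ≤ 1)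
    (har : 12 * r + 6 ≤ a) :
    |(zetaForm (numerator a n r b) a n).2 -
        PowerSeries.coeff 2 (quotientSeries (numerator a n r b) a n (r * n + 1))| ≤
      middleScale a n r * tailBound a n r :=
  abs_sub_middle_le hn₁ hr hb le_rfl har <| hasSum_zetaForm_snd ha hn (numerator_comp hn a r b)
    (natDegree_numerator_add_one_lt hn₁ hb har)

lemma norm_zetaForm_le (ha : Odd a) (hn : Even n) (hn₁ : 1 ≤ n) (hr : 1 ≤ r) (hb : b ≤ 1)
    (har : 12 * r + 6 ≤ a) (htail : tailBound a n r ≤ 1 / (16 * middleRatio a n r)) :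
    ‖zetaForm (numerator a n r b) a n‖ ≤ middleScale a n r * (2 * middleRatio a n r) := by
  have one_le := one_le_middleRatio a hn₁ r
  have scale_pos := middleScale_pos a n r
  have tail_le : tailBound a n r ≤ middleRatio a n r :=
    htail.trans ((div_le_one_of_le₀ (by linarith) (by positivity)).trans one_le)
  have abs_le {s t : ℝ} (hst : |s - t| ≤ middleScale a n r * tailBound a n r)
      (ht : |t| ≤ middleScale a n r * middleRatio a n r) :
      |s| ≤ middleScale a n r * (2 * middleRatio a n r) := by
    have := abs_sub_abs_le_abs_sub s t
    have := mul_le_mul_of_nonneg_left tail_le scale_pos.le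
    linarith
  exact max_le
    (abs_le (abs_zetaForm_fst_sub_le ha hn hn₁ hr hb har)
      (abs_coeff_quotientSeries_middle_le a hn₁ hr hb zero_le_two))
    (abs_le (abs_zetaForm_snd_sub_le ha hn hn₁ hr hb har)
      (abs_coeff_quotientSeries_middle_le a hn₁ hr hb le_rfl))

lemma exists_mul_norm_le_abs_pairing_zetaForm (ha : Odd a) (hn : Even n) (hn₁ : 1 ≤ n)
    (hr : 1 ≤ r) (har : 12 * r + 6 ≤ a)
    (htail : tailBound a n r ≤ 1 / (16 * middleRatio a n r)) (l : ℝ × ℝ) :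
    ∃ b : Fin 2, middleScale a n r / (16 * middleRatio a n r) * ‖l‖ ≤
      |l.1 * (zetaForm (numerator a n r b) a n).1 +
        l.2 * (zetaForm (numerator a n r b) a n).2| := by
  set K := middleRatio a n r
  set x := middleScale a n r / (16 * K) with hx
  have one_le : 1 ≤ K := one_le_middleRatio a hn₁ r
  have scale_eq : middleScale a n r = 16 * K * x := by
    rw [hx]
    field_simp
  have tail_le : middleScale a n r * tailBound a n r ≤ x := by
    calc _ ≤ middleScale a n r * (1 / (16 * K)) := by
          gcongr
          exact (middleScale_pos a n r).le
      _ = x := mul_one_div _ _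
  have x_nonneg : 0 ≤ x := div_nonneg (middleScale_pos a n r).le (by positivity)
  have x_le : x ≤ K * x := le_mul_of_one_le_left x_nonneg one_le
  have x_le' : K * x ≤ K * (K * x) := le_mul_of_one_le_left (x_nonneg.trans x_le) one_le
  have lower {s t : ℝ} (hst : |s - t| ≤ x) (ht : middleScale a n r ≤ |t|) :
      15 * K * x ≤ |s| := by
    have := abs_sub_abs_le_abs_sub t s
    rw [abs_sub_comm] at this
    linarith
  have upper {s t : ℝ} (hst : |s - t| ≤ x) (ht : |t| ≤ middleScale a n r * K) :
      |s| ≤ 17 * K * K * x := by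
    have := abs_sub_abs_le_abs_sub s t
    rw [scale_eq] at ht
    linarith
  have fst_close {b : ℕ} (hb : b ≤ 1) := (abs_zetaForm_fst_sub_le ha hn hn₁ hr hb har).trans tail_le
  have snd_close {b : ℕ} (hb : b ≤ 1) := (abs_zetaForm_snd_sub_le ha hn hn₁ hr hb har).trans tail_le
  have fst_one_le : |(zetaForm (numerator a n r 1) a n).1| ≤ x := by
    have close := fst_close le_rfl
    rwa [PowerSeries.coeff_zero_eq_constantCoeff_apply, constantCoeff_quotientSeries_one_middle,
      sub_zero] at close
  rw [Fin.exists_fin_two]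
  refine mul_norm_le_abs_pairing one_le (lower (fst_close zero_le_one) ?_)
    (upper (snd_close zero_le_one) ?_) fst_one_le (lower (snd_close le_rfl) ?_) l
  · rw [PowerSeries.coeff_zero_eq_constantCoeff_apply]
    exact middleScale_le_abs_constantCoeff a n r
  · exact abs_coeff_quotientSeries_middle_le a hn₁ hr zero_le_one le_rfl
  · exact middleScale_le_abs_coeff_two a n r

lemma exists_int_lcmUpto_pow_mul_formCoeff (a n r b : ℕ) (i : Fin 2 ⊕ oddIndices a) :
    ∃ z : ℤ, (Nat.lcmUpto n : ℝ) ^ (a + 2) * formCoeff (numerator a n r b) a n i = z := by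
  have dvd_lcmUpto (i : ℕ) (h₁ : 1 ≤ i) (h₂ : i ≤ n) : i ∣ Nat.lcmUpto n :=
    Finset.dvd_lcm (f := id) (Finset.mem_Icc.mpr ⟨h₁, h₂⟩)
  obtain ⟨z, hz⟩ := pow_mul_formCoeff_mem_range (P := numerator a n r b) dvd_lcmUpto
    (fun j hj p ↦ by
      obtain ⟨z, hz⟩ := exists_int_pow_mul_poleCoeff hj dvd_lcmUpto a r b p
      exact ⟨z, hz.symm⟩) i
  exact ⟨z, hz.symm⟩

lemma eventually_abs_formCoeff_le {a r : ℕ} (ha : 1 ≤ a) {h : ℝ}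
    (hh : a * log 2 + numeratorRate r < h) :
    ∀ᶠ n in atTop, ∀ b ≤ 1, ∀ i, |formCoeff (numerator a n r b) a n i| ≤ exp (h * n) := by
  have rate := ((ExpRateLE.natCast_add_one.pow 2).mul (expRateLE_poleCoeffBound a r)).const_mul
    (a * (a + 2) ^ 2)
  filter_upwards [rate.eventually_le (d := h) (by linarith), eventually_ge_atTop 1]
    with n hn hn₁ b hb i
  exact (abs_formCoeff_le ha (fun j hj p ↦ abs_poleCoeff_numerator_le a r p hn₁ hb hj) i).trans hn

lemma eventually_lcmUpto_pow_mul_middleScale_le (a : ℕ) {r : ℕ} (hr : 1 ≤ r) {α : ℝ}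
    (hα : α < a * (1 + log r) - (a + 2) - numeratorRate r) :
    ∀ᶠ n in atTop, (Nat.lcmUpto n : ℝ) ^ (a + 2) *
      (middleScale a n r * (2 * middleRatio a n r)) ≤ exp (-α * n) := by
  refine ((expRateLE_lcmUpto.pow (a + 2)).mul ((expRateLE_middleScale a hr).mul
    ((expRateLE_middleRatio a r).const_mul 2))).eventually_le ?_
  push_cast
  linarith

lemma eventually_le_middleScale_div {a r : ℕ} {α : ℝ}
    (hα : a * (1 + log (r + 2)) + numeratorRate r < α) :
    ∀ᶠ n : ℕ in atTop, exp (-α * n) ≤ middleScale a n r / (16 * middleRatio a n r) := by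
  have rate := (expRateLE_middleScale_inv a r).mul ((expRateLE_middleRatio a r).const_mul 16)
  filter_upwards [rate.eventually_le hα, eventually_ge_atTop 1] with n hn hn₁
  have := one_le_middleRatio a hn₁ r
  have := middleScale_pos a n r
  rw [neg_mul, exp_neg, ← inv_inv (middleScale a n r), inv_div_left, mul_comm (16 * _)]
  gcongr

lemma exists_int_forms (ha : Odd a) (hn : Even n) (hn₁ : 1 ≤ n) (hr : 1 ≤ r)
    (har : 12 * r + 6 ≤ a) {h α α' : ℝ}
    (hcoeff : ∀ b ≤ 1, ∀ i, |formCoeff (numerator a n r b) a n i| ≤ exp (h * n))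
    (hupper : (Nat.lcmUpto n : ℝ) ^ (a + 2) * (middleScale a n r * (2 * middleRatio a n r)) ≤
      exp (-α * n))
    (hlower : exp (-α' * n) ≤ middleScale a n r / (16 * middleRatio a n r))
    (htail : tailBound a n r ≤ 1 / (16 * middleRatio a n r)) :
    ∃ D > 0, ∃ c : Fin 2 → Fin 2 ⊕ oddIndices a → ℤ,
      (∀ b i, |(c b i : ℝ)| ≤ D * exp (h * n)) ∧
      (∀ b, ‖∑ i, (c b i : ℝ) • zetaVector a i‖ ≤ exp (-α * n)) ∧
      ∀ l : ℝ × ℝ, ∃ b, D * exp (-α' * n) * ‖l‖ ≤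
        |l.1 * (∑ i, (c b i : ℝ) • zetaVector a i).1 +
          l.2 * (∑ i, (c b i : ℝ) • zetaVector a i).2| := by
  choose c hc using fun b : Fin 2 ↦ exists_int_lcmUpto_pow_mul_formCoeff a n r b
  set D : ℝ := (Nat.lcmUpto n : ℝ) ^ (a + 2)
  have D_pos : 0 < D := pow_pos (by exact_mod_cast Nat.lcmUpto_pos n) _
  have sum_eq (b : Fin 2) :
      ∑ i, (c b i : ℝ) • zetaVector a i = D • zetaForm (numerator a n r b) a n := by
    simp only [zetaForm, Finset.smul_sum, smul_smul, hc]
  have fin_le_one (b : Fin 2) : (b : ℕ) ≤ 1 := Nat.le_of_lt_succ b.isLt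
  refine ⟨D, D_pos, c, fun b i ↦ ?_, fun b ↦ ?_, fun l ↦ ?_⟩
  · rw [← hc, abs_mul, abs_of_pos D_pos]
    gcongr
    exact hcoeff b (fin_le_one b) i
  · rw [sum_eq, norm_smul, norm_of_nonneg D_pos.le]
    refine le_trans ?_ hupper
    gcongr
    exact norm_zetaForm_le ha hn hn₁ hr (fin_le_one b) har htail
  · obtain ⟨b, hb⟩ := exists_mul_norm_le_abs_pairing_zetaForm ha hn hn₁ hr har htail l
    refine ⟨b, ?_⟩
    rw [sum_eq, Prod.smul_fst, Prod.smul_snd, smul_eq_mul, smul_eq_mul, mul_left_comm,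
      mul_left_comm l.2, ← mul_add, abs_mul, abs_of_pos D_pos, mul_assoc]
    gcongr
    exact le_trans (by gcongr) hb

lemma two_mul_le_finrank_sub_two_mul_of_zetaVector_mem {V : Submodule ℚ (ℝ × ℝ)}
    [FiniteDimensional ℚ V] (hV : ∀ i, zetaVector a i ∈ V) (ha : Odd a) (hr : 1 ≤ r)
    (har : 12 * r + 6 ≤ a) (hθ : 2 * numeratorRate r < (a - 12 * r) * log (3 / 2)) {h α α' : ℝ}
    (hα₀ : 0 < α) (hατ : α ≤ h + α') (hh : a * log 2 + numeratorRate r < h)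
    (hα : α < a * (1 + log r) - (a + 2) - numeratorRate r)
    (hα' : a * (1 + log (r + 2)) + numeratorRate r < α') :
    2 * α ≤ (Module.finrank ℚ V - 2) * (h + α' - α) := by
  suffices doubled : 2 * (2 * α) ≤ (Module.finrank ℚ V - 2) * (2 * h + 2 * α' - 2 * α) by linarith
  -- The functional equation of the numerators needs `n` even, so we only use `n = 2 k`.
  refine two_mul_le_finrank_sub_two_mul (hV (.inl 0)) (hV (.inl 1)) hV (by linarith)
    (by linarith) (β := Fin 2) ?_
  have tendsto_two_mul : Tendsto (2 * · : ℕ → ℕ) atTop atTop := tendsto_id.const_mul_atTop' two_pos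
  filter_upwards [eventually_ge_atTop 1,
    tendsto_two_mul.eventually (eventually_abs_formCoeff_le ha.pos hh),
    tendsto_two_mul.eventually (eventually_lcmUpto_pow_mul_middleScale_le a hr hα),
    tendsto_two_mul.eventually (eventually_le_middleScale_div hα'),
    tendsto_two_mul.eventually (eventually_tailBound_le (by omega) hθ)]
    with k hk hcoeff hupper hlower htail
  have rescale (x : ℝ) : 2 * x * k = x * (2 * k : ℕ) := by
    push_cast
    ring
  simp only [rescale, ← neg_mul]
  exact exists_int_forms ha (even_two_mul k) (by omega) hr har hcoeff hupper hlower htail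

end RankBound

section Asymptotics

open Filter Real

lemma twelve_mul_le_numeratorRate (r : ℕ) : 12 * r ≤ numeratorRate r := by
  have one_le_log : 1 ≤ log (3 * (r + 2) * exp 1) := by
    rw [le_log_iff_exp_le (by positivity)]
    exact le_mul_of_one_le_left (exp_pos 1).le (by linarith [r.cast_nonneg (α := ℝ)])
  exact le_mul_of_one_le_right (by positivity) one_le_log

lemma numeratorRate_le {a r : ℕ} (hra : r ≤ a) (ha : 12 ≤ a) :
    numeratorRate r ≤ 24 * r * log a := by
  have hra' : (r : ℝ) ≤ a := by exact_mod_cast hra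
  have ha' : (12 : ℝ) ≤ a := by exact_mod_cast ha
  have exp_one_le : exp 1 ≤ 3 := exp_one_lt_d9.le.trans (by norm_num)
  have log_le : log (3 * (r + 2) * exp 1) ≤ 2 * log a := by
    have le_sq : 3 * (r + 2) * exp 1 ≤ (a : ℝ) ^ 2 := by
      calc _ ≤ 3 * (a + 2 : ℝ) * 3 := by gcongr
        _ ≤ _ := by nlinarith
    calc _ ≤ log ((a : ℝ) ^ 2) := log_le_log (by positivity) le_sq
      _ = 2 * log a := by
          rw [log_pow]
          norm_num
  calc numeratorRate r ≤ 12 * r * (2 * log a) := by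
        rw [numeratorRate]
        gcongr
    _ = 24 * r * log a := by ring

lemma eventually_exists_parameter {η : ℝ} (hη : 0 < η) (hη₁ : η < 1) :
    ∀ᶠ a : ℕ in atTop, ∃ r : ℕ, 1 ≤ r ∧ 2 / (r : ℝ) ≤ η ∧ numeratorRate r ≤ η * a ∧
      (1 - η) * log a ≤ log r := by
  have cast_tendsto := tendsto_natCast_atTop_atTop (R := ℝ)
  have rpow_tendsto : Tendsto (fun a : ℕ ↦ (a : ℝ) ^ (1 - η)) atTop atTop :=
    (tendsto_rpow_atTop (sub_pos.mpr hη₁)).comp cast_tendsto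
  have log_isLittleO := (isLittleO_log_rpow_atTop hη).comp_tendsto cast_tendsto
  filter_upwards [eventually_ge_atTop 12, rpow_tendsto.eventually_ge_atTop (2 / η),
    rpow_tendsto.eventually_ge_atTop 1, log_isLittleO.bound (c := η / 48) (by positivity)]
    with a ha le_rpow one_le_rpow log_le
  have ha₁ : (1 : ℝ) ≤ a := by exact_mod_cast Nat.one_le_of_lt ha
  rw [Function.comp_apply, Function.comp_apply, norm_of_nonneg (log_nonneg ha₁),
    norm_of_nonneg (by positivity)] at log_le
  have ceil_le : ⌈(a : ℝ) ^ (1 - η)⌉₊ ≤ a := by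
    rw [Nat.ceil_le]
    exact (rpow_le_rpow_of_exponent_le ha₁ (by linarith)).trans_eq (rpow_one _)
  have le_ceil := Nat.le_ceil ((a : ℝ) ^ (1 - η))
  have ceil_le_two_mul : (⌈(a : ℝ) ^ (1 - η)⌉₊ : ℝ) ≤ 2 * (a : ℝ) ^ (1 - η) := by
    linarith [Nat.ceil_lt_add_one (zero_le_one.trans one_le_rpow)]
  refine ⟨⌈(a : ℝ) ^ (1 - η)⌉₊, Nat.one_le_ceil_iff.mpr (by linarith), ?_, ?_, ?_⟩
  · rw [div_le_comm₀ (by linarith) hη]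
    exact le_rpow.trans le_ceil
  · calc numeratorRate ⌈(a : ℝ) ^ (1 - η)⌉₊
        ≤ 24 * ⌈(a : ℝ) ^ (1 - η)⌉₊ * log a := numeratorRate_le ceil_le ha
      _ ≤ 24 * (2 * (a : ℝ) ^ (1 - η)) * (η / 48 * (a : ℝ) ^ η) := by gcongr
      _ = η * ((a : ℝ) ^ (1 - η) * (a : ℝ) ^ η) := by ring
      _ = η * a := by rw [← rpow_add (by linarith), sub_add_cancel, rpow_one]
  · rw [← log_rpow (by linarith)]
    exact log_le_log (by linarith) le_ceil

lemma log_add_two_sub_log_le {r : ℝ} (hr : 0 < r) : log (r + 2) - log r ≤ 2 / r := by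
  rw [← log_div (by linarith) hr.ne']
  calc log ((r + 2) / r) ≤ (r + 2) / r - 1 := log_le_sub_one_of_pos (by positivity)
    _ = 2 / r := by
        field_simp
        ring

lemma one_third_le_log_three_halves : 1 / 3 ≤ log (3 / 2) := by
  calc (1 / 3 : ℝ) = 1 - (3 / 2)⁻¹ := by norm_num
    _ ≤ log (3 / 2) := one_sub_inv_le_log_of_pos (by norm_num)

lemma two_mul_log_sub_le_finrank {V : Submodule ℚ (ℝ × ℝ)} [FiniteDimensional ℚ V] {a r : ℕ}
    (hV : ∀ i, zetaVector a i ∈ V) (ha : Odd a) (hr : 1 ≤ r) {η : ℝ} (hη : η ≤ 1 / 24)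
    (hrη : 2 / (r : ℝ) ≤ η) (hθ : numeratorRate r ≤ η * a) (haη : 2 < η * a)
    (hlog : 2 * η < log r) :
    2 * (log r - 2 * η) ≤ (Module.finrank ℚ V - 2) * (1 + log 2 + 7 * η) := by
  have hr₀ : (0 : ℝ) < r := by exact_mod_cast hr
  have ha₀ : (0 : ℝ) < a := by exact_mod_cast ha.pos
  have hη₀ : 0 < η := (by positivity : 0 < 2 / (r : ℝ)).trans_le hrη
  have η_mul_le : η * a ≤ 1 / 24 * a := by gcongr
  have rate_ge := twelve_mul_le_numeratorRate r
  have log_two_nonneg : 0 ≤ log 2 := log_nonneg one_le_two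
  have log_succ_le : a * log (r + 2) ≤ a * (log r + η) := by
    gcongr
    linarith [log_add_two_sub_log_le hr₀]
  have rate_lt : 2 * numeratorRate r < (a - 12 * r) * log (3 / 2) := by
    calc 2 * numeratorRate r < (a - 12 * r) * (1 / 3) := by linarith
      _ ≤ (a - 12 * r) * log (3 / 2) := by
          gcongr
          · linarith
          · exact one_third_le_log_three_halves
  have bound := two_mul_le_finrank_sub_two_mul_of_zetaVector_mem hV ha hr
    (by exact_mod_cast (by linarith : (12 * r + 6 : ℝ) ≤ a)) rate_lt
    (h := a * (log 2 + 2 * η)) (α := a * (log r - 2 * η)) (α' := a * (1 + log r + 3 * η))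
    (mul_pos ha₀ (by linarith)) (by rw [← mul_add]; gcongr; linarith) (by linarith)
    (by linarith) (by linarith)
  refine le_of_mul_le_mul_left ?_ ha₀
  linarith

theorem eventually_le_finrank_of_zetaVector_mem {ε : ℝ} (hε : 0 < ε) :
    ∀ᶠ a : ℕ in atTop, Odd a → ∀ (V : Submodule ℚ (ℝ × ℝ)) [FiniteDimensional ℚ V],
      (∀ i, zetaVector a i ∈ V) → (2 - ε) * log a / (1 + log 2) ≤ Module.finrank ℚ V := by
  obtain ⟨η, hη, hη₁, hηε⟩ : ∃ η > 0, η ≤ 1 / 24 ∧ 24 * η ≤ ε :=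
    ⟨min ε 1 / 24, by positivity, by linarith [min_le_right ε 1], by linarith [min_le_left ε 1]⟩
  have cast_tendsto := tendsto_natCast_atTop_atTop (R := ℝ)
  filter_upwards [eventually_exists_parameter hη (by linarith),
    (cast_tendsto.const_mul_atTop hη).eventually_gt_atTop 2,
    (tendsto_log_atTop.comp cast_tendsto).eventually_ge_atTop 2]
    with a ⟨r, hr, hrη, hθ, hlog⟩ haη two_le_log ha V _ hV
  rw [Function.comp_apply] at two_le_log
  have η_mul_log : η * 2 ≤ η * log a := by gcongr
  have : (1 - 2 * η) * log a ≤ log r - 2 * η := by linarith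
  have lower_pos : 0 < (1 - 2 * η) * log a := mul_pos (by linarith) (by linarith)
  have bound := two_mul_log_sub_le_finrank hV ha hr hη₁ hrη hθ haη (by linarith)
  have log_two_pos : 0 < log 2 := log_pos one_lt_two
  have slack : (2 - ε) * (1 + log 2 + 7 * η) ≤ 2 * (1 - 2 * η) * (1 + log 2) := by
    nlinarith
  rw [div_le_iff₀ (by linarith)]
  refine le_of_mul_le_mul_right ?_ (by positivity : 0 < 1 + log 2 + 7 * η)
  calc (2 - ε) * log a * (1 + log 2 + 7 * η)
      = (2 - ε) * (1 + log 2 + 7 * η) * log a := by ring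
    _ ≤ 2 * (1 - 2 * η) * (1 + log 2) * log a := by gcongr
    _ = 2 * ((1 - 2 * η) * log a) * (1 + log 2) := by ring
    _ ≤ (Module.finrank ℚ V - 2) * (1 + log 2 + 7 * η) * (1 + log 2) :=
        mul_le_mul_of_nonneg_right (by linarith) (by linarith)
    _ ≤ Module.finrank ℚ V * (1 + log 2) * (1 + log 2 + 7 * η) := by
        nlinarith [mul_pos (by linarith : 0 < 1 + log 2) (by linarith : 0 < 1 + log 2 + 7 * η)]

end Asymptotics

lemma range_zetaVector (a : ℕ) :
    Set.range (zetaVector a) = ({(1, 0), (0, 1)} : Set (ℝ × ℝ)) ∪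
      {x | ∃ i : ℕ, Odd i ∧ 3 ≤ i ∧ i ≤ a ∧
        x = (zeta i, (i : ℝ) * (i + 1) / 2 * zeta (i + 2))} := by
  rw [Set.pair_comm]
  ext x
  simp [zetaVector, oddIndices, and_assoc, and_left_comm, eq_comm]

/-- For every ε > 0 there exists A such that for every odd integer a ≥ A, the rank over ℚ of
the family (1,0), (0,1), and (ζ(i), (i(i+1)/2)·ζ(i+2)) for odd 3 ≤ i ≤ a, in ℝ² viewed as a
ℚ-vector space, is at least (2−ε)·(log a)/(1+log 2). -/
theorem stmt0 :
    ∀ ε : ℝ, 0 < ε → ∃ A : ℕ, ∀ a : ℕ, Odd a → A ≤ a →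
      (2 - ε) * Real.log a / (1 + Real.log 2) ≤
        (Module.finrank ℚ (Submodule.span ℚ
          (({((1:ℝ), (0:ℝ)), ((0:ℝ), (1:ℝ))} : Set (ℝ × ℝ)) ∪
            {x : ℝ × ℝ | ∃ i : ℕ, Odd i ∧ 3 ≤ i ∧ i ≤ a ∧
              x = (zeta i, ((i : ℝ) * (i + 1) / 2) * zeta (i + 2))})) : ℝ) := by
  intro ε hε
  obtain ⟨A, hA⟩ := Filter.eventually_atTop.mp (eventually_le_finrank_of_zetaVector_mem hε)
  refine ⟨A, fun a ha hAa ↦ ?_⟩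
  rw [← range_zetaVector]
  have := FiniteDimensional.span_of_finite ℚ (Set.finite_range (zetaVector a))
  exact hA a hAa ha _ fun i ↦ Submodule.subset_span (Set.mem_range_self i)
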